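/- Let f ∈ ℬ be convenient and Newton nondegenerate. For every α ∈ ℚ, multiplication by u₁⋯uₙ maps W_α ℬ into 𝒩_α ℬ ∩ u₁⋯uₙ·ℬ and induces a well-defined ℂ-linear isomorphism λ_α : W_α ℬ / (ℐ ∩ W_α ℬ + W_{<α} ℬ) ⟶ (𝒩_α ℬ ∩ u₁⋯uₙ·ℬ) / (ℒ ∩ 𝒩_α ℬ ∩ u₁⋯uₙ·ℬ + 𝒩_{<α} ℬ ∩ u₁⋯uₙ·ℬ). In particular gr^W_α(ℬ/ℐ) is isomorphic to gr^𝒩_α((ℬ·u₁⋯uₙ + ℒ)/ℒ) for every α ∈ ℚ. -/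

import Mathlib

open MvPolynomial

namespace ToricNewton

section
variable {σ : Type*} [Fintype σ] [DecidableEq σ]

/-- Coercion of a lattice point of `ℕ^σ` into `ℝ^σ`. -/
def natToR (v : σ → ℕ) : σ → ℝ := fun i => (v i : ℝ)

/-- Coercion of an exponent (finitely supported) into `ℝ^σ`. -/
def toR (m : σ →₀ ℕ) : σ → ℝ := fun i => (m i : ℝ)

/-- The Newton polytope of a polynomial: the convex hull of `{0} ∪ supp f`. -/
noncomputable def newtonPolytope (f : MvPolynomial σ ℂ) : Set (σ → ℝ) :=
  convexHull ℝ ({0} ∪ (toR '' (f.support : Set (σ →₀ ℕ))))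

/-- The Newton function `ν`, which for a convenient polynomial is the gauge
(Minkowski functional) of the Newton polytope. -/
noncomputable def nu (f : MvPolynomial σ ℂ) (x : σ → ℝ) : ℝ :=
  gauge (newtonPolytope f) x

/-- `f` is convenient if for each variable `i` some pure power `uᵢ^k`, `k ≥ 1`,
occurs in `f` with nonzero coefficient. -/
def Convenient (f : MvPolynomial σ ℂ) : Prop :=
  ∀ i : σ, ∃ k : ℕ, 1 ≤ k ∧ f.coeff (Finsupp.single i k) ≠ 0

/-- `Δ` is a (nonempty exposed) closed face of `P`. -/
def IsFace (P Δ : Set (σ → ℝ)) : Prop :=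
  Δ.Nonempty ∧ ∃ (l : (σ → ℝ) →ₗ[ℝ] ℝ) (c : ℝ),
    (∀ x ∈ P, l x ≤ c) ∧ Δ = {x ∈ P | l x = c}

/-- A face of the Newton boundary: a closed face of the Newton polytope not
containing the origin. -/
def NBFace (f : MvPolynomial σ ℂ) (Δ : Set (σ → ℝ)) : Prop :=
  IsFace (newtonPolytope f) Δ ∧ (0 : σ → ℝ) ∉ Δ

open Classical in
/-- The truncation `g_Δ` of `g` to the monomials whose exponents lie in `Δ`. -/
noncomputable def faceRestrict (Δ : Set (σ → ℝ)) (g : MvPolynomial σ ℂ) : MvPolynomial σ ℂ :=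
  ∑ m ∈ g.support, if toR m ∈ Δ then monomial m (g.coeff m) else 0

/-- `f` is Newton nondegenerate: for every closed face `Δ` of the Newton boundary
the system `(u₁ ∂f/∂u₁)_Δ = ⋯ = (uₙ ∂f/∂uₙ)_Δ = 0` has no solution in `(ℂ*)ⁿ`. -/
def Nondegenerate (f : MvPolynomial σ ℂ) : Prop :=
  ∀ Δ : Set (σ → ℝ), NBFace f Δ →
    ¬ ∃ x : σ → ℂ, (∀ i, x i ≠ 0) ∧
        ∀ i, eval x (faceRestrict Δ (X i * pderiv i f)) = 0

/-- The ideal `ℒ` generated by the `uᵢ ∂f/∂uᵢ`. -/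
noncomputable def LIdeal (f : MvPolynomial σ ℂ) : Ideal (MvPolynomial σ ℂ) :=
  Ideal.span (Set.range fun i => X i * pderiv i f)

/-- The Jacobian ideal `ℐ` generated by the `∂f/∂uᵢ`. -/
noncomputable def IIdeal (f : MvPolynomial σ ℂ) : Ideal (MvPolynomial σ ℂ) :=
  Ideal.span (Set.range fun i => pderiv i f)

/-- The Newton filtration `𝒩_α ℬ`: the span of the monomials `u^m` with `ν(m) ≤ α`. -/
noncomputable def Nle (f : MvPolynomial σ ℂ) (α : ℝ) : Submodule ℂ (MvPolynomial σ ℂ) where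
  carrier := {g | ∀ m ∈ g.support, nu f (toR m) ≤ α}
  zero_mem' := by simp
  add_mem' := by
    intro a b ha hb m hm
    rcases Finset.mem_union.mp (MvPolynomial.support_add hm) with h | h
    · exact ha m h
    · exact hb m h
  smul_mem' := by
    intro c a ha m hm
    exact ha m (MvPolynomial.support_smul hm)

/-- The filtration `𝒩_{<α} ℬ`. -/
noncomputable def Nlt (f : MvPolynomial σ ℂ) (α : ℝ) : Submodule ℂ (MvPolynomial σ ℂ) where
  carrier := {g | ∀ m ∈ g.support, nu f (toR m) < α}
  zero_mem' := by simp
  add_mem' := by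
    intro a b ha hb m hm
    rcases Finset.mem_union.mp (MvPolynomial.support_add hm) with h | h
    · exact ha m h
    · exact hb m h
  smul_mem' := by
    intro c a ha m hm
    exact ha m (MvPolynomial.support_smul hm)

/-- The twisted filtration `W_α ℬ`: the span of the monomials `u^m` with
`ν(m + (1,…,1)) ≤ α`. -/
noncomputable def Wle (f : MvPolynomial σ ℂ) (α : ℝ) : Submodule ℂ (MvPolynomial σ ℂ) where
  carrier := {g | ∀ m ∈ g.support, nu f (toR m + 1) ≤ α}
  zero_mem' := by simp
  add_mem' := by
    intro a b ha hb m hm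
    rcases Finset.mem_union.mp (MvPolynomial.support_add hm) with h | h
    · exact ha m h
    · exact hb m h
  smul_mem' := by
    intro c a ha m hm
    exact ha m (MvPolynomial.support_smul hm)

/-- The twisted filtration `W_{<α} ℬ`. -/
noncomputable def Wlt (f : MvPolynomial σ ℂ) (α : ℝ) : Submodule ℂ (MvPolynomial σ ℂ) where
  carrier := {g | ∀ m ∈ g.support, nu f (toR m + 1) < α}
  zero_mem' := by simp
  add_mem' := by
    intro a b ha hb m hm
    rcases Finset.mem_union.mp (MvPolynomial.support_add hm) with h | h
    · exact ha m h
    · exact hb m h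
  smul_mem' := by
    intro c a ha m hm
    exact ha m (MvPolynomial.support_smul hm)

/-- The graded piece `gr^𝒩_α(ℬ/ℒ) = (𝒩_α ℬ + ℒ)/(𝒩_{<α} ℬ + ℒ)`, realized as the
image of `𝒩_α ℬ + ℒ` in `ℬ/(𝒩_{<α} ℬ + ℒ)`. -/
noncomputable def grN (f : MvPolynomial σ ℂ) (α : ℝ) :
    Submodule ℂ (MvPolynomial σ ℂ ⧸ (Nlt f α ⊔ (LIdeal f).restrictScalars ℂ)) :=
  Submodule.map (Nlt f α ⊔ (LIdeal f).restrictScalars ℂ).mkQ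
    (Nle f α ⊔ (LIdeal f).restrictScalars ℂ)

/-- `dim_ℂ gr^𝒩_α(ℬ/ℒ)`. -/
noncomputable def grDim (f : MvPolynomial σ ℂ) (α : ℝ) : ℕ :=
  Module.finrank ℂ (grN f α)

/-- The graded piece `gr^W_α(ℬ/ℐ) = (W_α ℬ + ℐ)/(W_{<α} ℬ + ℐ)`. -/
noncomputable def grW (f : MvPolynomial σ ℂ) (α : ℝ) :
    Submodule ℂ (MvPolynomial σ ℂ ⧸ (Wlt f α ⊔ (IIdeal f).restrictScalars ℂ)) :=
  Submodule.map (Wlt f α ⊔ (IIdeal f).restrictScalars ℂ).mkQ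
    (Wle f α ⊔ (IIdeal f).restrictScalars ℂ)

/-- `dim_ℂ gr^W_α(ℬ/ℐ)`. -/
noncomputable def grWDim (f : MvPolynomial σ ℂ) (α : ℝ) : ℕ :=
  Module.finrank ℂ (grW f α)

/-- The dimension of a face, i.e. of the direction of its affine span. -/
noncomputable def faceDim (Δ : Set (σ → ℝ)) : ℕ :=
  Module.finrank ℝ (affineSpan ℝ Δ).direction

/-- `Δ` is a simplex: the convex hull of an affinely independent family. -/
def IsSimplex (Δ : Set (σ → ℝ)) : Prop :=
  ∃ (k : ℕ) (p : Fin (k + 1) → (σ → ℝ)), AffineIndependent ℝ p ∧ Δ = convexHull ℝ (Set.range p)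

/-- The union of the coordinate hyperplanes. -/
def coordHyperplanes (σ : Type*) : Set (σ → ℝ) := ⋃ i : σ, {x : σ → ℝ | x i = 0}

/-- `Box(Δ)`: the set of combinations `Σ q_ℓ b_ℓ`, `q_ℓ ∈ [0,1)`, of the vertices
(extreme points) of `Δ`. -/
def Box (Δ : Set (σ → ℝ)) : Set (σ → ℝ) :=
  {x | ∃ s : Finset (σ → ℝ), ↑s ⊆ Δ.extremePoints ℝ ∧
      ∃ q : (σ → ℝ) → ℝ, (∀ b ∈ s, 0 ≤ q b ∧ q b < 1) ∧ x = ∑ b ∈ s, q b • b}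

/-- `Δ ∈ ℱ(P)`: a closed face of the Newton polytope of `f` not contained in the
union of the coordinate hyperplanes. -/
def FcalMem (f : MvPolynomial σ ℂ) (Δ : Set (σ → ℝ)) : Prop :=
  IsFace (newtonPolytope f) Δ ∧ ¬ Δ ⊆ coordHyperplanes σ

/-- `Box(P)`: the union of `Box(Δ)` over the closed faces of the Newton boundary
not contained in the union of the coordinate hyperplanes. -/
def BoxP (f : MvPolynomial σ ℂ) : Set (σ → ℝ) :=
  ⋃ Δ ∈ {Δ : Set (σ → ℝ) | NBFace f Δ ∧ ¬ Δ ⊆ coordHyperplanes σ}, Box Δ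

/-- The cone `ℝ₊·Δ` over `Δ`. -/
def cone0 (Δ : Set (σ → ℝ)) : Set (σ → ℝ) :=
  {x | ∃ t : ℝ, 0 ≤ t ∧ ∃ y ∈ Δ, x = t • y}

/-- The restriction of `f` obtained by setting the variables in `S` to zero. -/
noncomputable def restrictZero (S : Finset σ) (f : MvPolynomial σ ℂ) :
    MvPolynomial {j : σ // j ∉ S} ℂ :=
  aeval (fun j : σ => if h : j ∉ S then X (⟨j, h⟩ : {j : σ // j ∉ S}) else 0) f

end

end ToricNewton

namespace ToricNewton

/-- The monomial `u₁⋯uₙ`. -/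
noncomputable def uProd (n : ℕ) : MvPolynomial (Fin n) ℂ := ∏ i, X i

/-- The submodule `u₁⋯uₙ·ℬ ⊆ ℬ`. -/
noncomputable def uB (n : ℕ) : Submodule ℂ (MvPolynomial (Fin n) ℂ) :=
  LinearMap.range (LinearMap.mulLeft ℂ (uProd n))

/-- The submodule `𝒩_α ℬ ∩ u₁⋯uₙ·ℬ`. -/
noncomputable def NcapU {n : ℕ} (f : MvPolynomial (Fin n) ℂ) (α : ℝ) :
    Submodule ℂ (MvPolynomial (Fin n) ℂ) :=
  Nle f α ⊓ uB n

/-- The denominator `ℐ ∩ W_α ℬ + W_{<α} ℬ`, viewed inside `W_α ℬ`. -/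
noncomputable def D1 {n : ℕ} (f : MvPolynomial (Fin n) ℂ) (α : ℝ) :
    Submodule ℂ ↥(Wle f α) :=
  (((IIdeal f).restrictScalars ℂ ⊓ Wle f α) ⊔ Wlt f α).comap (Wle f α).subtype

/-- The denominator `ℒ ∩ 𝒩_α ℬ ∩ u₁⋯uₙ·ℬ + 𝒩_{<α} ℬ ∩ u₁⋯uₙ·ℬ`, viewed inside
`𝒩_α ℬ ∩ u₁⋯uₙ·ℬ`. -/
noncomputable def D2 {n : ℕ} (f : MvPolynomial (Fin n) ℂ) (α : ℝ) :
    Submodule ℂ ↥(NcapU f α) :=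
  (((LIdeal f).restrictScalars ℂ ⊓ Nle f α ⊓ uB n) ⊔ (Nlt f α ⊓ uB n)).comap
    (NcapU f α).subtype

end ToricNewton

section
open MvPolynomial

namespace ToricNewton
set_option linter.unusedSectionVars false

/-! ### Koszul complexes -/
section Koszul
variable {σ : Type*} [Fintype σ] [LinearOrder σ] {R : Type*} [CommRing R]
  {M : Type*} [AddCommGroup M] [Module R M]

/-- Koszul sign. -/
def ksg (i : σ) (I : Finset σ) : ℤ := (-1) ^ (I.filter (· < i)).card

lemma ksg_mul_self (i : σ) (I : Finset σ) : ksg i I * ksg i I = 1 := by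
  unfold ksg
  rw [← mul_pow]; simp

lemma ksg_erase (i : σ) (I : Finset σ) : ksg i (I.erase i) = ksg i I := by
  unfold ksg
  congr 2
  ext j
  simp only [Finset.mem_filter, Finset.mem_erase]
  constructor
  · rintro ⟨⟨_, h⟩, h'⟩; exact ⟨h, h'⟩
  · rintro ⟨h, h'⟩; exact ⟨⟨h'.ne, h⟩, h'⟩

lemma ksg_insert (i j : σ) (I : Finset σ) (hj : j ∉ I) :
    ksg i (insert j I) = (if j < i then -1 else 1) * ksg i I := by
  unfold ksg
  rw [Finset.filter_insert]
  split_ifs with h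
  · rw [Finset.card_insert_of_notMem (by simp [hj])]
    rw [pow_succ]; ring
  · simp

lemma ksg_anti (i j : σ) (I : Finset σ) (hi : i ∉ I) (hj : j ∉ I) (hij : i ≠ j) :
    ksg i I * ksg j (insert i I) = - (ksg j I * ksg i (insert j I)) := by
  rw [ksg_insert _ _ _ hi, ksg_insert _ _ _ hj]
  rcases lt_or_gt_of_ne hij with h | h
  · simp [h, not_lt.mpr h.le]; ring
  · simp [h, not_lt.mpr h.le]; ring

/-- Koszul differential. -/
def kd (g : σ → R) : (Finset σ → M) →ₗ[R] (Finset σ → M) where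
  toFun c := fun I => ∑ i ∈ Iᶜ, ksg i I • g i • c (insert i I)
  map_add' a b := by
    ext I; simp [Finset.sum_add_distrib]
  map_smul' r a := by
    ext I
    simp only [Pi.smul_apply, RingHom.id_apply, Finset.smul_sum]
    refine Finset.sum_congr rfl fun i _ => ?_
    rw [smul_comm r (ksg i I), smul_comm r (g i)]

/-- Koszul homotopy. -/
def kh (k : σ) : (Finset σ → M) →ₗ[R] (Finset σ → M) where
  toFun c := fun I => if k ∈ I then ksg k I • c (I.erase k) else 0
  map_add' a b := by
    ext I; simp only [Pi.add_apply]; split_ifs <;> simp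
  map_smul' r a := by
    ext I
    simp only [Pi.smul_apply, RingHom.id_apply]
    split_ifs
    · rw [smul_comm r (ksg k I)]
    · simp

/-- Koszul contraction. -/
def ki (k : σ) : (Finset σ → M) →ₗ[R] (Finset σ → M) where
  toFun c := fun I => if k ∈ I then 0 else ksg k I • c (insert k I)
  map_add' a b := by
    ext I; simp only [Pi.add_apply]; split_ifs <;> simp
  map_smul' r a := by
    ext I
    simp only [Pi.smul_apply, RingHom.id_apply]
    split_ifs
    · simp
    · rw [smul_comm r (ksg k I)]

lemma kd_apply (g : σ → R) (c : Finset σ → M) (I : Finset σ) :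
    kd g c I = ∑ i ∈ Iᶜ, ksg i I • g i • c (insert i I) := rfl

lemma kh_apply (k : σ) (c : Finset σ → M) (I : Finset σ) :
    kh (R := R) k c I = if k ∈ I then ksg k I • c (I.erase k) else 0 := rfl

lemma ki_apply (k : σ) (c : Finset σ → M) (I : Finset σ) :
    ki (R := R) k c I = if k ∈ I then 0 else ksg k I • c (insert k I) := rfl

lemma kd_kd (g : σ → R) (c : Finset σ → M) : kd g (kd g c) = 0 := by
  ext I
  simp only [kd_apply, Finset.smul_sum, Pi.zero_apply]
  rw [Finset.sum_sigma']
  refine Finset.sum_involution (fun x _ => ⟨x.2, x.1⟩) ?_ ?_ ?_ ?_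
  · rintro ⟨i, j⟩ h
    simp only [Finset.mem_sigma, Finset.mem_compl, Finset.mem_insert, not_or] at h
    obtain ⟨hi, hji, hj⟩ := h
    simp only
    rw [Finset.insert_comm j i I, smul_comm (g i) (ksg j _), smul_comm (g j) (ksg i _),
      ← mul_smul (ksg i I), ← mul_smul (ksg j I), ksg_anti i j I hi hj (Ne.symm hji),
      smul_comm (g i) (g j), neg_smul, neg_add_cancel]
  · rintro ⟨i, j⟩ h _ he
    simp only [Finset.mem_sigma, Finset.mem_compl, Finset.mem_insert, not_or] at h
    simp only [Sigma.mk.injEq] at he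
    exact h.2.1 he.1
  · rintro ⟨i, j⟩ h
    simp only [Finset.mem_sigma, Finset.mem_compl, Finset.mem_insert, not_or] at h ⊢
    exact ⟨h.2.2, Ne.symm h.2.1, h.1⟩
  · rintro ⟨i, j⟩ h; rfl

lemma kd_kh (g : σ → R) (k : σ) (c : Finset σ → M) :
    kd g (kh (R := R) k c) + kh (R := R) k (kd g c) = g k • c := by
  ext I
  simp only [Pi.add_apply, Pi.smul_apply, kh_apply, kd_apply]
  by_cases hk : k ∈ I
  · simp only [hk, if_true, Finset.mem_insert, or_true]
    have h1 : (I.erase k)ᶜ = insert k Iᶜ := by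
      ext j; simp only [Finset.mem_compl, Finset.mem_erase, Finset.mem_insert]; tauto
    rw [h1, Finset.sum_insert (by simpa using hk), Finset.insert_erase hk, ksg_erase, smul_add,
      smul_smul, ksg_mul_self, one_smul, add_comm, add_assoc, Finset.smul_sum,
      ← Finset.sum_add_distrib]
    rw [Finset.sum_eq_zero, add_zero]
    intro i hi
    have hi' : i ∉ I := by simpa using hi
    have hik : i ≠ k := by rintro rfl; exact hi' hk
    have hie : i ∉ I.erase k := by simp [hi']
    rw [Finset.erase_insert_of_ne hik, smul_comm (g i) (ksg k _), smul_smul, smul_smul]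
    have h2 := ksg_anti k i (I.erase k) (by simp) hie hik.symm
    rw [Finset.insert_erase hk, ksg_erase] at h2
    have h3 : ksg k (insert i (I.erase k)) = ksg k (insert i I) := by
      rw [← Finset.erase_insert_of_ne hik, ksg_erase]
    rw [h3] at h2
    have h4 : ksg i I * ksg k (insert i I) = - (ksg k I * ksg i (I.erase k)) := by
      have e1 := ksg_mul_self k I
      have e2 := ksg_mul_self k (insert i I)
      calc ksg i I * ksg k (insert i I)
          = (ksg k I * ksg k I) * (ksg i I * ksg k (insert i I)) := by rw [e1]; ring
        _ = ksg k I * (ksg k I * ksg i I) * ksg k (insert i I) := by ring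
        _ = - (ksg k I * ksg i (I.erase k)) * (ksg k (insert i I) * ksg k (insert i I)) := by
            rw [h2]; ring
        _ = _ := by rw [e2]; ring
    rw [h4, neg_smul, add_neg_cancel]
  · simp only [hk, if_false, add_zero]
    rw [Finset.sum_eq_single k]
    · simp only [Finset.mem_insert_self, if_true]
      rw [Finset.erase_insert hk, smul_comm (g k), smul_smul, ← ksg_erase k (insert k I),
        Finset.erase_insert hk, ksg_mul_self, one_smul]
    · intro i hi hik
      rw [if_neg]; · simp
      simp [hk, Ne.symm hik]
    · intro h; exact absurd (by simpa using hk) h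

lemma kd_ki (g : σ → R) (k : σ) (c : Finset σ → M) :
    kd g (ki (R := R) k c) + ki (R := R) k (kd g c) = 0 := by
  ext I
  simp only [Pi.add_apply, ki_apply, kd_apply, Pi.zero_apply]
  by_cases hk : k ∈ I
  · simp [hk]
  · simp only [hk, if_false]
    have h1 : Iᶜ = insert k (insert k I)ᶜ := by
      ext j; simp only [Finset.mem_compl, Finset.mem_insert]
      by_cases hj : j = k
      · subst hj; simp [hk]
      · simp [hj]
    rw [h1, Finset.sum_insert (by simp)]
    simp only [Finset.mem_insert_self, if_true, smul_zero, zero_add]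
    rw [Finset.smul_sum, ← Finset.sum_add_distrib]
    refine Finset.sum_eq_zero fun i hi => ?_
    simp only [Finset.mem_compl, Finset.mem_insert, not_or] at hi
    obtain ⟨hik, hi⟩ := hi
    rw [if_neg (by simp [hk, Ne.symm hik]), smul_comm (g i), smul_smul, smul_smul,
      ksg_anti i k I hi hk hik, Finset.insert_comm, neg_smul, neg_add_cancel]

/-- componentwise membership in a submodule is preserved by the operators -/
lemma kd_mem (g : σ → R) (N : Submodule R M) (c : Finset σ → M) (hc : ∀ I, c I ∈ N) (I) :
    kd g c I ∈ N := by
  rw [kd_apply]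
  exact Submodule.sum_mem _ fun i _ => zsmul_mem (N.smul_mem _ (hc _)) _

lemma kh_mem (k : σ) (N : Submodule R M) (c : Finset σ → M) (hc : ∀ I, c I ∈ N) (I) :
    kh (R := R) k c I ∈ N := by
  rw [kh_apply]; split_ifs
  · exact zsmul_mem (hc _) _
  · exact N.zero_mem

/-- One step of the exchange lemma: cancel a factor `θ`. -/
lemma exchange_cancel (g : σ → R) (N : Submodule R M) (θ : R) (p : ℕ)
    (hreg : ∀ a : M, θ • a ∈ N → a ∈ N)
    (ih : ∀ c : Finset σ → M, (∀ I, I.card < p + 1 → c I = 0) →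
      (∀ I, ∃ a ∈ N, ∃ b, kd g c I = a + θ • b) →
      ∃ b : Finset σ → M, (∀ I, I.card < p + 2 → b I = 0) ∧
        ∀ I, ∃ a ∈ N, ∃ b', (c - kd g b) I = a + θ • b')
    (c : Finset σ → M)
    (h : ∃ b : Finset σ → M, (∀ I, I.card < p + 1 → b I = 0) ∧ ∀ I, (θ • c - kd g b) I ∈ N) :
    ∃ b : Finset σ → M, (∀ I, I.card < p + 1 → b I = 0) ∧ ∀ I, (c - kd g b) I ∈ N := by
  obtain ⟨b, hb0, hb⟩ := h
  obtain ⟨b2, hb20, hb2⟩ := ih b hb0 (fun I => ⟨-((θ • c - kd g b) I), N.neg_mem (hb I), c I, by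
    simp⟩)
  choose a ha b3 h3 using hb2
  classical
  let a' : Finset σ → M := fun I => if I.card < p + 1 then 0 else a I
  let b3' : Finset σ → M := fun I => if I.card < p + 1 then 0 else b3 I
  have hdb2 : ∀ I : Finset σ, I.card < p + 1 → kd g b2 I = 0 := by
    intro I hI
    rw [kd_apply]
    refine Finset.sum_eq_zero fun i hi => ?_
    rw [hb20 _ (by
      have := Finset.card_insert_le i I; omega)]
    simp
  have hdec : b - kd g b2 = a' + θ • b3' := by
    ext I
    by_cases hI : I.card < p + 1
    · simp only [a', b3', hI, if_true, Pi.sub_apply, Pi.add_apply, Pi.smul_apply, hb0 I hI,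
        hdb2 I hI, smul_zero, sub_zero, add_zero]
    · simp only [a', b3', hI, if_false, Pi.add_apply, Pi.smul_apply, h3 I]
  have ha' : ∀ I, a' I ∈ N := by
    intro I; simp only [a']; split_ifs
    · exact N.zero_mem
    · exact ha I
  refine ⟨b3', fun I hI => by simp only [b3', hI, if_true], fun I => hreg _ ?_⟩
  have e : kd g b = kd g a' + θ • kd g b3' := by
    have : b = kd g b2 + (a' + θ • b3') := by rw [← hdec]; abel
    rw [this, map_add, kd_kd, zero_add, map_add, map_smul]
  have e2 : θ • (c - kd g b3') I = (θ • c - kd g b) I + kd g a' I := by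
    rw [e]
    simp only [Pi.sub_apply, Pi.smul_apply, Pi.add_apply, smul_sub]
    abel
  rw [e2]
  exact N.add_mem (hb I) (kd_mem g N a' ha' I)

lemma exchange {n : ℕ} (g : σ → R) (hn : Fintype.card σ = n) (θ : ℕ → R)
    (N : ℕ → Submodule R M)
    (hsucc : ∀ k < n, ∀ x, x ∈ N (k + 1) ↔ ∃ a ∈ N k, ∃ b, x = a + θ k • b)
    (hreg : ∀ k < n, ∀ a : M, θ k • a ∈ N k → a ∈ N k)
    (hnil : ∀ k < n, ∃ e : ℕ, ∃ r : σ → R, ∀ a : M, θ k ^ e • a = ∑ j, r j • g j • a) :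
    ∀ q k, k + q = n → ∀ c : Finset σ → M, (∀ I, I.card < k + 1 → c I = 0) →
      (∀ I, kd g c I ∈ N k) →
      ∃ b : Finset σ → M, (∀ I, I.card < k + 2 → b I = 0) ∧ ∀ I, (c - kd g b) I ∈ N k := by
  intro q
  induction q with
  | zero =>
    intro k hk c hc _
    refine ⟨0, by simp, fun I => ?_⟩
    rw [map_zero, sub_zero, hc I]
    · exact zero_mem _
    · have := Finset.card_le_univ I; omega
  | succ q ih =>
    intro k hk c hc hdc
    have hkn : k < n := by omega
    obtain ⟨e, r, hr⟩ := hnil k hkn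
    have key : ∀ e : ℕ, ∀ c : Finset σ → M,
        (∃ b : Finset σ → M, (∀ I, I.card < k + 2 → b I = 0) ∧
          ∀ I, (θ k ^ e • c - kd g b) I ∈ N k) →
        ∃ b : Finset σ → M, (∀ I, I.card < k + 2 → b I = 0) ∧ ∀ I, (c - kd g b) I ∈ N k := by
      intro e
      induction e with
      | zero => intro c h; simpa using h
      | succ e ihe =>
        intro c h
        apply ihe
        refine exchange_cancel g (N k) (θ k) (k + 1) (hreg k hkn) ?_ _ ?_
        · intro c hc hdc
          obtain ⟨b, hb, hb'⟩ := ih (k + 1) (by omega) c hc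
            (fun I => (hsucc k hkn _).2 (hdc I))
          exact ⟨b, hb, fun I => (hsucc k hkn _).1 (hb' I)⟩
        · rw [smul_smul, ← pow_succ']
          exact h
    apply key e c
    refine ⟨∑ j, r j • kh (R := R) j c, ?_, ?_⟩
    · intro I hI
      simp only [Finset.sum_apply, Pi.smul_apply, kh_apply]
      refine Finset.sum_eq_zero fun j _ => ?_
      split_ifs with hj
      · rw [hc, smul_zero, smul_zero]
        rw [Finset.card_erase_of_mem hj]; 
        have := Finset.card_pos.mpr ⟨j, hj⟩
        omega
      · simp
    · intro I
      have e1 : θ k ^ e • c = ∑ j, r j • g j • c := by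
        ext I; simp only [Pi.smul_apply, Finset.sum_apply, hr]
      have e2 : θ k ^ e • c - kd g (∑ j, r j • kh (R := R) j c)
          = ∑ j, r j • kh (R := R) j (kd g c) := by
        rw [e1, map_sum, ← Finset.sum_sub_distrib]
        refine Finset.sum_congr rfl fun j _ => ?_
        rw [map_smul, ← smul_sub, ← kd_kh g j c]
        congr 1; abel
      rw [e2]
      simp only [Finset.sum_apply, Pi.smul_apply]
      exact Submodule.sum_mem _ fun j _ => (N k).smul_mem _ (kh_mem j _ _ hdc I)

/-- Membership in the twisted Koszul complex: the component at `I` lies in `J (U ∪ (T \ I))`. -/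
def KT (J : Finset σ → Submodule R M) (T U : Finset σ) (c : Finset σ → M) : Prop :=
  ∀ I, c I ∈ J (U ∪ (T \ I))

/-- Acyclicity of the twisted complex. -/
def KAc (g : σ → R) (J : Finset σ → Submodule R M) (T U : Finset σ) : Prop :=
  ∀ c : Finset σ → M, KT J T U c → c ∅ = 0 → kd g c = 0 → ∃ b, KT J T U b ∧ c = kd g b

lemma kd_update (g : σ → R) (b : Finset σ → M) :
    kd g (Function.update b ∅ 0) = kd g b := by
  ext I
  simp only [kd_apply]
  refine Finset.sum_congr rfl fun i _ => ?_
  rw [Function.update_of_ne (Finset.insert_ne_empty i I)]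

lemma KT_update {J : Finset σ → Submodule R M} {T U : Finset σ} {b : Finset σ → M}
    (hb : KT J T U b) : KT J T U (Function.update b ∅ 0) := by
  intro I
  by_cases h : I = ∅
  · subst h; simp
  · rw [Function.update_of_ne h]; exact hb I

lemma twist_step (g : σ → R) (J : Finset σ → Submodule R M)
    (hJ : ∀ U V, U ⊆ V → J V ≤ J U)
    (hg : ∀ U k x, x ∈ J U → g k • x ∈ J (insert k U))
    (T U : Finset σ) (k : σ) (hk : k ∉ T) (h1 : KAc g J T U) (h2 : KAc g J T (insert k U))
    (c : Finset σ → M) (hc : KT J (insert k T) U c) (b : Finset σ → M) (hb : KT J T U b)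
    (hcb : c = kd g b) : ∃ b', KT J (insert k T) U b' ∧ c = kd g b' := by
  wlog hb0 : b ∅ = 0 generalizing b
  · exact this (Function.update b ∅ 0) (KT_update hb) (by rw [kd_update, hcb]) (by simp)
  have hd : kd g (kh (R := R) k b) = g k • b - kh (R := R) k c := by
    rw [hcb, ← kd_kh g k b]; abel
  -- the boundary of `kh k b` lies in the deeper complex
  have hdm : KT J T (insert k U) (kd g (kh (R := R) k b)) := by
    intro I
    rw [hd, Pi.sub_apply, Pi.smul_apply, kh_apply]
    refine Submodule.sub_mem _ ?_ ?_
    · have := hg _ k _ (hb I)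
      rwa [Finset.insert_union]
    · split_ifs with hkI
      · refine zsmul_mem (hJ _ _ ?_ (hc (I.erase k))) _
        intro j hj
        simp only [Finset.mem_union, Finset.mem_insert, Finset.mem_sdiff, Finset.mem_erase] at hj ⊢
        by_cases hjk : j = k
        · subst hjk; right; simp
        · rcases hj with (h | h) | h
          · exact absurd h hjk
          · exact Or.inl h
          · exact Or.inr ⟨Or.inr h.1, fun h' => h.2 h'.2⟩
      · exact Submodule.zero_mem _
  obtain ⟨e, he, hde⟩ := h2 _ hdm (by
    rw [kd_apply]
    refine Finset.sum_eq_zero fun i _ => ?_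
    rw [kh_apply]
    split_ifs with h
    · have : (insert i (∅ : Finset σ)).erase k = ∅ := by
        have : k = i := by simpa using h
        subst this; simp
      rw [this, hb0]; simp
    · simp) (kd_kd g _)
  wlog he0 : e ∅ = 0 generalizing e
  · exact this (Function.update e ∅ 0) (KT_update he) (by rw [kd_update, hde]) (by simp)
  obtain ⟨h, hh, hdh⟩ := h1 (kh (R := R) k b - e) (by
    intro I
    rw [Pi.sub_apply]
    refine Submodule.sub_mem _ ?_ ?_
    · rw [kh_apply]; split_ifs with hkI
      · refine zsmul_mem (hJ _ _ ?_ (hb (I.erase k))) _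
        intro j hj
        simp only [Finset.mem_union, Finset.mem_sdiff, Finset.mem_erase] at hj ⊢
        rcases hj with h | h
        · exact Or.inl h
        · exact Or.inr ⟨h.1, fun h' => h.2 h'.2⟩
      · exact Submodule.zero_mem _
    · refine hJ _ _ ?_ (he I)
      exact Finset.union_subset_union (Finset.subset_insert _ _) le_rfl)
    (by simp [kh_apply, he0]) (by rw [map_sub, hde, sub_self])
  refine ⟨b + kd g (ki (R := R) k h), ?_, by rw [map_add, kd_kd, add_zero, hcb]⟩
  intro I
  by_cases hkI : k ∈ I
  · have : kd g (ki (R := R) k h) I = 0 := by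
      rw [kd_apply]
      refine Finset.sum_eq_zero fun i _ => ?_
      rw [ki_apply, if_pos (Finset.mem_insert_of_mem hkI)]; simp
    rw [Pi.add_apply, this, add_zero]
    refine hJ _ _ ?_ (hb I)
    intro j hj
    simp only [Finset.mem_union, Finset.mem_insert, Finset.mem_sdiff] at hj ⊢
    rcases hj with h | ⟨h, h'⟩
    · exact Or.inl h
    · rcases h with rfl | h
      · exact absurd hkI h'
      · exact Or.inr ⟨h, h'⟩
  · have e1 : (b + kd g (ki (R := R) k h)) I = ki (R := R) k e I := by
      have e2 : kd g (ki (R := R) k h) = - ki (R := R) k (kd g h) :=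
        eq_neg_of_add_eq_zero_left (kd_ki g k h)
      rw [e2, ← hdh, map_sub]
      have e3 : ki (R := R) k (kh (R := R) k b) I = b I := by
        rw [ki_apply, if_neg hkI, kh_apply, if_pos (Finset.mem_insert_self _ _),
          Finset.erase_insert hkI, smul_smul, ← ksg_erase k (insert k I),
          Finset.erase_insert hkI, ksg_mul_self, one_smul]
      simp only [Pi.add_apply, Pi.neg_apply, Pi.sub_apply, e3]
      abel
    rw [e1, ki_apply, if_neg hkI]
    refine zsmul_mem (hJ _ _ ?_ (he (insert k I))) _
    intro j hj
    simp only [Finset.mem_union, Finset.mem_insert, Finset.mem_sdiff] at hj ⊢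
    by_cases hjk : j = k
    · subst hjk; simp
    · tauto

lemma twist_all (g : σ → R) (J : Finset σ → Submodule R M)
    (hJ : ∀ U V, U ⊆ V → J V ≤ J U)
    (hg : ∀ U k x, x ∈ J U → g k • x ∈ J (insert k U))
    (h0 : ∀ U, KAc g J ∅ U) (T : Finset σ) : ∀ U, KAc g J T U := by
  induction T using Finset.induction_on with
  | empty => exact h0
  | insert k T hk ih =>
    intro U c hc hc0 hdc
    obtain ⟨b, hb, hcb⟩ := ih U c (fun I => hJ _ _ (by
      exact Finset.union_subset_union le_rfl
        (Finset.sdiff_subset_sdiff (Finset.subset_insert _ _) le_rfl)) (hc I)) hc0 hdc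
    exact twist_step g J hJ hg T U k hk (ih U) (ih _) c hc b hb hcb

lemma twist_final (g : σ → R) (J : Finset σ → Submodule R M)
    (hJ : ∀ U V, U ⊆ V → J V ≤ J U)
    (hg : ∀ U k x, x ∈ J U → g k • x ∈ J (insert k U))
    (h0 : ∀ U, KAc g J ∅ U) (x : M) (hx : x ∈ J Finset.univ) (a : σ → M)
    (ha : ∀ i, a i ∈ J ∅) (hxa : x = ∑ i, g i • a i) :
    ∃ b : σ → M, (∀ i, b i ∈ J (Finset.univ.erase i)) ∧ x = ∑ i, g i • b i := by
  classical
  let c : Finset σ → M := fun I => if I = ∅ then x else 0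
  have hs : ∀ i : σ, ksg i ∅ = 1 := by intro i; simp [ksg]
  have hd : ∀ b : Finset σ → M, kd g b ∅ = ∑ i, g i • b {i} := by
    intro b; rw [kd_apply]; simp [hs]
  have main : ∀ T, ∃ b, KT J T ∅ b ∧ c = kd g b := by
    intro T
    induction T using Finset.induction_on with
    | empty =>
      refine ⟨fun I => ∑ i, if I = {i} then a i else 0, ?_, ?_⟩
      · intro I
        simp only [Finset.empty_sdiff, Finset.union_empty]
        refine Submodule.sum_mem _ fun i _ => ?_
        split_ifs
        · exact ha i
        · exact Submodule.zero_mem _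
      · ext I
        by_cases hI : I = ∅
        · subst hI
          rw [hd]
          simp only [c, if_true, hxa]
          refine Finset.sum_congr rfl fun i _ => ?_
          congr 1
          rw [Finset.sum_eq_single i]
          · simp
          · intro j _ hj
            rw [if_neg]; simpa using hj.symm
          · simp
        · simp only [c, hI, if_false]
          rw [kd_apply]
          symm
          refine Finset.sum_eq_zero fun i hi => ?_
          rw [Finset.sum_eq_zero]; · simp
          intro j _
          rw [if_neg]
          intro h
          have := congrArg Finset.card h
          rw [Finset.card_insert_of_notMem (by simpa using hi)] at this
          simp at this
          exact hI this
    | insert k T hk ih =>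
      obtain ⟨b, hb, hcb⟩ := ih
      refine twist_step g J hJ hg T ∅ k hk (twist_all g J hJ hg h0 T _)
        (twist_all g J hJ hg h0 T _) c ?_ b hb hcb
      intro I
      simp only [c]
      split_ifs
      · exact hJ _ _ (Finset.subset_univ _) hx
      · exact Submodule.zero_mem _
  obtain ⟨b, hb, hcb⟩ := main Finset.univ
  refine ⟨fun i => b {i}, fun i => ?_, ?_⟩
  · refine hJ _ _ ?_ (hb {i})
    intro j hj; simp at hj ⊢; exact hj
  · rw [← hd, ← hcb]; simp [c]

end Koszul
end ToricNewton
end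

section
open MvPolynomial

namespace ToricNewton
set_option linter.unusedSectionVars false

/-! ### Elementary linear programming -/
section LP
variable {W : Type*} [Fintype W] {σ : Type*} [Fintype σ]

/-- The combination `∑ lᵥ aᵥ`. -/
def rep (a : W → σ → ℝ) (l : W → ℝ) : σ → ℝ := ∑ w, l w • a w

/-- `l` is a nonnegative representation of minimal total mass. -/
def Opt (a : W → σ → ℝ) (l : W → ℝ) : Prop :=
  (∀ w, 0 ≤ l w) ∧ ∀ m : W → ℝ, (∀ w, 0 ≤ m w) → rep a m = rep a l → ∑ w, l w ≤ ∑ w, m w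

lemma rep_add (a : W → σ → ℝ) (l m : W → ℝ) : rep a (l + m) = rep a l + rep a m := by
  simp [rep, add_smul, Finset.sum_add_distrib]

lemma rep_smul (a : W → σ → ℝ) (c : ℝ) (l : W → ℝ) : rep a (c • l) = c • rep a l := by
  simp [rep, Finset.smul_sum, mul_smul]

lemma rep_sub (a : W → σ → ℝ) (l m : W → ℝ) : rep a (l - m) = rep a l - rep a m := by
  simp [rep, sub_smul, Finset.sum_sub_distrib]

lemma rep_zero (a : W → σ → ℝ) : rep a 0 = 0 := by simp [rep]

lemma rep_single [DecidableEq W] (a : W → σ → ℝ) (w : W) (c : ℝ) :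
    rep a (Pi.single w c) = c • a w := by
  unfold rep
  rw [Finset.sum_eq_single w]
  · simp
  · intro v _ h; simp [h]
  · simp

lemma exists_opt (a : W → σ → ℝ) (m : W → ℝ) (hm : ∀ w, 0 ≤ m w) :
    ∃ l, Opt a l ∧ rep a l = rep a m := by
  classical
  let S : Set (W → ℝ) := {l | (∀ w, 0 ≤ l w) ∧ rep a l = rep a m ∧ ∑ w, l w ≤ ∑ w, m w}
  have hcont : Continuous (fun l : W → ℝ => rep a l) := by
    unfold rep; fun_prop
  have hclosed : IsClosed S := by
    have h1 : IsClosed {l : W → ℝ | ∀ w, 0 ≤ l w} := by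
      simp only [Set.ofPred_forall]
      exact isClosed_iInter fun w => isClosed_le continuous_const (continuous_apply w)
    have h2 : IsClosed {l : W → ℝ | rep a l = rep a m} := isClosed_eq hcont continuous_const
    have h3 : IsClosed {l : W → ℝ | ∑ w, l w ≤ ∑ w, m w} :=
      isClosed_le (by fun_prop) continuous_const
    exact h1.inter (h2.inter h3)
  have hcomp : IsCompact S := by
    refine IsCompact.of_isClosed_subset
      (isCompact_univ_pi (fun _ : W => isCompact_Icc (a := (0 : ℝ)) (b := ∑ w, m w))) hclosed ?_
    rintro l ⟨h0, _, h2⟩ w _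
    refine ⟨h0 w, le_trans ?_ h2⟩
    exact Finset.single_le_sum (f := l) (fun i _ => h0 i) (Finset.mem_univ w)
  obtain ⟨l, hl, hmin⟩ := hcomp.exists_isMinOn ⟨m, hm, rfl, le_rfl⟩
    (f := fun l : W → ℝ => ∑ w, l w) (by fun_prop)
  refine ⟨l, ⟨hl.1, fun k hk hkl => ?_⟩, hl.2.1⟩
  by_cases h : ∑ w, k w ≤ ∑ w, m w
  · exact hmin ⟨hk, hkl.trans hl.2.1, h⟩
  · exact hl.2.2.trans (not_le.mp h).le

/-- a small multiple of `m` is dominated by `l` -/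
lemma exists_eps (l m : W → ℝ) (hl : ∀ w, 0 ≤ l w) (h : ∀ w, m w ≠ 0 → 0 < l w) :
    ∃ e > 0, ∀ w, 0 ≤ l w + e * m w := by
  classical
  have key : ∀ w, ∃ e > 0, ∀ d, 0 < d → d ≤ e → 0 ≤ l w + d * m w := by
    intro w
    by_cases hw : m w = 0
    · exact ⟨1, one_pos, fun d _ _ => by rw [hw]; simpa using hl w⟩
    · refine ⟨l w / |m w|, div_pos (h w hw) (abs_pos.mpr hw), fun d hd hd' => ?_⟩
      rw [le_div_iff₀ (abs_pos.mpr hw)] at hd'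
      have : -(d * |m w|) ≤ d * m w := by
        rw [← mul_neg]; exact mul_le_mul_of_nonneg_left (neg_abs_le _) hd.le
      linarith
  choose e he hd using key
  by_cases hW : Nonempty W
  · refine ⟨Finset.univ.inf' Finset.univ_nonempty e, ?_, fun w => hd w _ ?_ ?_⟩
    · rw [gt_iff_lt, Finset.lt_inf'_iff]; exact fun w _ => he w
    · rw [Finset.lt_inf'_iff]; exact fun w _ => he w
    · exact Finset.inf'_le _ (Finset.mem_univ w)
  · exact ⟨1, one_pos, fun w => absurd ⟨w⟩ hW⟩

lemma Opt.of_supp {a : W → σ → ℝ} {l m : W → ℝ} (hl : Opt a l) (hm : ∀ w, 0 ≤ m w)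
    (h : ∀ w, m w ≠ 0 → l w ≠ 0) : Opt a m := by
  refine ⟨hm, fun k hk hkm => ?_⟩
  obtain ⟨e, he, hle⟩ := exists_eps l (-m) hl.1 (fun w hw =>
    lt_of_le_of_ne (hl.1 w) (Ne.symm (h w (by simpa using hw))))
  have := hl.2 (l + e • (k - m)) (fun w => by
    have h1 := hle w
    have h2 := mul_nonneg he.le (hk w)
    simp only [Pi.add_apply, Pi.smul_apply, Pi.sub_apply, smul_eq_mul, Pi.neg_apply] at *
    nlinarith) (by rw [rep_add, rep_smul, rep_sub, hkm]; simp)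
  simp only [Pi.add_apply, Pi.smul_apply, Pi.sub_apply, smul_eq_mul, Finset.sum_add_distrib,
    ← Finset.mul_sum, Finset.sum_sub_distrib] at this
  have h3 : 0 ≤ e * (∑ w, k w - ∑ w, m w) := by linarith
  have := nonneg_of_mul_nonneg_right h3 he
  linarith

lemma Opt.add_of_supp {a : W → σ → ℝ} {l m : W → ℝ} (hl : Opt a l) (hm : ∀ w, 0 ≤ m w)
    (h : ∀ w, m w ≠ 0 → l w ≠ 0) : Opt a (l + m) := by
  refine hl.of_supp (fun w => add_nonneg (hl.1 w) (hm w)) fun w hw h0 => hw ?_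
  have : m w = 0 := by by_contra h'; exact h w h' h0
  simp [h0, this]

/-- Every dependent subset carries a relation of nonzero total mass. -/
def Gen (a : W → σ → ℝ) : Prop :=
  ∀ c : W → ℝ, c ≠ 0 → rep a c = 0 →
    ∃ b : W → ℝ, (∀ w, b w ≠ 0 → c w ≠ 0) ∧ rep a b = 0 ∧ ∑ w, b w ≠ 0

lemma Opt.indep {a : W → σ → ℝ} (hG : Gen a) {l : W → ℝ} (hl : Opt a l) (c : W → ℝ)
    (hc : ∀ w, c w ≠ 0 → l w ≠ 0) (h0 : rep a c = 0) : c = 0 := by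
  by_contra hne
  obtain ⟨b, hb, hb0, hbs⟩ := hG c hne h0
  wlog hneg : ∑ w, b w < 0 generalizing b
  · refine this (-b) (fun w hw => hb w (by simpa using hw)) ?_ ?_ ?_
    · have := rep_smul a (-1) b; simpa [hb0] using this
    · simpa using hbs
    · simp only [Pi.neg_apply, Finset.sum_neg_distrib]
      have := lt_of_le_of_ne (not_lt.mp hneg) hbs.symm
      linarith
  obtain ⟨e, he, hle⟩ := exists_eps l b hl.1 (fun w hw =>
    lt_of_le_of_ne (hl.1 w) (Ne.symm (hc w (hb w hw))))
  have := hl.2 (l + e • b) (fun w => by simpa using hle w) (by rw [rep_add, rep_smul, hb0]; simp)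
  simp only [Pi.add_apply, Pi.smul_apply, smul_eq_mul, Finset.sum_add_distrib,
    ← Finset.mul_sum] at this
  nlinarith

lemma Opt.sum_eq {a : W → σ → ℝ} {l m : W → ℝ} (hl : Opt a l) (hm : Opt a m)
    (h : rep a l = rep a m) : ∑ w, l w = ∑ w, m w :=
  le_antisymm (hl.2 m hm.1 h.symm) (hm.2 l hl.1 h)

lemma Opt.unique {a : W → σ → ℝ} (hG : Gen a) {l m : W → ℝ} (hl : Opt a l) (hm : Opt a m)
    (h : rep a l = rep a m) : l = m := by
  have hs := hl.sum_eq hm h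
  have hmid : Opt a ((1 / 2 : ℝ) • (l + m)) := by
    refine ⟨fun w => ?_, fun k hk hkm => ?_⟩
    · have := hl.1 w; have := hm.1 w
      simp only [Pi.smul_apply, Pi.add_apply, smul_eq_mul]; positivity
    · have e : rep a k = rep a l := by
        rw [hkm, rep_smul, rep_add, ← h, ← two_smul ℝ, smul_smul]; norm_num
      have := hl.2 k hk e
      simp only [Pi.smul_apply, Pi.add_apply, smul_eq_mul, ← Finset.mul_sum,
        Finset.sum_add_distrib]
      linarith
  have := hmid.indep hG (l - m) (fun w hw h0 => hw ?_) (by rw [rep_sub, h, sub_self])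
  · exact sub_eq_zero.mp this
  · have h1 := hl.1 w; have h2 := hm.1 w
    simp only [Pi.smul_apply, Pi.add_apply, smul_eq_mul] at h0
    simp only [Pi.sub_apply]
    linarith

/-- the value of a representation is subadditive: adding an extra nonnegative vector -/
lemma Opt.sum_le_of {a : W → σ → ℝ} {l m : W → ℝ} (hl : Opt a l) (hm : ∀ w, 0 ≤ m w)
    (h : rep a m = rep a l) : ∑ w, l w ≤ ∑ w, m w := hl.2 m hm h

lemma Opt.of_sum_eq {a : W → σ → ℝ} {l m : W → ℝ} (hl : Opt a l) (hm : ∀ w, 0 ≤ m w)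
    (h : rep a m = rep a l) (hs : ∑ w, m w = ∑ w, l w) : Opt a m :=
  ⟨hm, fun k hk hkm => hs ▸ hl.2 k hk (hkm.trans h)⟩

end LP

/-! ### The Newton function as an optimal value -/
section Nu
variable {σ : Type*} [Fintype σ] [DecidableEq σ]

/-- exponent vectors -/
def ex (f : MvPolynomial σ ℂ) (w : f.support) : σ → ℝ := toR (w : σ →₀ ℕ)

lemma mem_newton {f : MvPolynomial σ ℂ} {y : σ → ℝ} :
    y ∈ newtonPolytope f ↔
      ∃ m : f.support → ℝ, (∀ w, 0 ≤ m w) ∧ ∑ w, m w ≤ 1 ∧ y = rep (ex f) m := by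
  classical
  constructor
  · intro hy
    let S : Set (σ → ℝ) :=
      {y | ∃ m : f.support → ℝ, (∀ w, 0 ≤ m w) ∧ ∑ w, m w ≤ 1 ∧ y = rep (ex f) m}
    have hS : Convex ℝ S := by
      rintro _ ⟨m, hm, hm1, rfl⟩ _ ⟨k, hk, hk1, rfl⟩ s t hs ht hst
      refine ⟨s • m + t • k, fun w => ?_, ?_, by rw [rep_add, rep_smul, rep_smul]⟩
      · have := hm w; have := hk w
        simp only [Pi.add_apply, Pi.smul_apply, smul_eq_mul]; positivity
      · simp only [Pi.add_apply, Pi.smul_apply, smul_eq_mul, Finset.sum_add_distrib,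
          ← Finset.mul_sum]
        nlinarith
    refine convexHull_min (s := {0} ∪ (toR '' (f.support : Set (σ →₀ ℕ)))) (t := S) ?_ hS hy
    rintro x (rfl | ⟨w, hw, rfl⟩)
    · exact ⟨0, by simp, by simp, by simp [rep_zero]⟩
    · refine ⟨Pi.single ⟨w, hw⟩ 1, fun v => ?_, by simp, by rw [rep_single]; simp [ex]⟩
      by_cases h : v = ⟨w, hw⟩
      · subst h; simp
      · simp [h]
  · rintro ⟨m, hm, hm1, rfl⟩
    have hc : Convex ℝ (newtonPolytope f) := convex_convexHull _ _
    have h0 : (0 : σ → ℝ) ∈ newtonPolytope f := subset_convexHull _ _ (by simp)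
    have hw : ∀ w : f.support, ex f w ∈ newtonPolytope f := fun w =>
      subset_convexHull _ _ (Or.inr ⟨w, w.2, rfl⟩)
    have := hc.sum_mem (t := Finset.univ) (w := fun o : Option f.support =>
      o.elim (1 - ∑ w, m w) m) (z := fun o => o.elim 0 (ex f))
      (by rintro (_ | w) _
          · simpa using hm1
          · exact hm w) (by rw [Fintype.sum_option]; simp)
      (by rintro (_ | w) _
          · exact h0
          · exact hw w)
    rw [Fintype.sum_option] at this
    simpa [rep] using this

open scoped Pointwise in
lemma nu_eq {f : MvPolynomial σ ℂ} {l : f.support → ℝ} (hl : Opt (ex f) l) :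
    nu f (rep (ex f) l) = ∑ w, l w := by
  classical
  have hup : ∀ r > 0, ∑ w, l w ≤ r → rep (ex f) l ∈ r • newtonPolytope f := by
    intro r hr hlr
    refine ⟨r⁻¹ • rep (ex f) l, ?_, by simp [smul_smul, hr.ne']⟩
    rw [mem_newton]
    refine ⟨r⁻¹ • l, fun w => mul_nonneg (inv_nonneg.mpr hr.le) (hl.1 w), ?_,
      by rw [rep_smul]⟩
    simp only [Pi.smul_apply, smul_eq_mul, ← Finset.mul_sum]
    rw [inv_mul_le_iff₀ hr]; simpa using hlr
  have hs0 : 0 ≤ ∑ w, l w := Finset.sum_nonneg fun w _ => hl.1 w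
  unfold nu
  apply le_antisymm
  · refine le_of_forall_pos_le_add fun e he => ?_
    exact gauge_le_of_mem (by positivity) (hup _ (by positivity) (by linarith))
  · unfold gauge
    refine le_csInf ⟨∑ w, l w + 1, show _ ∧ _ from
      ⟨(by positivity : (0 : ℝ) < _), hup _ (by positivity) (by linarith)⟩⟩ ?_
    rintro r ⟨hr, y, hy, hyr⟩
    have hr' : (0 : ℝ) < r := hr
    obtain ⟨m, hm, hm1, rfl⟩ := mem_newton.mp hy
    have := hl.2 (r • m) (fun w => mul_nonneg hr'.le (hm w)) (by rw [rep_smul]; exact hyr)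
    simp only [Pi.smul_apply, smul_eq_mul, ← Finset.mul_sum] at this
    nlinarith

lemma rep_ex_nonneg {f : MvPolynomial σ ℂ} {l : f.support → ℝ} (hl : ∀ w, 0 ≤ l w) (i : σ) :
    0 ≤ rep (ex f) l i := by
  simp only [rep, Finset.sum_apply, Pi.smul_apply, smul_eq_mul, ex, toR]
  exact Finset.sum_nonneg fun w _ => mul_nonneg (hl w) (Nat.cast_nonneg _)

lemma exists_rep {f : MvPolynomial σ ℂ} (hf : Convenient f) {x : σ → ℝ} (hx : ∀ i, 0 ≤ x i) :
    ∃ l : f.support → ℝ, (∀ w, 0 ≤ l w) ∧ rep (ex f) l = x := by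
  classical
  choose k hk hkc using hf
  let v : σ → f.support := fun i => ⟨Finsupp.single i (k i), by
    rw [mem_support_iff]; exact hkc i⟩
  refine ⟨∑ i, Pi.single (v i) (x i / k i), fun w => ?_, ?_⟩
  · simp only [Finset.sum_apply]
    refine Finset.sum_nonneg fun i _ => ?_
    by_cases h : w = v i
    · subst h; simp only [Pi.single_eq_same]
      exact div_nonneg (hx i) (Nat.cast_nonneg _)
    · simp [h]
  · have : ∀ s : Finset σ, rep (ex f) (∑ i ∈ s, Pi.single (v i) (x i / k i))
        = ∑ i ∈ s, (x i / k i) • ex f (v i) := by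
      intro s
      induction s using Finset.induction_on with
      | empty => simp [rep_zero]
      | insert i s hi ih => rw [Finset.sum_insert hi, rep_add, ih, Finset.sum_insert hi, rep_single]
    rw [this]
    ext j
    simp only [Finset.sum_apply, Pi.smul_apply, smul_eq_mul, ex, toR, v]
    rw [Finset.sum_eq_single j]
    · have : (k j : ℝ) ≠ 0 := by have := hk j; positivity
      simp [this]
    · intro i _ hij; simp [hij]
    · simp

lemma exists_opt_nu {f : MvPolynomial σ ℂ} (hf : Convenient f) {x : σ → ℝ} (hx : ∀ i, 0 ≤ x i) :
    ∃ l : f.support → ℝ, Opt (ex f) l ∧ rep (ex f) l = x ∧ nu f x = ∑ w, l w := by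
  obtain ⟨m, hm, rfl⟩ := exists_rep hf hx
  obtain ⟨l, hl, hlm⟩ := exists_opt (ex f) m hm
  exact ⟨l, hl, hlm, by rw [← hlm, nu_eq hl]⟩

lemma nu_rep_le {f : MvPolynomial σ ℂ} {m : f.support → ℝ} (hm : ∀ w, 0 ≤ m w) :
    nu f (rep (ex f) m) ≤ ∑ w, m w := by
  obtain ⟨l, hl, hlm⟩ := exists_opt (ex f) m hm
  rw [← hlm, nu_eq hl]
  exact hl.2 m hm hlm.symm

lemma opt_iff_nu {f : MvPolynomial σ ℂ} {m : f.support → ℝ} (hm : ∀ w, 0 ≤ m w) :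
    Opt (ex f) m ↔ nu f (rep (ex f) m) = ∑ w, m w := by
  refine ⟨nu_eq, fun h => ⟨hm, fun k hk hkm => ?_⟩⟩
  rw [← h, ← hkm]; exact nu_rep_le hk

lemma toR_nonneg (m : σ →₀ ℕ) (i : σ) : 0 ≤ toR m i := Nat.cast_nonneg _

lemma toR_add (m k : σ →₀ ℕ) : toR (m + k) = toR m + toR k := by
  ext i; simp [toR]

lemma toR_nsmul (c : ℕ) (k : σ →₀ ℕ) : toR (c • k) = (c : ℝ) • toR k := by
  ext i; simp [toR]

lemma toR_injective : Function.Injective (toR : (σ →₀ ℕ) → σ → ℝ) := by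
  intro a b h
  ext i; have := congrFun h i; simpa [toR] using this

lemma nu_add_le {f : MvPolynomial σ ℂ} (hf : Convenient f) {x y : σ → ℝ} (hx : ∀ i, 0 ≤ x i)
    (hy : ∀ i, 0 ≤ y i) : nu f (x + y) ≤ nu f x + nu f y := by
  obtain ⟨l, hl, hlx, e1⟩ := exists_opt_nu hf hx
  obtain ⟨m, hm, hmy, e2⟩ := exists_opt_nu hf hy
  rw [e1, e2, ← hlx, ← hmy, ← rep_add, ← Finset.sum_add_distrib]
  exact nu_rep_le (m := l + m) fun w => add_nonneg (hl.1 w) (hm.1 w)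

lemma nu_nonneg' (f : MvPolynomial σ ℂ) (x : σ → ℝ) : 0 ≤ nu f x := gauge_nonneg _

lemma nu_support_le {f : MvPolynomial σ ℂ} {w : σ →₀ ℕ} (hw : w ∈ f.support) :
    nu f (toR w) ≤ 1 := by
  classical
  have := nu_rep_le (f := f) (m := Pi.single ⟨w, hw⟩ 1) (fun v => by
    by_cases h : v = ⟨w, hw⟩
    · subst h; simp
    · simp [h])
  rw [rep_single] at this
  simpa [ex] using this

/-- sublevel sets of the Newton function are finite -/
lemma finite_nu_le {f : MvPolynomial σ ℂ} (hf : Convenient f) (c : ℝ) :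
    {m : σ →₀ ℕ | nu f (toR m) ≤ c}.Finite := by
  classical
  -- each coordinate is at most `c * B`
  obtain ⟨B, hB⟩ : ∃ B : ℝ, ∀ w : f.support, ∀ i, ex f w i ≤ B ∧ 0 ≤ B := by
    refine ⟨∑ w : f.support, ∑ i, ex f w i, fun w i => ⟨?_, ?_⟩⟩
    · refine le_trans ?_ (Finset.single_le_sum (f := fun w : f.support => ∑ i, ex f w i) (fun v _ =>
        Finset.sum_nonneg fun j _ => toR_nonneg _ _) (Finset.mem_univ w))
      exact Finset.single_le_sum (f := fun i => ex f w i) (fun v _ => toR_nonneg _ _)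
        (Finset.mem_univ i)
    · exact Finset.sum_nonneg fun v _ => Finset.sum_nonneg fun j _ => toR_nonneg _ _
  have hfin : (Set.Iic (Finsupp.equivFunOnFinite.symm (fun _ : σ => ⌈c * B⌉₊))).Finite :=
    Set.finite_Iic _
  refine hfin.subset fun m hm => ?_
  have hm' : nu f (toR m) ≤ c := hm
  intro i
  obtain ⟨l, hl, hlm, e⟩ := exists_opt_nu hf (toR_nonneg m)
  have h1 : (m i : ℝ) ≤ c * B := by
    have : (m i : ℝ) = rep (ex f) l i := by rw [hlm]; rfl
    rw [this]
    simp only [rep, Finset.sum_apply, Pi.smul_apply, smul_eq_mul]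
    by_cases hne : Nonempty f.support
    · obtain ⟨w0⟩ := hne
      calc ∑ w, l w * ex f w i ≤ ∑ w, l w * B :=
            Finset.sum_le_sum fun w _ => mul_le_mul_of_nonneg_left (hB w i).1 (hl.1 w)
        _ = (∑ w, l w) * B := by rw [Finset.sum_mul]
        _ ≤ c * B := mul_le_mul_of_nonneg_right (e ▸ hm') (hB w0 i).2
    · obtain ⟨k, _, hk⟩ := hf i
      exact absurd ⟨⟨_, mem_support_iff.mpr hk⟩⟩ hne
  have : (m i : ℝ) ≤ (⌈c * B⌉₊ : ℝ) := h1.trans (Nat.le_ceil _)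
  simpa using (by exact_mod_cast this : m i ≤ ⌈c * B⌉₊)

end Nu
end ToricNewton
end

section
open MvPolynomial

namespace ToricNewton
set_option linter.unusedSectionVars false

/-! ### Perturbation of a linear program -/
section Perturb
open Filter Topology
variable {W : Type*} [Fintype W] {σ : Type*} [Fintype σ]

lemma eventually_sum_div_ne (i : W → ℕ) (hi : Function.Injective i) (c : W → ℝ) (hc : c ≠ 0) :
    ∀ᶠ N : ℕ in atTop, ∑ w, c w / ((N : ℝ) + i w) ≠ 0 := by
  classical
  let P : Polynomial ℝ := ∑ w, Polynomial.C (c w) *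
    ∏ v ∈ Finset.univ.erase w, (Polynomial.X + Polynomial.C (i v : ℝ))
  have heval : ∀ x : ℝ, P.eval x = ∑ w, c w * ∏ v ∈ Finset.univ.erase w, (x + i v) := by
    intro x
    simp [P, Polynomial.eval_finsetSum, Polynomial.eval_prod]
  have hP : P ≠ 0 := by
    obtain ⟨w, hw⟩ := Function.ne_iff.mp hc
    intro h0
    have h := heval (-(i w : ℝ))
    rw [h0, Polynomial.eval_zero, Finset.sum_eq_single w] at h
    · refine mul_ne_zero hw (Finset.prod_ne_zero_iff.mpr fun v hv => ?_) h.symm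
      have hne : i v ≠ i w := fun h' => (Finset.mem_erase.mp hv).1 (hi h')
      have : (i v : ℝ) ≠ i w := by exact_mod_cast hne
      intro h'; apply this; linarith
    · intro v _ hvw
      rw [Finset.prod_eq_zero (i := w)]
      · simp
      · simp [Ne.symm hvw]
      · ring
    · simp
  have h1 := tendsto_natCast_atTop_atTop (R := ℝ) |>.eventually (P.eventually_atTop_not_isRoot hP)
  filter_upwards [h1, eventually_ge_atTop 1] with N hN hN1 h0
  apply hN
  have hpos : ∀ v, (N : ℝ) + i v ≠ 0 := fun v => by positivity
  rw [Polynomial.IsRoot.def, heval]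
  have : ∑ w, c w * ∏ v ∈ Finset.univ.erase w, ((N : ℝ) + i v)
      = (∑ w, c w / ((N : ℝ) + i w)) * ∏ v, ((N : ℝ) + i v) := by
    rw [Finset.sum_mul]
    refine Finset.sum_congr rfl fun w _ => ?_
    rw [← Finset.mul_prod_erase Finset.univ _ (Finset.mem_univ w)]
    have := hpos w
    field_simp
  rw [this, h0, zero_mul]

lemma eventually_sum_div_neg (i : W → ℕ) (c : W → ℝ) (hc : ∑ w, c w < 0) :
    ∀ᶠ N : ℕ in atTop, ∑ w, c w / ((N : ℝ) + i w) < 0 := by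
  have h : Tendsto (fun N : ℕ => ∑ w, c w * ((N : ℝ) / ((N : ℝ) + i w))) atTop
      (𝓝 (∑ w, c w * 1)) :=
    tendsto_finsetSum _ fun w _ => (tendsto_natCast_div_add_atTop (i w : ℝ)).const_mul (c w)
  simp only [mul_one] at h
  filter_upwards [h.eventually (gt_mem_nhds hc), eventually_ge_atTop 1] with N hN hN1
  have hN0 : (0 : ℝ) < N := by exact_mod_cast hN1
  have e : ∑ w, c w * ((N : ℝ) / ((N : ℝ) + i w)) = N * ∑ w, c w / ((N : ℝ) + i w) := by
    rw [Finset.mul_sum]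
    refine Finset.sum_congr rfl fun w _ => by ring
  rw [e] at hN
  exact neg_of_mul_neg_right hN hN0.le

open Classical in
/-- indicator of a finite set -/
noncomputable def ind (K : Finset W) : W → ℝ := fun w => if w ∈ K then 1 else 0

lemma ind_nonneg (K : Finset W) (w : W) : 0 ≤ ind K w := by
  unfold ind; split_ifs <;> simp

lemma ind_ne {K : Finset W} {w : W} : ind K w ≠ 0 ↔ w ∈ K := by
  unfold ind; split_ifs with h <;> simp [h]

lemma rep_scale (a : W → σ → ℝ) (N : W → ℝ) (l : W → ℝ) :
    rep (fun w => N w • a w) l = rep a (fun w => N w * l w) := by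
  unfold rep
  refine Finset.sum_congr rfl fun w _ => ?_
  rw [smul_smul, mul_comm]

lemma exists_perturb (a : W → σ → ℝ) : ∃ N : W → ℕ, (∀ w, 1 ≤ N w) ∧
    Gen (fun w => (N w : ℝ) • a w) ∧
    ∀ l, Opt (fun w => (N w : ℝ) • a w) l → Opt a (fun w => N w * l w) := by
  classical
  let i : W → ℕ := fun w => (Fintype.equivFin W w : ℕ)
  have hi : Function.Injective i := fun x y h => (Fintype.equivFin W).injective (Fin.ext h)
  have h1 : ∀ K : Finset W, ∀ᶠ N : ℕ in atTop,
      (∃ c : W → ℝ, c ≠ 0 ∧ (∀ w, c w ≠ 0 → w ∈ K) ∧ rep a c = 0) →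
      ∃ c : W → ℝ, (∀ w, c w ≠ 0 → w ∈ K) ∧ rep a c = 0 ∧ ∑ w, c w / ((N : ℝ) + i w) ≠ 0 := by
    intro K
    by_cases h : ∃ c : W → ℝ, c ≠ 0 ∧ (∀ w, c w ≠ 0 → w ∈ K) ∧ rep a c = 0
    · obtain ⟨c, hc, hK, h0⟩ := h
      filter_upwards [eventually_sum_div_ne i hi c hc] with N hN _
      exact ⟨c, hK, h0, hN⟩
    · exact Eventually.of_forall fun N h' => absurd h' h
  have h2 : ∀ K : Finset W, ∀ᶠ N : ℕ in atTop, ¬ Opt a (ind K) →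
      ∃ m : W → ℝ, (∀ w, 0 ≤ m w) ∧ rep a m = rep a (ind K) ∧
        ∑ w, (m w - ind K w) / ((N : ℝ) + i w) < 0 := by
    intro K
    by_cases h : Opt a (ind K)
    · exact Eventually.of_forall fun N h' => absurd h h'
    · obtain ⟨m, hm, hmr, hms⟩ : ∃ m : W → ℝ, (∀ w, 0 ≤ m w) ∧ rep a m = rep a (ind K) ∧
          ∑ w, m w < ∑ w, ind K w := by
        by_contra hcon
        push Not at hcon
        exact h ⟨ind_nonneg K, hcon⟩
      filter_upwards [eventually_sum_div_neg i (fun w => m w - ind K w)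
        (by rw [Finset.sum_sub_distrib]; linarith)] with N hN _
      exact ⟨m, hm, hmr, hN⟩
  obtain ⟨N, hN1, hN2, hN⟩ := ((eventually_all.mpr h1).and ((eventually_all.mpr h2).and
    (eventually_ge_atTop 1))).exists
  have hpos : ∀ w, (0 : ℝ) < ((N + i w : ℕ) : ℝ) := fun w => by
    have : 0 < N + i w := by omega
    exact_mod_cast this
  refine ⟨fun w => N + i w, fun w => by change 1 ≤ N + i w; omega, ?_, ?_⟩
  · intro c hc h0
    rw [rep_scale a (fun w => ((N + i w : ℕ) : ℝ))] at h0
    have g1 : (fun w => ((N + i w : ℕ) : ℝ) * c w) ≠ 0 := by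
      obtain ⟨w, hw⟩ := Function.ne_iff.mp hc
      exact fun h => mul_ne_zero (hpos w).ne' hw (congrFun h w)
    have g2 : ∀ w, ((N + i w : ℕ) : ℝ) * c w ≠ 0 →
        w ∈ Finset.univ.filter fun w => c w ≠ 0 := by
      intro w hw
      simp only [Finset.mem_filter, Finset.mem_univ, true_and]
      exact right_ne_zero_of_mul hw
    obtain ⟨b, hb, hb0, hbs⟩ := hN1 (Finset.univ.filter fun w => c w ≠ 0) ⟨_, g1, g2, h0⟩
    refine ⟨fun w => b w / ((N + i w : ℕ) : ℝ), fun w hw => ?_, ?_, ?_⟩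
    · have : b w ≠ 0 := fun h => hw (by simp [h])
      simpa using hb w this
    · rw [rep_scale a (fun w => ((N + i w : ℕ) : ℝ)), ← hb0]
      congr 1; ext w
      have := (hpos w).ne'
      field_simp
    · push_cast; exact hbs
  · intro l hl
    let K : Finset W := Finset.univ.filter fun w => l w ≠ 0
    have hK : Opt a (ind K) := by
      by_contra hcon
      obtain ⟨m, hm, hmr, hms⟩ := hN2 K hcon
      have ho : Opt (fun w => ((N + i w : ℕ) : ℝ) • a w) (fun w => ind K w / ((N + i w : ℕ) : ℝ)) :=
        hl.of_supp (fun w => div_nonneg (ind_nonneg K w) (hpos w).le) (fun w hw => by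
          have : ind K w ≠ 0 := fun h => hw (by simp [h])
          simpa [K] using ind_ne.mp this)
      have := ho.2 (fun w => m w / ((N + i w : ℕ) : ℝ)) (fun w => div_nonneg (hm w) (hpos w).le) (by
        rw [rep_scale a (fun w => ((N + i w : ℕ) : ℝ)), rep_scale a (fun w => ((N + i w : ℕ) : ℝ))]
        have e : ∀ k : W → ℝ, (fun w => ((N + i w : ℕ) : ℝ) * (k w / ((N + i w : ℕ) : ℝ))) = k := by
          intro k; ext w
          have := (hpos w).ne'
          field_simp
        rw [e, e, hmr])
      simp only [sub_div, Finset.sum_sub_distrib] at hms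
      push_cast at this
      linarith
    refine hK.of_supp (fun w => mul_nonneg (hpos w).le (hl.1 w)) fun w hw => ?_
    rw [ind_ne]
    simpa [K] using right_ne_zero_of_mul hw

open MeasureTheory in
lemma exists_generic (p : W → σ → ℝ) (U : Set σ) : ∃ v : σ → ℝ, (∀ j ∈ U, v j < 0) ∧
    (∀ j ∉ U, 0 < v j) ∧ ∀ K : Finset W, K.card < Fintype.card σ →
      v ∉ Submodule.span ℝ (p '' K) := by
  classical
  let O : Set (σ → ℝ) := Set.univ.pi fun j => if j ∈ U then Set.Iio 0 else Set.Ioi 0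
  have hO : IsOpen O := isOpen_set_pi Set.finite_univ fun j _ => by
    split_ifs
    · exact isOpen_Iio
    · exact isOpen_Ioi
  have hne : O.Nonempty := ⟨fun j => if j ∈ U then -1 else 1, fun j _ => by
    by_cases h : j ∈ U <;> simp [h]⟩
  have hpos : 0 < volume O := hO.measure_pos volume hne
  by_contra hcon
  push Not at hcon
  have hsub : O ⊆ ⋃ K : {K : Finset W // K.card < Fintype.card σ},
      (Submodule.span ℝ (p '' K.1) : Set (σ → ℝ)) := by
    intro v hv
    obtain ⟨K, hK, hvK⟩ := hcon v (fun j hj => by simpa [hj] using hv j trivial)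
      (fun j hj => by simpa [hj] using hv j trivial)
    exact Set.mem_iUnion.mpr ⟨⟨K, hK⟩, hvK⟩
  have hz : volume (⋃ K : {K : Finset W // K.card < Fintype.card σ},
      (Submodule.span ℝ (p '' K.1) : Set (σ → ℝ))) = 0 := by
    refine measure_iUnion_null fun K => Measure.addHaar_submodule _ _ fun htop => ?_
    have h1 := finrank_span_le_card (R := ℝ) (p '' (K.1 : Set W))
    rw [htop, finrank_top, Module.finrank_fintype_fun_eq_card] at h1
    have h2 : (p '' (K.1 : Set W)).toFinset.card ≤ K.1.card := by
      have e : (p '' (K.1 : Set W)).toFinset = K.1.image p := by ext; simp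
      rw [e]
      exact Finset.card_image_le
    have := K.2
    omega
  exact hpos.ne' (measure_mono_null hsub hz)

end Perturb

/-! ### The first facet -/
section First
open Filter Topology
variable {W : Type*} [Fintype W] {σ : Type*} [Fintype σ]

/-- facets of the perturbed fan -/
def Facet (p : W → σ → ℝ) (K : Finset W) : Prop := Opt p (ind K) ∧ K.card = Fintype.card σ

lemma Facet.opt {p : W → σ → ℝ} {K : Finset W} (hK : Facet p K) {l : W → ℝ} (h0 : ∀ w, 0 ≤ l w)
    (hl : ∀ w, l w ≠ 0 → w ∈ K) : Opt p l :=
  hK.1.of_supp h0 fun w hw => ind_ne.mpr (hl w hw)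

lemma Facet.indep {p : W → σ → ℝ} (hG : Gen p) {K : Finset W} (hK : Facet p K) {l m : W → ℝ}
    (hl : ∀ w, l w ≠ 0 → w ∈ K) (hm : ∀ w, m w ≠ 0 → w ∈ K) (h : rep p l = rep p m) : l = m := by
  refine sub_eq_zero.mp (hK.1.indep hG (l - m) (fun w hw => ind_ne.mpr ?_)
    (by rw [rep_sub, h, sub_self]))
  by_contra hw'
  apply hw
  have h1 : l w = 0 := by by_contra h'; exact hw' (hl w h')
  have h2 : m w = 0 := by by_contra h'; exact hw' (hm w h')
  simp [h1, h2]

lemma opt_linInd {p : W → σ → ℝ} (hG : Gen p) {K : Finset W} (hK : Opt p (ind K)) :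
    LinearIndependent ℝ (fun w : K => p w) := by
  classical
  rw [Fintype.linearIndependent_iff]
  intro g hg w
  let c : W → ℝ := fun w => if h : w ∈ K then g ⟨w, h⟩ else 0
  have hc : c = 0 := by
    refine hK.indep hG c (fun w hw => ind_ne.mpr ?_) ?_
    · by_contra h; exact hw (by simp [c, h])
    · rw [← hg, rep, ← Finset.sum_subset (Finset.subset_univ K)]
      · rw [← Finset.sum_coe_sort]
        refine Finset.sum_congr rfl fun w _ => ?_
        simp [c, w.2]
      · intro w _ hw; simp [c, hw]
  have := congrFun hc w
  simpa [c, w.2] using this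

lemma opt_card_le {p : W → σ → ℝ} (hG : Gen p) {K : Finset W} (hK : Opt p (ind K)) :
    K.card ≤ Fintype.card σ := by
  have := (opt_linInd hG hK).fintype_card_le_finrank
  simpa using this

lemma Facet.exists_coord {p : W → σ → ℝ} (hG : Gen p) {K : Finset W} (hK : Facet p K)
    (x : σ → ℝ) : ∃ m : W → ℝ, (∀ w, m w ≠ 0 → w ∈ K) ∧ rep p m = x := by
  classical
  have hli := opt_linInd hG hK.1
  have hspan := hli.span_eq_top_of_card_eq_finrank' (by simp [hK.2])
  have hx : x ∈ Submodule.span ℝ (Set.range fun w : K => p w) := by rw [hspan]; trivial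
  rw [Submodule.mem_span_range_iff_exists_fun] at hx
  obtain ⟨c, hc⟩ := hx
  refine ⟨fun w => if h : w ∈ K then c ⟨w, h⟩ else 0, fun w hw => ?_, ?_⟩
  · by_contra h; exact hw (by simp [h])
  · rw [← hc, rep, ← Finset.sum_subset (Finset.subset_univ K)]
    · rw [← Finset.sum_coe_sort]
      refine Finset.sum_congr rfl fun w _ => ?_
      simp [w.2]
    · intro w _ hw; simp [hw]

/-- `K` is the facet containing `x + e v` for small `e > 0`, with `x = ∑ l p`, `v = ∑ m p`. -/
structure Fst (p : W → σ → ℝ) (v x : σ → ℝ) (K : Finset W) (l m : W → ℝ) : Prop where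
  facet : Facet p K
  nonneg : ∀ w, 0 ≤ l w
  lsupp : ∀ w, l w ≠ 0 → w ∈ K
  msupp : ∀ w, m w ≠ 0 → w ∈ K
  repl : rep p l = x
  repm : rep p m = v
  pos : ∀ w ∈ K, l w = 0 → 0 < m w

lemma Fst.opt {p : W → σ → ℝ} {v x : σ → ℝ} {K : Finset W} {l m : W → ℝ}
    (h : Fst p v x K l m) : Opt p l := h.facet.opt h.nonneg h.lsupp

lemma Fst.eventually {p : W → σ → ℝ} {v x : σ → ℝ} {K : Finset W} {l m : W → ℝ}
    (h : Fst p v x K l m) :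
    ∀ᶠ e : ℝ in 𝓝[>] 0, Opt p (l + e • m) ∧ rep p (l + e • m) = x + e • v ∧
      ∀ w, (l + e • m) w ≠ 0 ↔ w ∈ K := by
  have h1 : ∀ w : W, ∀ᶠ e : ℝ in 𝓝[>] 0, w ∈ K → 0 < l w + e * m w := by
    intro w
    by_cases hw : w ∈ K
    · rcases (h.nonneg w).eq_or_lt with h0 | h0
      · filter_upwards [self_mem_nhdsWithin] with e he _
        rw [← h0, zero_add]
        exact mul_pos he (h.pos w hw h0.symm)
      · have : Tendsto (fun e : ℝ => l w + e * m w) (𝓝[>] 0) (𝓝 (l w + 0 * m w)) := by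
          refine Tendsto.mono_left ?_ nhdsWithin_le_nhds
          exact (Continuous.tendsto (by fun_prop) 0)
        rw [zero_mul, add_zero] at this
        filter_upwards [this.eventually (lt_mem_nhds h0)] with e he _ using he
    · exact Eventually.of_forall fun e h' => absurd h' hw
  filter_upwards [eventually_all.mpr h1] with e he
  have h0 : ∀ w, w ∉ K → l w + e * m w = 0 := by
    intro w hw
    have h1 : l w = 0 := by by_contra h'; exact hw (h.lsupp w h')
    have h2 : m w = 0 := by by_contra h'; exact hw (h.msupp w h')
    simp [h1, h2]
  have hs : ∀ w, (l + e • m) w ≠ 0 ↔ w ∈ K := by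
    intro w
    simp only [Pi.add_apply, Pi.smul_apply, smul_eq_mul]
    refine ⟨fun hw => ?_, fun hw => (he w hw).ne'⟩
    by_contra h'; exact hw (h0 w h')
  refine ⟨h.facet.opt (fun w => ?_) fun w => (hs w).mp, ?_, hs⟩
  · by_cases hw : w ∈ K
    · exact (he w hw).le
    · exact (h0 w hw).ge
  · rw [rep_add, rep_smul, h.repl, h.repm]

lemma Fst.unique {p : W → σ → ℝ} (hG : Gen p) {v x : σ → ℝ} {K K' : Finset W} {l m l' m' : W → ℝ}
    (h : Fst p v x K l m) (h' : Fst p v x K' l' m') : K = K' ∧ l = l' ∧ m = m' := by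
  obtain ⟨e, he, he'⟩ := (h.eventually.and h'.eventually).exists
  have heq := he.1.unique hG he'.1 (he.2.1.trans he'.2.1.symm)
  have hK : K = K' := by
    ext w; rw [← he.2.2 w, ← he'.2.2 w, heq]
  subst hK
  exact ⟨rfl, h.facet.indep hG h.lsupp h'.lsupp (h.repl.trans h'.repl.symm),
    h.facet.indep hG h.msupp h'.msupp (h.repm.trans h'.repm.symm)⟩

lemma exists_fst {p : W → σ → ℝ} (hG : Gen p) {v x : σ → ℝ}
    (hv : ∀ K : Finset W, K.card < Fintype.card σ → v ∉ Submodule.span ℝ (p '' K))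
    (hx : ∀ᶠ e : ℝ in 𝓝[>] 0, ∃ k : W → ℝ, (∀ w, 0 ≤ k w) ∧ rep p k = x + e • v) :
    ∃ K l m, Fst p v x K l m := by
  classical
  let P : Finset W → ℝ → Prop := fun K e => ∃ k : W → ℝ, Opt p k ∧ rep p k = x + e • v ∧
    ∀ w, k w ≠ 0 ↔ w ∈ K
  obtain ⟨K, hK⟩ : ∃ K, ∃ᶠ e : ℝ in 𝓝[>] 0, P K e := by
    by_contra hcon
    push Not at hcon
    obtain ⟨e, h1, h2⟩ := (hx.and (eventually_all.mpr hcon)).exists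
    obtain ⟨k, hk, hke⟩ := h1
    obtain ⟨l, hl, hlk⟩ := exists_opt p k hk
    exact h2 (Finset.univ.filter fun w => l w ≠ 0) ⟨l, hl, hlk.trans hke, by simp⟩
  have hopt : Opt p (ind K) := by
    obtain ⟨e, k, hk, _, hs⟩ := hK.exists
    exact hk.of_supp (ind_nonneg K) fun w hw => (hs w).mpr (ind_ne.mp hw)
  have hspan : ∀ k : W → ℝ, (∀ w, k w ≠ 0 ↔ w ∈ K) → rep p k ∈ Submodule.span ℝ (p '' K) := by
    intro k hk
    refine Submodule.sum_mem _ fun w _ => ?_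
    by_cases h : w ∈ K
    · exact Submodule.smul_mem _ _ (Submodule.subset_span ⟨w, h, rfl⟩)
    · have : k w = 0 := by by_contra h'; exact h ((hk w).mp h')
      simp [this]
  have hcard : K.card = Fintype.card σ := by
    refine le_antisymm (opt_card_le hG hopt) ?_
    by_contra hlt
    obtain ⟨e1, hP1, he1⟩ := (hK.and_eventually self_mem_nhdsWithin).exists
    obtain ⟨e2, hP2, he2⟩ := (hK.and_eventually
      (mem_nhdsWithin_of_mem_nhds (gt_mem_nhds (show (0 : ℝ) < e1 from he1)))).exists
    obtain ⟨k1, _, hr1, hs1⟩ := hP1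
    obtain ⟨k2, _, hr2, hs2⟩ := hP2
    refine hv K (not_le.mp hlt) ?_
    have h := Submodule.sub_mem _ (hspan k1 hs1) (hspan k2 hs2)
    rw [hr1, hr2, add_sub_add_left_eq_sub, ← sub_smul] at h
    exact (Submodule.smul_mem_iff _ (sub_ne_zero.mpr (ne_of_gt he2))).mp h
  have hF : Facet p K := ⟨hopt, hcard⟩
  obtain ⟨l, hls, hlr⟩ := hF.exists_coord hG x
  obtain ⟨m, hms, hmr⟩ := hF.exists_coord hG v
  have hfreq : ∀ w ∈ K, ∃ᶠ e : ℝ in 𝓝[>] 0, 0 < l w + e * m w := by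
    intro w hw
    refine hK.mono fun e ⟨k, hk, hkr, hks⟩ => ?_
    have : k = l + e • m := by
      refine hF.indep hG (fun w => (hks w).mp) (fun w hw => ?_) ?_
      · by_contra h'
        apply hw
        have h1 : l w = 0 := by by_contra h''; exact h' (hls w h'')
        have h2 : m w = 0 := by by_contra h''; exact h' (hms w h'')
        simp [h1, h2]
      · rw [hkr, rep_add, rep_smul, hlr, hmr]
    have h1 : 0 < k w := lt_of_le_of_ne (hk.1 w) (Ne.symm ((hks w).mpr hw))
    rw [this] at h1
    simpa using h1
  refine ⟨K, l, m, hF, fun w => ?_, hls, hms, hlr, hmr, fun w hw h0 => ?_⟩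
  · by_cases hw : w ∈ K
    · by_contra hneg
      have : Tendsto (fun e : ℝ => l w + e * m w) (𝓝[>] 0) (𝓝 (l w + 0 * m w)) := by
        refine Tendsto.mono_left ?_ nhdsWithin_le_nhds
        exact (Continuous.tendsto (by fun_prop) 0)
      rw [zero_mul, add_zero] at this
      obtain ⟨e, h1, h2⟩ := ((hfreq w hw).and_eventually
        (this.eventually (gt_mem_nhds (not_le.mp hneg)))).exists
      exact lt_asymm h1 h2
    · have : l w = 0 := by by_contra h'; exact hw (hls w h')
      exact this.ge
  · obtain ⟨e, h1, h2⟩ := ((hfreq w hw).and_eventually self_mem_nhdsWithin).exists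
    rw [h0, zero_add] at h1
    exact pos_of_mul_pos_right h1 (le_of_lt h2)

lemma Fst.add_mem [DecidableEq W] {p : W → σ → ℝ} {v x : σ → ℝ} {K : Finset W} {l m : W → ℝ}
    (h : Fst p v x K l m) {w : W} (hw : w ∈ K) : Fst p v (x + p w) K (l + Pi.single w 1) m where
  facet := h.facet
  nonneg u := add_nonneg (h.nonneg u) (by
    by_cases hu : u = w
    · subst hu; simp
    · simp [hu])
  lsupp u hu := by
    by_cases hu' : u = w
    · rwa [hu']
    · exact h.lsupp u (by simpa [hu'] using hu)
  msupp := h.msupp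
  repl := by rw [rep_add, rep_single, h.repl, one_smul]
  repm := h.repm
  pos u hu h0 := by
    refine h.pos u hu ?_
    have h1 := h.nonneg u
    by_cases hu' : u = w
    · subst hu'; simp at h0; linarith
    · simpa [hu'] using h0

lemma lex_of_frequently {a b a' b' : ℝ} (h : ∃ᶠ e : ℝ in 𝓝[>] 0, a + e * b < a' + e * b') :
    toLex (a, b) < toLex (a', b') := by
  rw [Prod.Lex.toLex_lt_toLex]
  have ht : ∀ a b : ℝ, Tendsto (fun e : ℝ => a + e * b) (𝓝[>] 0) (𝓝 a) := by
    intro a b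
    have : Tendsto (fun e : ℝ => a + e * b) (𝓝[>] 0) (𝓝 (a + 0 * b)) := by
      refine Tendsto.mono_left ?_ nhdsWithin_le_nhds
      exact (Continuous.tendsto (by fun_prop) 0)
    simpa using this
  rcases lt_trichotomy a a' with h1 | h1 | h1
  · exact Or.inl h1
  · right
    refine ⟨h1, ?_⟩
    obtain ⟨e, h2, h3⟩ := (h.and_eventually self_mem_nhdsWithin).exists
    simp only at h2 ⊢
    have h3' : (0 : ℝ) < e := h3
    subst h1
    nlinarith
  · exfalso
    obtain ⟨e, h2, h3⟩ := (h.and_eventually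
      ((ht a' b').eventually_lt (ht a b) h1)).exists
    exact lt_asymm h2 h3

lemma Fst.add_notMem [DecidableEq W] {p : W → σ → ℝ} (hG : Gen p) {v x : σ → ℝ} {K K' : Finset W}
    {l m l' m' : W → ℝ} (h : Fst p v x K l m) {w : W} (hw : w ∉ K)
    (h' : Fst p v (x + p w) K' l' m') :
    toLex (∑ w, l' w, ∑ w, m' w) < toLex (∑ w, l w + 1, ∑ w, m w) := by
  refine lex_of_frequently (Eventually.frequently ?_)
  filter_upwards [h.eventually, h'.eventually] with e he he'
  have hs0 : ∀ u, 0 ≤ (Pi.single w 1 : W → ℝ) u := fun u => by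
    by_cases hu : u = w
    · subst hu; simp
    · simp [hu]
  have hr : rep p (l + e • m + Pi.single w 1) = rep p (l' + e • m') := by
    rw [rep_add, he.2.1, he'.2.1, rep_single]; simp [add_right_comm]
  have hs : ∀ a b : W → ℝ, ∑ w, (a + e • b) w = ∑ w, a w + e * ∑ w, b w := by
    intro a b; simp [Finset.sum_add_distrib, Finset.mul_sum]
  have hs1 : ∑ u, (l + e • m + Pi.single w 1 : W → ℝ) u = ∑ w, l w + 1 + e * ∑ w, m w := by
    have : ∑ u, (l + e • m + Pi.single w 1 : W → ℝ) u
        = ∑ u, (l + e • m) u + ∑ u, (Pi.single w 1 : W → ℝ) u := by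
      rw [← Finset.sum_add_distrib]; rfl
    rw [this, hs, Finset.sum_pi_single']; simp; ring
  have hle := he'.1.2 (l + e • m + Pi.single w 1)
    (fun u => add_nonneg (he.1.1 u) (hs0 u)) hr
  rw [hs, hs1] at hle
  refine lt_of_le_of_ne hle fun heq => ?_
  have hopt := he'.1.of_sum_eq (fun u => add_nonneg (he.1.1 u) (hs0 u)) hr
    (by rw [hs, heq]; exact hs1)
  have hop2 : Opt p (ind (insert w K)) := by
    refine hopt.of_supp (ind_nonneg _) fun u hu => ?_
    have hu' := ind_ne.mp hu
    have h1 := he.1.1 u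
    simp only [Pi.add_apply] at h1 ⊢
    by_cases huw : u = w
    · subst huw; simp only [Pi.single_eq_same]; positivity
    · have : u ∈ K := by simpa [huw] using hu'
      have := (he.2.2 u).mpr this
      simpa [huw] using this
  have := opt_card_le hG hop2
  rw [Finset.card_insert_of_notMem hw, h.facet.2] at this
  omega

end First
end ToricNewton
end

section
open MvPolynomial

namespace ToricNewton
set_option linter.unusedSectionVars false

/-! ### The graded action of the symbol ring -/
section Action
variable {n : ℕ} {f : MvPolynomial (Fin n) ℂ}

/-- the exponent of a product of symbols -/
noncomputable def sh (k : f.support →₀ ℕ) : Fin n →₀ ℕ := ∑ w : f.support, k w • (w : Fin n →₀ ℕ)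

/-- the degree of a product of symbols -/
noncomputable def dg (k : f.support →₀ ℕ) : ℕ := ∑ w : f.support, k w

lemma sh_add (k l : f.support →₀ ℕ) : sh (k + l) = sh k + sh l := by
  simp [sh, add_smul, Finset.sum_add_distrib]

lemma sh_zero : sh (0 : f.support →₀ ℕ) = 0 := by simp [sh]

lemma dg_add (k l : f.support →₀ ℕ) : dg (k + l) = dg k + dg l := by
  simp [dg, Finset.sum_add_distrib]

lemma dg_zero : dg (0 : f.support →₀ ℕ) = 0 := by simp [dg]

lemma sh_single (w : f.support) (c : ℕ) : sh (Finsupp.single w c) = c • (w : Fin n →₀ ℕ) := by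
  classical
  unfold sh
  rw [Finset.sum_eq_single w]
  · simp
  · intro v _ h; rw [Finsupp.single_apply, if_neg (Ne.symm h), zero_smul]
  · simp

lemma dg_single (w : f.support) (c : ℕ) : dg (Finsupp.single w c) = c := by
  classical
  unfold dg
  rw [Finset.sum_eq_single w]
  · simp
  · intro v _ h; rw [Finsupp.single_apply, if_neg (Ne.symm h)]
  · simp

lemma toR_sh (k : f.support →₀ ℕ) : toR (sh k) = rep (ex f) (fun w => (k w : ℝ)) := by
  ext i
  simp [toR, sh, rep, ex, Finsupp.finsetSum_apply]

lemma nu_sh_le (k : f.support →₀ ℕ) : nu f (toR (sh k)) ≤ dg k := by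
  rw [toR_sh]
  refine (nu_rep_le (fun w => Nat.cast_nonneg _)).trans (le_of_eq ?_)
  simp [dg]

lemma nu_add_sh_le (hf : Convenient f) (m : Fin n →₀ ℕ) (k : f.support →₀ ℕ) :
    nu f (toR (m + sh k)) ≤ nu f (toR m) + dg k := by
  rw [toR_add]
  exact (nu_add_le hf (toR_nonneg _) (toR_nonneg _)).trans (add_le_add le_rfl (nu_sh_le k))

/-- the product of symbols `k` acts nontrivially at `m` -/
def cnd (k : f.support →₀ ℕ) (m : Fin n →₀ ℕ) : Prop :=
  nu f (toR (m + sh k)) = nu f (toR m) + dg k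

lemma cnd_add (hf : Convenient f) (k l : f.support →₀ ℕ) (m : Fin n →₀ ℕ) :
    cnd (k + l) m ↔ cnd l m ∧ cnd k (m + sh l) := by
  unfold cnd
  have h1 := nu_add_sh_le hf m l
  have h2 := nu_add_sh_le hf (m + sh l) k
  rw [sh_add, dg_add, add_comm (sh k), ← add_assoc]
  push_cast
  constructor
  · intro h; constructor <;> linarith
  · rintro ⟨h, h'⟩; linarith

open Classical in
/-- the operator attached to a product of symbols -/
noncomputable def opA (k : f.support →₀ ℕ) : Module.End ℂ (MvPolynomial (Fin n) ℂ) :=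
  (basisMonomials (Fin n) ℂ).constr ℂ fun m => if cnd k m then monomial (m + sh k) 1 else 0

open Classical in
lemma opA_monomial (k : f.support →₀ ℕ) (m : Fin n →₀ ℕ) (c : ℂ) :
    opA k (monomial m c) = if cnd k m then monomial (m + sh k) c else 0 := by
  have : (monomial m c : MvPolynomial (Fin n) ℂ) = c • monomial m 1 := by
    rw [smul_monomial]; simp
  rw [this, map_smul]
  have h2 : opA k (monomial m (1 : ℂ)) = if cnd k m then monomial (m + sh k) 1 else 0 := by
    have := (basisMonomials (Fin n) ℂ).constr_basis ℂ
      (fun m => if cnd k m then (monomial (m + sh k) 1 : MvPolynomial (Fin n) ℂ) else 0) m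
    rwa [coe_basisMonomials] at this
  rw [h2]
  split_ifs
  · rw [smul_monomial]; simp
  · simp

/-- the operators form a monoid action -/
noncomputable def opHom (hf : Convenient f) :
    Multiplicative (f.support →₀ ℕ) →* Module.End ℂ (MvPolynomial (Fin n) ℂ) where
  toFun k := opA k.toAdd
  map_one' := by
    classical
    refine (basisMonomials (Fin n) ℂ).ext fun m => ?_
    rw [coe_basisMonomials, opA_monomial]
    simp [cnd, sh_zero, dg_zero]
  map_mul' k l := by
    classical
    refine (basisMonomials (Fin n) ℂ).ext fun m => ?_
    rw [coe_basisMonomials, opA_monomial, Module.End.mul_apply, opA_monomial, toAdd_mul]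
    simp only [cnd_add hf]
    by_cases h : cnd (Multiplicative.toAdd l) m
    · simp only [h, true_and, if_true, opA_monomial, sh_add]
      rw [add_comm (sh _) (sh _), add_assoc]
    · simp [h]

/-- the action of the symbol ring -/
noncomputable def act (hf : Convenient f) :
    MvPolynomial f.support ℂ →ₐ[ℂ] Module.End ℂ (MvPolynomial (Fin n) ℂ) :=
  AddMonoidAlgebra.lift ℂ (Module.End ℂ (MvPolynomial (Fin n) ℂ)) (f.support →₀ ℕ) (opHom hf)

lemma act_monomial (hf : Convenient f) (k : f.support →₀ ℕ) (c : ℂ) :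
    act hf (monomial k c) = c • opA k := by
  rw [← single_eq_monomial]
  exact AddMonoidAlgebra.lift_single _ _ _

/-- The associated graded of `ℬ`, as a module over the symbol ring. -/
def AMod (_hf : Convenient f) : Type := MvPolynomial (Fin n) ℂ

noncomputable instance (hf : Convenient f) : AddCommGroup (AMod hf) :=
  inferInstanceAs (AddCommGroup (MvPolynomial (Fin n) ℂ))

noncomputable instance (hf : Convenient f) : Module ℂ (AMod hf) :=
  inferInstanceAs (Module ℂ (MvPolynomial (Fin n) ℂ))

noncomputable instance (hf : Convenient f) : Module (MvPolynomial f.support ℂ) (AMod hf) :=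
  Module.compHom (MvPolynomial (Fin n) ℂ) (act hf).toRingHom

/-- identification with polynomials -/
noncomputable def toP (hf : Convenient f) : AMod hf ≃ₗ[ℂ] MvPolynomial (Fin n) ℂ :=
  LinearEquiv.refl ℂ (MvPolynomial (Fin n) ℂ)

lemma toP_smul (hf : Convenient f) (s : MvPolynomial f.support ℂ) (x : AMod hf) :
    toP hf (s • x) = act hf s (toP hf x) := rfl

instance (hf : Convenient f) : IsScalarTower ℂ (MvPolynomial f.support ℂ) (AMod hf) where
  smul_assoc c s x := by
    apply (toP hf).injective
    rw [toP_smul, map_smul (act hf), map_smul (toP hf), toP_smul]; rfl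

instance (hf : Convenient f) : SMulCommClass ℂ (MvPolynomial f.support ℂ) (AMod hf) where
  smul_comm c s x := by
    apply (toP hf).injective
    rw [toP_smul, map_smul (toP hf), map_smul (toP hf), toP_smul, map_smul]

/-- basis vectors -/
noncomputable def em (hf : Convenient f) (m : Fin n →₀ ℕ) : AMod hf := (toP hf).symm (monomial m 1)

open Classical in
lemma monomial_smul_em (hf : Convenient f) (k : f.support →₀ ℕ) (c : ℂ) (m : Fin n →₀ ℕ) :
    (monomial k c : MvPolynomial f.support ℂ) • em hf m =
      if cnd k m then c • em hf (m + sh k) else 0 := by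
  apply (toP hf).injective
  rw [toP_smul, act_monomial, em, LinearEquiv.apply_symm_apply, LinearMap.smul_apply, opA_monomial]
  split_ifs
  · rw [map_smul]; rfl
  · simp

/-- exponents positive on `U` -/
def Gam (U : Finset (Fin n)) : Set (Fin n →₀ ℕ) := {m | ∀ j ∈ U, 0 < m j}

lemma Gam_add {U : Finset (Fin n)} {m : Fin n →₀ ℕ} (hm : m ∈ Gam U) (k : Fin n →₀ ℕ) :
    m + k ∈ Gam U := fun j hj => by
  have := hm j hj
  simp only [Finsupp.coe_add, Pi.add_apply]; omega

/-- coefficientwise description -/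
def suppIn (S : Set (Fin n →₀ ℕ)) : Submodule ℂ (MvPolynomial (Fin n) ℂ) where
  carrier := {g | ∀ m ∈ g.support, m ∈ S}
  zero_mem' := by simp
  add_mem' := by
    intro a b ha hb m hm
    rcases Finset.mem_union.mp (MvPolynomial.support_add hm) with h | h
    · exact ha m h
    · exact hb m h
  smul_mem' := by
    intro c a ha m hm
    exact ha m (MvPolynomial.support_smul hm)

lemma mem_suppIn {S : Set (Fin n →₀ ℕ)} {g : MvPolynomial (Fin n) ℂ} :
    g ∈ suppIn S ↔ ∀ m ∈ g.support, m ∈ S := Iff.rfl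

lemma monomial_mem_suppIn {S : Set (Fin n →₀ ℕ)} {m : Fin n →₀ ℕ} (hm : m ∈ S) (c : ℂ) :
    monomial m c ∈ suppIn S := by
  classical
  intro k hk
  rw [support_monomial] at hk
  split_ifs at hk
  · simp at hk
  · rw [Finset.mem_singleton.mp hk]; exact hm

lemma suppIn_le {S : Set (Fin n →₀ ℕ)} {Q : Submodule ℂ (MvPolynomial (Fin n) ℂ)}
    (h : ∀ m ∈ S, monomial m 1 ∈ Q) : suppIn S ≤ Q := by
  intro g hg
  rw [g.as_sum]
  refine Submodule.sum_mem _ fun m hm => ?_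
  have : (monomial m (coeff m g) : MvPolynomial (Fin n) ℂ) = coeff m g • monomial m 1 := by
    rw [smul_monomial]; simp
  rw [this]
  exact Q.smul_mem _ (h m (hg m hm))

lemma opA_mem_suppIn {S S' : Set (Fin n →₀ ℕ)} (k : f.support →₀ ℕ)
    (h : ∀ m ∈ S, cnd k m → m + sh k ∈ S') {g : MvPolynomial (Fin n) ℂ} (hg : g ∈ suppIn S) :
    opA k g ∈ suppIn S' := by
  classical
  have : suppIn S ≤ (suppIn S').comap (opA k) := suppIn_le fun m hm => by
    rw [Submodule.mem_comap, opA_monomial]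
    split_ifs with hc
    · exact monomial_mem_suppIn (h m hm hc) _
    · exact Submodule.zero_mem _
  exact this hg

lemma act_mem (hf : Convenient f) {S S' : Set (Fin n →₀ ℕ)} (s : MvPolynomial f.support ℂ)
    (h : ∀ k ∈ s.support, ∀ m ∈ S, cnd k m → m + sh k ∈ S') {g : MvPolynomial (Fin n) ℂ}
    (hg : g ∈ suppIn S) : act hf s g ∈ suppIn S' := by
  rw [s.as_sum, map_sum, LinearMap.sum_apply]
  refine Submodule.sum_mem _ fun k hk => ?_
  rw [act_monomial, LinearMap.smul_apply]
  exact Submodule.smul_mem _ _ (opA_mem_suppIn k (h k hk) hg)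

/-- The submodules `J_U`. -/
noncomputable def JU (hf : Convenient f) (U : Finset (Fin n)) :
    Submodule (MvPolynomial f.support ℂ) (AMod hf) where
  carrier := {x | toP hf x ∈ suppIn (Gam U)}
  zero_mem' := (suppIn (Gam U)).zero_mem
  add_mem' ha hb := (suppIn (Gam U)).add_mem ha hb
  smul_mem' s x hx := act_mem hf s (fun k _ m hm _ => Gam_add hm _) hx

lemma mem_JU {hf : Convenient f} {U : Finset (Fin n)} {x : AMod hf} :
    x ∈ JU hf U ↔ toP hf x ∈ suppIn (Gam U) := Iff.rfl

lemma JU_anti (hf : Convenient f) (U V : Finset (Fin n)) (h : U ⊆ V) : JU hf V ≤ JU hf U :=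
  fun _ hx m hm j hj => hx m hm j (h hj)

lemma JU_empty (hf : Convenient f) (x : AMod hf) : x ∈ JU hf ∅ :=
  fun m _ j hj => absurd hj (by simp)

/-- the symbols of `uᵢ ∂f/∂uᵢ` -/
noncomputable def Fsym (f : MvPolynomial (Fin n) ℂ) (i : Fin n) : MvPolynomial f.support ℂ :=
  ∑ w : f.support, monomial (Finsupp.single w 1) (f.coeff w * ((w : Fin n →₀ ℕ) i : ℂ))

lemma Fsym_smul_mem (hf : Convenient f) (U : Finset (Fin n)) (k : Fin n) (x : AMod hf)
    (hx : x ∈ JU hf U) : Fsym f k • x ∈ JU hf (insert k U) := by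
  rw [Fsym, Finset.sum_smul]
  refine Submodule.sum_mem _ fun w _ => ?_
  by_cases hw : (w : Fin n →₀ ℕ) k = 0
  · rw [hw]; simp
  · refine act_mem hf (monomial (Finsupp.single w 1) (f.coeff w * ((w : Fin n →₀ ℕ) k : ℂ)))
      (S := Gam U) (S' := Gam (insert k U)) (fun l hl m hm _ => ?_) hx
    intro j hj
    have hl' := Finset.mem_singleton.mp (support_monomial_subset hl)
    subst hl'
    rw [sh_single, one_smul]
    simp only [Finsupp.coe_add, Pi.add_apply]
    rcases Finset.mem_insert.mp hj with rfl | hj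
    · omega
    · have := hm j hj; omega

end Action
end ToricNewton
end

section
open MvPolynomial Filter Topology

namespace ToricNewton
set_option linter.unusedSectionVars false

/-! ### Weights -/
section Weights
variable {n : ℕ} {f : MvPolynomial (Fin n) ℂ} {U : Finset (Fin n)}

/-- data of a generic perturbation together with a generic direction -/
structure Tri (f : MvPolynomial (Fin n) ℂ) (U : Finset (Fin n)) where
  /-- multiplicities -/
  N : f.support → ℕ
  /-- direction -/
  v : Fin n → ℝ
  hN : ∀ w, 1 ≤ N w
  hG : Gen (fun w => (N w : ℝ) • ex f w)
  hopt : ∀ l, Opt (fun w => (N w : ℝ) • ex f w) l → Opt (ex f) (fun w => N w * l w)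
  hneg : ∀ j ∈ U, v j < 0
  hpos : ∀ j ∉ U, 0 < v j
  hv : ∀ K : Finset f.support, K.card < Fintype.card (Fin n) →
      v ∉ Submodule.span ℝ ((fun w => (N w : ℝ) • ex f w) '' K)

lemma exists_tri (f : MvPolynomial (Fin n) ℂ) (U : Finset (Fin n)) : Nonempty (Tri f U) := by
  obtain ⟨N, hN, hG, hopt⟩ := exists_perturb (ex f)
  obtain ⟨v, h1, h2, h3⟩ := exists_generic (fun w => (N w : ℝ) • ex f w) (U : Set (Fin n))
  exact ⟨⟨N, v, hN, hG, hopt, h1, h2, h3⟩⟩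

namespace Tri
variable (T : Tri f U)

/-- the perturbed generators -/
noncomputable def p (w : f.support) : Fin n → ℝ := (T.N w : ℝ) • ex f w

/-- first facet at `m` -/
def F (m : Fin n →₀ ℕ) (K : Finset f.support) (l μ : f.support → ℝ) : Prop :=
  Fst T.p T.v (toR m) K l μ

/-- the exponent of a product of perturbed generators -/
noncomputable def ps (k : f.support →₀ ℕ) : Fin n →₀ ℕ :=
  ∑ w : f.support, k w • T.N w • (w : Fin n →₀ ℕ)

lemma ps_add (k l : f.support →₀ ℕ) : T.ps (k + l) = T.ps k + T.ps l := by
  simp [ps, add_smul, Finset.sum_add_distrib]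

lemma ps_zero : T.ps 0 = 0 := by simp [ps]

lemma ps_single (w : f.support) : T.ps (Finsupp.single w 1) = T.N w • (w : Fin n →₀ ℕ) := by
  classical
  unfold ps
  rw [Finset.sum_eq_single w]
  · simp
  · intro v _ h; rw [Finsupp.single_apply, if_neg (Ne.symm h), zero_smul]
  · simp

lemma toR_ps (k : f.support →₀ ℕ) : toR (T.ps k) = rep T.p (fun w => (k w : ℝ)) := by
  ext i
  simp [toR, ps, rep, ex, p, Finsupp.finsetSum_apply]

lemma toR_p (w : f.support) : toR (T.N w • (w : Fin n →₀ ℕ)) = T.p w := by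
  rw [toR_nsmul]; rfl

lemma rep_p_nonneg {l : f.support → ℝ} (hl : ∀ w, 0 ≤ l w) (i : Fin n) : 0 ≤ rep T.p l i := by
  have : rep T.p l = rep (ex f) (fun w => T.N w * l w) := rep_scale _ _ _
  rw [this]
  exact rep_ex_nonneg (fun w => mul_nonneg (Nat.cast_nonneg _) (hl w)) i

lemma exists_F (hf : Convenient f) {m : Fin n →₀ ℕ} (hm : m ∈ Gam U) : ∃ K l μ, T.F m K l μ := by
  refine exists_fst T.hG T.hv ?_
  have h1 : ∀ i : Fin n, ∀ᶠ e : ℝ in 𝓝[>] 0, 0 ≤ toR m i + e * T.v i := by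
    intro i
    by_cases hi : i ∈ U
    · have h0 : (0 : ℝ) < toR m i := Nat.cast_pos.mpr (hm i hi)
      have ht : Tendsto (fun e : ℝ => toR m i + e * T.v i) (𝓝[>] 0) (𝓝 (toR m i + 0 * T.v i)) := by
        refine Tendsto.mono_left ?_ nhdsWithin_le_nhds
        exact (Continuous.tendsto (by fun_prop) 0)
      have := ht.eventually (lt_mem_nhds (a := 0) (by simpa using h0))
      exact this.mono fun e he => he.le
    · filter_upwards [self_mem_nhdsWithin] with e he
      exact add_nonneg (toR_nonneg m i) (mul_nonneg (le_of_lt he) (T.hpos i hi).le)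
  filter_upwards [eventually_all.mpr h1] with e he
  obtain ⟨k, hk, hk'⟩ := exists_rep hf (x := toR m + e • T.v) he
  have hN : ∀ w, (T.N w : ℝ) ≠ 0 := fun w => by have := T.hN w; positivity
  refine ⟨fun w => k w / T.N w, fun w => div_nonneg (hk w) (Nat.cast_nonneg _), ?_⟩
  rw [← hk', rep_scale]
  congr 1; ext w; field_simp [hN w]

lemma F.mem {m : Fin n →₀ ℕ} {K l μ} (h : T.F m K l μ) : m ∈ Gam U := by
  intro j hj
  obtain ⟨e, ⟨he, he', -⟩, he0⟩ := (h.eventually.and self_mem_nhdsWithin).exists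
  have h1 := T.rep_p_nonneg he.1 j
  rw [he'] at h1
  have h2 : e * T.v j < 0 := mul_neg_of_pos_of_neg he0 (T.hneg j hj)
  simp only [Pi.add_apply, Pi.smul_apply, smul_eq_mul] at h1
  have : (0 : ℝ) < toR m j := by linarith
  exact Nat.cast_pos.mp this

lemma F.unique {m : Fin n →₀ ℕ} {K l μ K' l' μ'} (h : T.F m K l μ) (h' : T.F m K' l' μ') :
    K = K' ∧ l = l' ∧ μ = μ' := Fst.unique T.hG h h'

lemma F.nu {m : Fin n →₀ ℕ} {K l μ} (h : T.F m K l μ) :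
    nu f (toR m) = ∑ w, T.N w * l w := by
  have := nu_eq (T.hopt l h.opt)
  rwa [← rep_scale, show rep (fun w => (T.N w : ℝ) • ex f w) l = toR m from h.repl] at this

lemma F.add {m : Fin n →₀ ℕ} {K l μ} (h : T.F m K l μ) (k : f.support →₀ ℕ)
    (hk : ∀ w, k w ≠ 0 → w ∈ K) : T.F (m + T.ps k) K (fun w => l w + k w) μ where
  facet := h.facet
  nonneg w := add_nonneg (h.nonneg w) (Nat.cast_nonneg _)
  lsupp w hw := by
    by_cases h0 : k w = 0
    · rw [h0] at hw; exact h.lsupp w (by simpa using hw)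
    · exact hk w h0
  msupp := h.msupp
  repl := by
    rw [toR_add, toR_ps, ← h.repl, ← rep_add]; rfl
  repm := h.repm
  pos w hw h0 := h.pos w hw (by
    have h1 := h.nonneg w
    have h2 : (0 : ℝ) ≤ k w := Nat.cast_nonneg _
    linarith)

lemma F.sub {m : Fin n →₀ ℕ} {K l μ} (h : T.F m K l μ) (k : f.support →₀ ℕ)
    (hk : ∀ w, k w ≠ 0 → w ∈ K) (hl : ∀ w, (k w : ℝ) ≤ l w)
    (hp : ∀ w ∈ K, l w = k w → 0 < μ w) :
    ∃ b, m = b + T.ps k ∧ T.F b K (fun w => l w - k w) μ := by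
  have hrep : rep T.p (fun w => l w - k w) = toR m - toR (T.ps k) := by
    rw [toR_ps, ← h.repl, ← rep_sub]; rfl
  have hle : T.ps k ≤ m := by
    intro i
    have := T.rep_p_nonneg (l := fun w => l w - k w) (fun w => sub_nonneg.mpr (hl w)) i
    rw [hrep] at this
    have h2 : toR (T.ps k) i ≤ toR m i := by simpa using this
    exact Nat.cast_le.mp h2
  have hm : m = (m - T.ps k) + T.ps k := (tsub_add_cancel_of_le hle).symm
  refine ⟨m - T.ps k, hm, h.facet, fun w => sub_nonneg.mpr (hl w), fun w hw => ?_, h.msupp, ?_,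
    h.repm, fun w hw h0 => hp w hw (sub_eq_zero.mp h0)⟩
  · by_cases h0 : k w = 0
    · rw [h0] at hw; exact h.lsupp w (by simpa using hw)
    · exact hk w h0
  · rw [hrep]; nth_rw 1 [hm]; rw [toR_add]; simp

open Classical in
/-- chosen facet -/
noncomputable def FK (m : Fin n →₀ ℕ) : Finset f.support :=
  if h : ∃ K l μ, T.F m K l μ then h.choose else ∅

open Classical in
/-- chosen coordinates -/
noncomputable def Fl (m : Fin n →₀ ℕ) : f.support → ℝ :=
  if h : ∃ K l μ, T.F m K l μ then h.choose_spec.choose else 0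

open Classical in
/-- chosen coordinates of the direction -/
noncomputable def Fm (m : Fin n →₀ ℕ) : f.support → ℝ :=
  if h : ∃ K l μ, T.F m K l μ then h.choose_spec.choose_spec.choose else 0

lemma F_spec (hf : Convenient f) {m : Fin n →₀ ℕ} (hm : m ∈ Gam U) :
    T.F m (T.FK m) (T.Fl m) (T.Fm m) := by
  have h := T.exists_F hf hm
  unfold FK Fl Fm
  rw [dif_pos h, dif_pos h, dif_pos h]
  exact h.choose_spec.choose_spec.choose_spec

/-- the weight -/
noncomputable def wt (m : Fin n →₀ ℕ) : ℝ ×ₗ ℝ := toLex (∑ w, T.Fl m w, ∑ w, T.Fm m w)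

/-- weight shift -/
noncomputable def one : ℝ ×ₗ ℝ := toLex (1, 0)

lemma wt_add_mem (hf : Convenient f) {m : Fin n →₀ ℕ} (hm : m ∈ Gam U) (k : f.support →₀ ℕ)
    (hk : ∀ w, k w ≠ 0 → w ∈ T.FK m) :
    T.FK (m + T.ps k) = T.FK m ∧ (∀ w, T.Fl (m + T.ps k) w = T.Fl m w + k w) ∧
      T.Fm (m + T.ps k) = T.Fm m := by
  have h := F.add T (T.F_spec hf hm) k hk
  obtain ⟨h1, h2, h3⟩ := F.unique T (T.F_spec hf (F.mem T h)) h
  exact ⟨h1, fun w => congrFun h2 w, h3⟩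

lemma wt_single_mem (hf : Convenient f) {m : Fin n →₀ ℕ} (hm : m ∈ Gam U) {w : f.support}
    (hw : w ∈ T.FK m) : T.wt (m + T.N w • (w : Fin n →₀ ℕ)) = T.wt m + one := by
  classical
  have h := T.wt_add_mem hf hm (Finsupp.single w 1) (fun u hu => by
    rw [Finsupp.single_apply] at hu
    split_ifs at hu with h
    · subst h; exact hw
    · exact absurd rfl hu)
  rw [ps_single] at h
  unfold wt one
  rw [h.2.2, Finset.sum_congr rfl fun u _ => h.2.1 u, Finset.sum_add_distrib]
  have : ∑ u, ((Finsupp.single w 1 : f.support →₀ ℕ) u : ℝ) = 1 := by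
    have := dg_single w 1
    unfold dg at this
    exact_mod_cast this
  rw [this, ← toLex_add]; simp

lemma wt_single_notMem (hf : Convenient f) {m : Fin n →₀ ℕ} (hm : m ∈ Gam U) {w : f.support}
    (hw : w ∉ T.FK m) : T.wt (m + T.N w • (w : Fin n →₀ ℕ)) < T.wt m + one := by
  classical
  have h := T.F_spec hf (Gam_add hm (T.N w • (w : Fin n →₀ ℕ)))
  unfold F at h
  rw [toR_add, toR_p] at h
  have h3 := Fst.add_notMem T.hG (T.F_spec hf hm) hw h
  unfold wt one
  rw [← toLex_add]
  simpa using h3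

lemma wt_single_le (hf : Convenient f) {m : Fin n →₀ ℕ} (hm : m ∈ Gam U) (w : f.support) :
    T.wt (m + T.N w • (w : Fin n →₀ ℕ)) ≤ T.wt m + one := by
  by_cases hw : w ∈ T.FK m
  · exact (T.wt_single_mem hf hm hw).le
  · exact (T.wt_single_notMem hf hm hw).le

lemma finite_wt (hf : Convenient f) (c : ℝ ×ₗ ℝ) : {m | m ∈ Gam U ∧ T.wt m < c}.Finite := by
  refine (finite_nu_le hf ((∑ w, (T.N w : ℝ)) * (ofLex c).1)).subset ?_
  rintro m ⟨hm, hc⟩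
  have hF := T.F_spec hf hm
  have h1 : ∑ w, T.Fl m w ≤ (ofLex c).1 := by
    have : T.wt m < toLex (ofLex c) := hc
    unfold wt at this
    rcases (Prod.Lex.toLex_lt_toLex.mp this) with h | h
    · exact h.le
    · exact h.1.le
  show nu f (toR m) ≤ _
  rw [F.nu T hF]
  refine le_trans ?_ (mul_le_mul_of_nonneg_left h1 (Finset.sum_nonneg fun w _ => Nat.cast_nonneg _))
  rw [Finset.sum_mul]
  exact Finset.sum_le_sum fun w _ => mul_le_mul_of_nonneg_left
    (Finset.single_le_sum (fun w _ => hF.nonneg w) (Finset.mem_univ w)) (Nat.cast_nonneg _)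

lemma cnd_mem (hf : Convenient f) {m : Fin n →₀ ℕ} (hm : m ∈ Gam U) {w : f.support}
    (hw : w ∈ T.FK m) : cnd (Finsupp.single w (T.N w)) m := by
  classical
  have h := F.add T (T.F_spec hf hm) (Finsupp.single w 1) (fun u hu => by
    rw [Finsupp.single_apply] at hu
    split_ifs at hu with h
    · subst h; exact hw
    · exact absurd rfl hu)
  unfold cnd
  rw [sh_single, dg_single, F.nu T (T.F_spec hf hm), ← ps_single, F.nu T h]
  simp only [mul_add, Finset.sum_add_distrib]
  congr 1
  rw [Finset.sum_eq_single w]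
  · simp
  · intro v _ h; rw [Finsupp.single_apply, if_neg (Ne.symm h)]; simp
  · simp

/-- box condition -/
def Bx (m : Fin n →₀ ℕ) : Prop := m ∈ Gam U ∧
  ∀ w ∈ T.FK m, (0 < T.Fm m w → T.Fl m w < 1) ∧ (T.Fm m w ≤ 0 → T.Fl m w ≤ 1)

lemma exists_box (hf : Convenient f) {m : Fin n →₀ ℕ} (hm : m ∈ Gam U) :
    ∃ b, ∃ k : f.support →₀ ℕ, T.Bx b ∧ (∀ w, k w ≠ 0 → w ∈ T.FK b) ∧ m = b + T.ps k := by
  classical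
  have hF := T.F_spec hf hm
  let k : f.support →₀ ℕ := Finsupp.equivFunOnFinite.symm fun w =>
    if 0 < T.Fm m w then ⌊T.Fl m w⌋₊ else ⌈T.Fl m w⌉₊ - 1
  have hk : ∀ w, k w = if 0 < T.Fm m w then ⌊T.Fl m w⌋₊ else ⌈T.Fl m w⌉₊ - 1 := fun w => rfl
  have hK0 : ∀ w, w ∉ T.FK m → T.Fl m w = 0 := fun w hw => by
    by_contra h; exact hw (hF.lsupp w h)
  have hpos : ∀ w ∈ T.FK m, ¬ 0 < T.Fm m w → 0 < T.Fl m w := fun w hw h =>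
    lt_of_le_of_ne (hF.nonneg w) fun h0 => h (hF.pos w hw h0.symm)
  have hceil : ∀ w ∈ T.FK m, ¬ 0 < T.Fm m w →
      ((⌈T.Fl m w⌉₊ - 1 : ℕ) : ℝ) = (⌈T.Fl m w⌉₊ : ℝ) - 1 := fun w hw h => by
    have : 1 ≤ ⌈T.Fl m w⌉₊ := Nat.one_le_iff_ne_zero.mpr (Nat.ceil_pos.mpr (hpos w hw h)).ne'
    push_cast [this]; rfl
  have hks : ∀ w, k w ≠ 0 → w ∈ T.FK m := by
    intro w hw
    by_contra h
    apply hw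
    rw [hk, hK0 w h]; simp
  obtain ⟨b, hb, hbF⟩ := F.sub T hF k hks (fun w => by
      by_cases hw : w ∈ T.FK m
      · rw [hk]; split_ifs with h
        · exact Nat.floor_le (hF.nonneg w)
        · rw [hceil w hw h]; linarith [Nat.ceil_lt_add_one (hF.nonneg w)]
      · have : k w = 0 := by by_contra h; exact hw (hks w h)
        rw [this]; simpa using hF.nonneg w)
    (fun w hw h => by
      by_contra h'
      rw [hk, if_neg h', hceil w hw h'] at h
      linarith [Nat.ceil_lt_add_one (hF.nonneg w)])
  obtain ⟨e1, e2, e3⟩ := F.unique T (T.F_spec hf (F.mem T hbF)) hbF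
  refine ⟨b, k, ⟨F.mem T hbF, fun w hw => ?_⟩, fun w hw => e1 ▸ hks w hw, hb⟩
  rw [e1] at hw
  rw [e2, e3]
  constructor
  · intro h
    simp only [hk, if_pos h]
    linarith [Nat.lt_floor_add_one (T.Fl m w)]
  · intro h
    simp only [hk, if_neg h.not_gt, hceil w hw h.not_gt]
    linarith [Nat.le_ceil (T.Fl m w)]

lemma box_unique (hf : Convenient f) {b b' : Fin n →₀ ℕ} {k k' : f.support →₀ ℕ} (hb : T.Bx b)
    (hb' : T.Bx b') (hk : ∀ w, k w ≠ 0 → w ∈ T.FK b) (hk' : ∀ w, k' w ≠ 0 → w ∈ T.FK b')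
    (h : b + T.ps k = b' + T.ps k') : b = b' ∧ k = k' := by
  obtain ⟨e1, e2, e3⟩ := T.wt_add_mem hf hb.1 k hk
  obtain ⟨e1', e2', e3'⟩ := T.wt_add_mem hf hb'.1 k' hk'
  rw [h] at e1 e2 e3
  have hK : T.FK b = T.FK b' := e1.symm.trans e1'
  have hM : T.Fm b = T.Fm b' := e3.symm.trans e3'
  have hkk : k = k' := by
    ext w
    by_cases hw : w ∈ T.FK b
    · have hw' : w ∈ T.FK b' := hK ▸ hw
      have h1 := hb.2 w hw
      have h2 := hb'.2 w hw'
      have h3 := (e2 w).symm.trans (e2' w)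
      have h4 := (T.F_spec hf hb.1).pos w hw
      have h5 := (T.F_spec hf hb'.1).pos w hw'
      have n4 := (T.F_spec hf hb.1).nonneg w
      have n5 := (T.F_spec hf hb'.1).nonneg w
      rw [hM] at h1 h4
      by_contra hne
      rcases lt_or_gt_of_ne hne with hlt | hlt
      · have h6 : (k w : ℝ) + 1 ≤ k' w := by exact_mod_cast hlt
        rcases lt_or_ge 0 (T.Fm b' w) with hm | hm
        · have := h1.1 hm; linarith
        · have := h1.2 hm
          have h7 : T.Fl b' w = 0 := by linarith
          exact absurd (h5 h7) hm.not_gt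
      · have h6 : (k' w : ℝ) + 1 ≤ k w := by exact_mod_cast hlt
        rcases lt_or_ge 0 (T.Fm b' w) with hm | hm
        · have := h2.1 hm; linarith
        · have := h2.2 hm
          have h7 : T.Fl b w = 0 := by linarith
          exact absurd (h4 h7) hm.not_gt
    · have h1 : k w = 0 := by by_contra h; exact hw (hk w h)
      have h2 : k' w = 0 := by by_contra h; exact hw (hK ▸ hk' w h)
      rw [h1, h2]
  refine ⟨?_, hkk⟩
  rw [hkk] at h
  exact add_right_cancel h

end Tri
end Weights
end ToricNewton
end

section
open MvPolynomial Filter Topology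

namespace ToricNewton
set_option linter.unusedSectionVars false

/-! ### Freeness -/
section Free

lemma exists_inverse {W : Type*} [Fintype W] {n : ℕ} (K : Finset W) (hK : K.card = n) :
    ∃ D : W → Fin n → ℂ, (∀ w, w ∉ K → D w = 0) ∧
      (∀ w ∈ K, ∀ w' ∈ K, w ≠ w' → ∑ i : Fin n, D w i * ((Fintype.equivFin W w' : ℕ) : ℂ) ^ (i : ℕ) = 0) ∧
      (∀ w ∈ K, ∑ i : Fin n, D w i * ((Fintype.equivFin W w : ℕ) : ℂ) ^ (i : ℕ) = 1) ∧
      ∀ i j : Fin n, ∑ w, ((Fintype.equivFin W w : ℕ) : ℂ) ^ (i : ℕ) * D w j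
        = if i = j then 1 else 0 := by
  classical
  let e : K ≃ Fin n := Fintype.equivFinOfCardEq (by simp [hK])
  let t : Fin n → ℂ := fun j => ((Fintype.equivFin W (e.symm j) : ℕ) : ℂ)
  have ht : Function.Injective t := by
    intro i j h
    have h1 : (Fintype.equivFin W (e.symm i) : ℕ) = (Fintype.equivFin W (e.symm j) : ℕ) := by
      exact Nat.cast_injective (R := ℂ) h
    exact e.symm.injective (Subtype.ext ((Fintype.equivFin W).injective (Fin.ext h1)))
  let A : Matrix (Fin n) (Fin n) ℂ := (Matrix.vandermonde t).transpose
  have hdet : IsUnit A.det := by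
    rw [Matrix.det_transpose]
    exact isUnit_iff_ne_zero.mpr (Matrix.det_vandermonde_ne_zero_iff.mpr ht)
  have h1 : A⁻¹ * A = 1 := Matrix.nonsing_inv_mul _ hdet
  have h2 : A * A⁻¹ = 1 := Matrix.mul_nonsing_inv _ hdet
  have hA : ∀ (i : Fin n) (w : K), ((Fintype.equivFin W (w : W) : ℕ) : ℂ) ^ (i : ℕ) = A i (e w) := by
    intro i w
    simp [A, Matrix.vandermonde_apply, t]
  let D : W → Fin n → ℂ := fun w i => if h : w ∈ K then A⁻¹ (e ⟨w, h⟩) i else 0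
  have hD0 : ∀ w, w ∉ K → D w = 0 := fun w hw => by ext i; simp [D, hw]
  have hD1 : ∀ (w : K) i, D w i = A⁻¹ (e w) i := fun w i => by simp [D]
  refine ⟨D, hD0, fun w hw w' hw' hne => ?_, fun w hw => ?_, fun i j => ?_⟩
  · have := congrFun (congrFun h1 (e ⟨w, hw⟩)) (e ⟨w', hw'⟩)
    rw [Matrix.mul_apply, Matrix.one_apply_ne (fun h => hne (by simpa using h))] at this
    refine Eq.trans ?_ this
    exact Finset.sum_congr rfl fun i _ => congrArg₂ _ (hD1 ⟨w, hw⟩ i) (hA i ⟨w', hw'⟩)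
  · have := congrFun (congrFun h1 (e ⟨w, hw⟩)) (e ⟨w, hw⟩)
    rw [Matrix.mul_apply, Matrix.one_apply_eq] at this
    refine Eq.trans ?_ this
    exact Finset.sum_congr rfl fun i _ => congrArg₂ _ (hD1 ⟨w, hw⟩ i) (hA i ⟨w, hw⟩)
  · have := congrFun (congrFun h2 i) j
    rw [Matrix.mul_apply, Matrix.one_apply] at this
    rw [← this, ← e.sum_comp]
    rw [← Finset.sum_subset (Finset.subset_univ K), ← Finset.sum_coe_sort K]
    · exact Finset.sum_congr rfl fun w _ => congrArg₂ _ (hA i w) (hD1 w j)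
    · intro w _ hw; rw [hD0 w hw]; simp

variable {n : ℕ} {f : MvPolynomial (Fin n) ℂ} {U : Finset (Fin n)}

namespace Tri
variable (T : Tri f U)

open Classical in
/-- inverse Vandermonde matrices -/
noncomputable def D (_T : Tri f U) (K : Finset f.support) : f.support → Fin n → ℂ :=
  if h : K.card = n then (exists_inverse K h).choose else 0

/-- the system of parameters -/
noncomputable def th (i : Fin n) : MvPolynomial f.support ℂ :=
  ∑ w : f.support, monomial (Finsupp.single w (T.N w))
    (((Fintype.equivFin f.support w : ℕ) : ℂ) ^ (i : ℕ))

/-- the dual linear forms -/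
noncomputable def psi (K : Finset f.support) (w : f.support) : MvPolynomial (Fin n) ℂ :=
  ∑ i, T.D K w i • X i

lemma aeval_psi (K : Finset f.support) (w : f.support) :
    aeval T.th (T.psi K w) = ∑ w' : f.support, monomial (Finsupp.single w' (T.N w'))
      (∑ i : Fin n, T.D K w i * ((Fintype.equivFin f.support w' : ℕ) : ℂ) ^ (i : ℕ)) := by
  unfold psi th
  simp only [map_sum, map_smul, aeval_X, Finset.smul_sum, smul_monomial, smul_eq_mul]
  rw [Finset.sum_comm]

lemma psi_notMem {K : Finset f.support} (hK : K.card = n) {w : f.support} (hw : w ∉ K) :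
    T.psi K w = 0 := by
  unfold psi D
  rw [dif_pos hK, (exists_inverse K hK).choose_spec.1 w hw]
  simp

lemma sum_psi {K : Finset f.support} (hK : K.card = n) (i : Fin n) :
    ∑ w : f.support, ((((Fintype.equivFin f.support w : ℕ) : ℂ) ^ (i : ℕ)) • T.psi K w) = X i := by
  unfold psi D
  rw [dif_pos hK]
  simp only [Finset.smul_sum, smul_smul]
  rw [Finset.sum_comm]
  simp only [← Finset.sum_smul, (exists_inverse K hK).choose_spec.2.2.2]
  simp

/-- exponents of smaller weight -/
def low (c : ℝ ×ₗ ℝ) : Set (Fin n →₀ ℕ) := {m | m ∈ Gam U ∧ T.wt m < c}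

lemma aeval_psi_low (hf : Convenient f) (K : Finset f.support) (w : f.support) (c : ℝ ×ₗ ℝ)
    {x : AMod hf} (hx : toP hf x ∈ suppIn (T.low c)) :
    toP hf (aeval T.th (T.psi K w) • x) ∈ suppIn (T.low (c + one)) := by
  rw [aeval_psi, Finset.sum_smul, map_sum]
  refine Submodule.sum_mem _ fun w' _ => ?_
  rw [toP_smul]
  refine act_mem hf _ (S := T.low c) (S' := T.low (c + one)) (fun l hl m hm _ => ?_) hx
  have hl' := Finset.mem_singleton.mp (support_monomial_subset hl)
  subst hl'
  rw [sh_single]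
  exact ⟨Gam_add hm.1 _, (T.wt_single_le hf hm.1 w').trans_lt (add_lt_add_left hm.2 _)⟩

lemma aeval_psi_em (hf : Convenient f) {m : Fin n →₀ ℕ} (hm : m ∈ Gam U) {w : f.support}
    (hw : w ∈ T.FK m) :
    toP hf (aeval T.th (T.psi (T.FK m) w) • em hf m) - monomial (m + T.N w • (w : Fin n →₀ ℕ)) 1
      ∈ suppIn (T.low (T.wt m + one)) := by
  classical
  have hK : (T.FK m).card = n := by simpa using (T.F_spec hf hm).facet.2
  have hD := (exists_inverse (T.FK m) hK).choose_spec
  have hD' : T.D (T.FK m) = (exists_inverse (T.FK m) hK).choose := by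
    unfold D; rw [dif_pos hK]
  rw [aeval_psi, Finset.sum_smul, map_sum, ← Finset.add_sum_erase _ _ (Finset.mem_univ w),
    monomial_smul_em, if_pos (T.cnd_mem hf hm hw), hD', hD.2.2.1 w hw, sh_single, one_smul]
  rw [em, LinearEquiv.apply_symm_apply, add_sub_cancel_left]
  refine Submodule.sum_mem _ fun w' hw' => ?_
  by_cases h : w' ∈ T.FK m
  · rw [hD.2.1 w hw w' h (Finset.ne_of_mem_erase hw').symm]; simp
  · rw [monomial_smul_em]
    split_ifs
    · rw [map_smul, em, LinearEquiv.apply_symm_apply, sh_single]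
      exact Submodule.smul_mem _ _ (monomial_mem_suppIn (S := T.low (T.wt m + one))
        (And.intro (Gam_add hm _) (T.wt_single_notMem hf hm h)) _)
    · simp

/-- monomials in the dual linear forms -/
noncomputable def Psi (K : Finset f.support) (k : f.support →₀ ℕ) : MvPolynomial (Fin n) ℂ :=
  aeval (T.psi K) (monomial k 1 : MvPolynomial f.support ℂ)

lemma Psi_em (hf : Convenient f) {b : Fin n →₀ ℕ} (hb : b ∈ Gam U) (d : ℕ) :
    ∀ k : f.support →₀ ℕ, dg k = d → (∀ w, k w ≠ 0 → w ∈ T.FK b) →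
    toP hf (aeval T.th (T.Psi (T.FK b) k) • em hf b) - monomial (b + T.ps k) 1
      ∈ suppIn (T.low (T.wt (b + T.ps k))) := by
  classical
  induction d with
  | zero =>
    intro k hk _
    have : k = 0 := by
      ext w
      have := (Finset.sum_eq_zero_iff.mp hk) w (Finset.mem_univ w)
      simpa using this
    subst this
    have h1 : T.Psi (T.FK b) 0 = 1 := by
      unfold Psi; simp
    rw [h1, map_one, one_smul, ps_zero, add_zero, em, LinearEquiv.apply_symm_apply, sub_self]
    exact Submodule.zero_mem _
  | succ d ih =>
    intro k hk hks
    have hex : ∃ w, k w ≠ 0 := by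
      by_contra h
      push Not at h
      have : dg k = 0 := by unfold dg; simp [h]
      omega
    obtain ⟨w, hw⟩ := hex
    obtain ⟨k', rfl⟩ : ∃ k', k = k' + Finsupp.single w 1 :=
      ⟨k - Finsupp.single w 1, (tsub_add_cancel_of_le (by
        rw [Finsupp.single_le_iff]; omega)).symm⟩
    rw [dg_add, dg_single] at hk
    have hks' : ∀ w, k' w ≠ 0 → w ∈ T.FK b := fun w' h => hks w' (by
      simp only [Finsupp.coe_add, Pi.add_apply]; omega)
    have h1 := ih k' (by omega) hks'
    obtain ⟨e1, -, -⟩ := T.wt_add_mem hf hb k' hks'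
    have hm : b + T.ps k' ∈ Gam U := Gam_add hb _
    have hwK : w ∈ T.FK (b + T.ps k') := e1 ▸ hks w hw
    have h2 := T.aeval_psi_em hf hm hwK
    have h3 : toP hf ((aeval T.th (T.Psi (T.FK b) k') • em hf b) - em hf (b + T.ps k')) ∈
        suppIn (T.low (T.wt (b + T.ps k'))) := by
      rw [map_sub]; exact h1
    have h4 := T.aeval_psi_low hf (T.FK b) w _ h3
    have hP : T.Psi (T.FK b) (k' + Finsupp.single w 1) = T.psi (T.FK b) w * T.Psi (T.FK b) k' := by
      unfold Psi
      rw [monomial_add_single, pow_one, map_mul, aeval_X, mul_comm]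
    rw [hP, map_mul, mul_smul, ps_add, ps_single, ← add_assoc, T.wt_single_mem hf hm hwK]
    rw [smul_sub, map_sub] at h4
    rw [e1] at h2
    have := Submodule.add_mem _ h4 h2
    rwa [sub_add_sub_cancel] at this

/-- the comparison map from a free module -/
noncomputable def Th (hf : Convenient f) :
    ({b // T.Bx b} →₀ MvPolynomial (Fin n) ℂ) →ₗ[ℂ] AMod hf :=
  Finsupp.lsum ℂ fun b => ((LinearMap.toSpanSingleton (MvPolynomial f.support ℂ) (AMod hf)
    (em hf b.1)).restrictScalars ℂ) ∘ₗ (aeval T.th : MvPolynomial (Fin n) ℂ →ₐ[ℂ] _).toLinearMap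

lemma Th_single (hf : Convenient f) (b : {b // T.Bx b}) (q : MvPolynomial (Fin n) ℂ) :
    T.Th hf (Finsupp.single b q) = aeval T.th q • em hf b.1 := by
  simp [Th]

lemma Th_X (hf : Convenient f) (i : Fin n) (P : {b // T.Bx b} →₀ MvPolynomial (Fin n) ℂ) :
    T.Th hf ((X i : MvPolynomial (Fin n) ℂ) • P) = T.th i • T.Th hf P := by
  induction P using Finsupp.induction_linear with
  | zero => simp
  | add P Q hP hQ => rw [smul_add, map_add, hP, hQ, map_add, smul_add]
  | single b q =>
    rw [Finsupp.smul_single, Th_single, Th_single, smul_eq_mul, map_mul, aeval_X, mul_smul]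

lemma em_mem_JU (hf : Convenient f) {m : Fin n →₀ ℕ} (hm : m ∈ Gam U) : em hf m ∈ JU hf U :=
  monomial_mem_suppIn hm _

lemma Th_mem (hf : Convenient f) (P : {b // T.Bx b} →₀ MvPolynomial (Fin n) ℂ) :
    T.Th hf P ∈ JU hf U := by
  induction P using Finsupp.induction_linear with
  | zero => simp
  | add P Q hP hQ => rw [map_add]; exact Submodule.add_mem _ hP hQ
  | single b q => rw [Th_single]; exact Submodule.smul_mem _ _ (em_mem_JU hf b.2.1)

lemma exists_Q (hf : Convenient f) : ∃ Q : Gam U → ({b // T.Bx b} →₀ MvPolynomial (Fin n) ℂ),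
    (∀ m, toP hf (T.Th hf (Q m)) - monomial m.1 1 ∈ suppIn (T.low (T.wt m.1))) ∧
    Submodule.span ℂ (Set.range Q) = ⊤ := by
  classical
  have h := fun m : Gam U => T.exists_box hf m.2
  choose b k hb hk hm using h
  refine ⟨fun m => Finsupp.single ⟨b m, hb m⟩ (T.Psi (T.FK (b m)) (k m)), fun m => ?_, ?_⟩
  · rw [Th_single]
    have := T.Psi_em hf (hb m).1 _ (k m) rfl (hk m)
    rwa [← hm m] at this
  · rw [eq_top_iff]
    rintro P -
    induction P using Finsupp.induction_linear with
    | zero => simp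
    | add P Q hP hQ => exact Submodule.add_mem _ hP hQ
    | single b' q =>
      have hK : (T.FK b'.1).card = n := by simpa using (T.F_spec hf b'.2.1).facet.2
      have hsurj : Function.Surjective (aeval (T.psi (T.FK b'.1)) :
          MvPolynomial f.support ℂ →ₐ[ℂ] MvPolynomial (Fin n) ℂ) := by
        intro q
        refine ⟨aeval (fun i : Fin n => ∑ w : f.support,
          ((((Fintype.equivFin f.support w : ℕ) : ℂ) ^ (i : ℕ)) • (X w : MvPolynomial f.support ℂ))) q, ?_⟩
        rw [← AlgHom.comp_apply]
        have : (aeval (T.psi (T.FK b'.1))).comp (aeval (fun i : Fin n => ∑ w : f.support,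
          ((((Fintype.equivFin f.support w : ℕ) : ℂ) ^ (i : ℕ)) • (X w : MvPolynomial f.support ℂ))))
            = AlgHom.id ℂ _ := by
          ext1 i
          simp only [AlgHom.comp_apply, aeval_X, map_sum, map_smul, AlgHom.id_apply]
          exact T.sum_psi hK i
        rw [this]; rfl
      obtain ⟨r, rfl⟩ := hsurj q
      induction r using MvPolynomial.induction_on' with
      | add p q hp hq => rw [map_add, Finsupp.single_add]; exact Submodule.add_mem _ hp hq
      | monomial k' c =>
        have : (monomial k' c : MvPolynomial f.support ℂ) = c • monomial k' 1 := by
          rw [smul_monomial]; simp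
        rw [this, map_smul, ← Finsupp.smul_single]
        refine Submodule.smul_mem _ _ ?_
        by_cases hk' : ∀ w, k' w ≠ 0 → w ∈ T.FK b'.1
        · refine Submodule.subset_span ⟨⟨b'.1 + T.ps k', Gam_add b'.2.1 _⟩, ?_⟩
          obtain ⟨e1, e2⟩ := T.box_unique hf (hb ⟨b'.1 + T.ps k', Gam_add b'.2.1 _⟩) b'.2
            (hk _) hk' (hm ⟨b'.1 + T.ps k', Gam_add b'.2.1 _⟩).symm
          simp only [e2, e1]
          rfl
        · push Not at hk'
          obtain ⟨w, hw, hwK⟩ := hk'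
          have : aeval (T.psi (T.FK b'.1)) (monomial k' 1 : MvPolynomial f.support ℂ) = 0 := by
            rw [aeval_monomial, Finsupp.prod_fintype _ _ (by simp),
              Finset.prod_eq_zero (Finset.mem_univ w), mul_zero]
            rw [T.psi_notMem hK hwK, zero_pow hw]
          rw [this, Finsupp.single_zero]
          exact Submodule.zero_mem _

lemma em_mem_range (hf : Convenient f) (d : ℕ) : ∀ m, m ∈ Gam U →
    (T.low (T.wt m)).ncard = d → em hf m ∈ LinearMap.range (T.Th hf) := by
  obtain ⟨Q, hQ, -⟩ := T.exists_Q hf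
  induction d using Nat.strong_induction_on with
  | _ d ih =>
    intro m hm hd
    have h1 : suppIn (T.low (T.wt m)) ≤ (LinearMap.range (T.Th hf)).map (toP hf).toLinearMap := by
      refine suppIn_le fun m' hm' => ⟨em hf m', ?_, by simp [em]⟩
      refine ih _ ?_ m' hm'.1 rfl
      rw [← hd]
      refine Set.ncard_lt_ncard ⟨fun x hx => ⟨hx.1, hx.2.trans hm'.2⟩, fun h => ?_⟩
        (T.finite_wt hf _)
      exact lt_irrefl _ (h hm').2
    obtain ⟨y, hy, hy'⟩ := h1 (hQ ⟨m, hm⟩)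
    have : em hf m = T.Th hf (Q ⟨m, hm⟩) - y := by
      apply (toP hf).injective
      rw [map_sub, show toP hf y = _ from hy', em, LinearEquiv.apply_symm_apply, sub_sub_cancel]
    rw [this]
    exact Submodule.sub_mem _ ⟨_, rfl⟩ hy

lemma Th_surj (hf : Convenient f) {x : AMod hf} (hx : x ∈ JU hf U) : ∃ P, T.Th hf P = x := by
  have h1 : suppIn (Gam U) ≤ (LinearMap.range (T.Th hf)).map (toP hf).toLinearMap :=
    suppIn_le fun m' hm' => ⟨em hf m', T.em_mem_range hf _ m' hm' rfl, by simp [em]⟩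
  obtain ⟨y, ⟨P, hP⟩, hy⟩ := h1 hx
  exact ⟨P, hP.trans ((toP hf).injective hy)⟩

lemma Th_inj (hf : Convenient f) : Function.Injective (T.Th hf) := by
  classical
  rw [← LinearMap.ker_eq_bot, LinearMap.ker_eq_bot']
  intro P hP
  obtain ⟨Q, hQ, hspan⟩ := T.exists_Q hf
  have hPs : P ∈ Submodule.span ℂ (Set.range Q) := by rw [hspan]; trivial
  obtain ⟨a, rfl⟩ := (Finsupp.mem_span_range_iff_exists_finsupp).mp hPs
  by_cases ha : a.support = ∅
  · rw [Finsupp.support_eq_empty.mp ha]; simp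
  exfalso
  obtain ⟨m, hm, hmax⟩ := a.support.exists_max_image (fun m => T.wt m.1)
    (Finset.nonempty_iff_ne_empty.mpr ha)
  have h0 : coeff m.1 (toP hf (T.Th hf (a.sum fun i c => c • Q i))) = 0 := by rw [hP]; simp
  apply Finsupp.mem_support_iff.mp hm
  rw [← h0, Finsupp.sum, map_sum, map_sum, coeff_sum, Finset.sum_eq_single m]
  · have h1 : coeff m.1 (toP hf (T.Th hf (Q m)) - monomial m.1 1) = 0 := by
      by_contra h
      exact lt_irrefl _ (hQ m m.1 (mem_support_iff.mpr h)).2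
    rw [coeff_sub, coeff_monomial, if_pos rfl, sub_eq_zero] at h1
    rw [map_smul, map_smul, coeff_smul, h1]; simp
  · intro m' hm' hne
    have h1 : coeff m.1 (toP hf (T.Th hf (Q m')) - monomial m'.1 1) = 0 := by
      by_contra h
      exact lt_irrefl _ ((hQ m' m.1 (mem_support_iff.mpr h)).2.trans_le (hmax m' hm'))
    rw [coeff_sub, coeff_monomial, if_neg (fun h => hne (Subtype.ext h)), sub_zero] at h1
    rw [map_smul, map_smul, coeff_smul, h1]; simp
  · intro h; exact absurd hm h

end Tri
end Free
end ToricNewton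
end

section
open MvPolynomial

namespace ToricNewton
set_option linter.unusedSectionVars false

/-! ### Regular sequences and acyclicity -/
section Acyc
variable {n : ℕ} {f : MvPolynomial (Fin n) ℂ} {U : Finset (Fin n)}

/-- coordinate ideals -/
noncomputable def Ik (n k : ℕ) : Ideal (MvPolynomial (Fin n) ℂ) :=
  Ideal.span (X '' {j : Fin n | (j : ℕ) < k})

lemma Ik_zero : Ik n 0 = ⊥ := by simp [Ik]

lemma Ik_succ (k : ℕ) (hk : k < n) (q : MvPolynomial (Fin n) ℂ) :
    q ∈ Ik n (k + 1) ↔ ∃ a ∈ Ik n k, ∃ b, q = a + X ⟨k, hk⟩ * b := by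
  have hset : {j : Fin n | (j : ℕ) < k + 1} = insert ⟨k, hk⟩ {j : Fin n | (j : ℕ) < k} := by
    ext j
    simp only [Set.mem_ofPred_eq, Set.mem_insert_iff, Fin.ext_iff]
    omega
  unfold Ik
  rw [hset, Set.image_insert_eq, Ideal.mem_span_insert]
  constructor
  · rintro ⟨a, z, hz, rfl⟩
    exact ⟨z, hz, a, by ring⟩
  · rintro ⟨a, ha, b, rfl⟩
    exact ⟨b, a, ha, by ring⟩

lemma Ik_reg (k : ℕ) (hk : k < n) (q : MvPolynomial (Fin n) ℂ)
    (h : X ⟨k, hk⟩ * q ∈ Ik n k) : q ∈ Ik n k := by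
  classical
  unfold Ik at *
  rw [mem_ideal_span_X_image] at *
  intro m hm
  obtain ⟨i, hi, hi'⟩ := h (Finsupp.single ⟨k, hk⟩ 1 + m) (by
    rw [mem_support_iff, coeff_X_mul]; exact mem_support_iff.mp hm)
  refine ⟨i, hi, ?_⟩
  have hne : (⟨k, hk⟩ : Fin n) ≠ i := fun h => by
    subst h; exact lt_irrefl k hi
  simpa [Finsupp.single_apply, hne] using hi'

namespace Tri
variable (T : Tri f U)

/-- the parameters indexed by naturals -/
noncomputable def thN (k : ℕ) : MvPolynomial f.support ℂ := if h : k < n then T.th ⟨k, h⟩ else 0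

/-- the filtration by parameters -/
noncomputable def NN (hf : Convenient f) : ℕ → Submodule (MvPolynomial f.support ℂ) (JU hf U)
  | 0 => ⊥
  | k + 1 => NN hf k ⊔ LinearMap.range (LinearMap.lsmul (MvPolynomial f.support ℂ) (JU hf U) (T.thN k))

lemma NN_succ (hf : Convenient f) (k : ℕ) (x : JU hf U) :
    x ∈ T.NN hf (k + 1) ↔ ∃ a ∈ T.NN hf k, ∃ b, x = a + T.thN k • b := by
  rw [NN, Submodule.mem_sup]
  constructor
  · rintro ⟨y, hy, z, ⟨b, rfl⟩, rfl⟩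
    exact ⟨y, hy, b, rfl⟩
  · rintro ⟨y, hy, b, rfl⟩
    exact ⟨y, hy, _, ⟨b, rfl⟩, rfl⟩

lemma mem_NN (hf : Convenient f) (k : ℕ) (hk : k ≤ n) (x : JU hf U) :
    x ∈ T.NN hf k ↔ ∃ P, T.Th hf P = x ∧ ∀ b, P b ∈ Ik n k := by
  induction k generalizing x with
  | zero =>
    rw [NN, Submodule.mem_bot, Ik_zero]
    constructor
    · rintro rfl
      exact ⟨0, by simp, by simp⟩
    · rintro ⟨P, hP, h0⟩
      have : P = 0 := by ext1 b; simpa using h0 b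
      subst this
      apply Subtype.ext
      rw [← hP]; simp
  | succ k ih =>
    have hk' : k < n := hk
    have hth : T.thN k = T.th ⟨k, hk'⟩ := by unfold thN; rw [dif_pos hk']
    rw [NN_succ]
    constructor
    · rintro ⟨a, ha, b, rfl⟩
      obtain ⟨P, hP, hPI⟩ := (ih hk'.le a).mp ha
      obtain ⟨Q, hQ⟩ := T.Th_surj hf b.2
      refine ⟨P + (X ⟨k, hk'⟩ : MvPolynomial (Fin n) ℂ) • Q, ?_, fun b => ?_⟩
      · rw [map_add, Th_X, hP, hQ, hth]; rfl
      · rw [Ik_succ k hk']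
        exact ⟨P b, hPI b, Q b, rfl⟩
    · rintro ⟨P, hP, hPI⟩
      choose a ha c hc using fun b => (Ik_succ k hk' (P b)).mp (hPI b)
      classical
      let A : {b // T.Bx b} →₀ MvPolynomial (Fin n) ℂ :=
        Finsupp.onFinset P.support (fun b => if P b = 0 then 0 else a b) (fun b hb => by
          rw [Finsupp.mem_support_iff]; intro h; simp [h] at hb)
      let B : {b // T.Bx b} →₀ MvPolynomial (Fin n) ℂ :=
        Finsupp.onFinset P.support (fun b => if P b = 0 then 0 else c b) (fun b hb => by
          rw [Finsupp.mem_support_iff]; intro h; simp [h] at hb)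
      have hAB : P = A + (X ⟨k, hk'⟩ : MvPolynomial (Fin n) ℂ) • B := by
        ext1 b
        simp only [A, B, Finsupp.coe_add, Pi.add_apply, Finsupp.onFinset_apply,
          Finsupp.coe_smul, Pi.smul_apply, smul_eq_mul]
        split_ifs with h
        · rw [h]; simp
        · exact hc b
      refine ⟨⟨T.Th hf A, T.Th_mem hf A⟩, (ih hk'.le _).mpr ⟨A, rfl, fun b => ?_⟩,
        ⟨T.Th hf B, T.Th_mem hf B⟩, Subtype.ext ?_⟩
      · simp only [A, Finsupp.onFinset_apply]
        split_ifs
        · exact Submodule.zero_mem _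
        · exact ha b
      · rw [← hP, hAB, map_add, Th_X, hth]; rfl

lemma NN_reg (hf : Convenient f) (k : ℕ) (hk : k < n) (x : JU hf U)
    (h : T.thN k • x ∈ T.NN hf k) : x ∈ T.NN hf k := by
  have hth : T.thN k = T.th ⟨k, hk⟩ := by unfold thN; rw [dif_pos hk]
  rw [mem_NN T hf k hk.le] at *
  obtain ⟨P, hP, hPI⟩ := h
  obtain ⟨Q, hQ⟩ := T.Th_surj hf x.2
  refine ⟨Q, hQ, fun b => Ik_reg k hk _ ?_⟩
  have : (X ⟨k, hk⟩ : MvPolynomial (Fin n) ℂ) • Q = P := by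
    apply T.Th_inj hf
    rw [Th_X, hP, hQ, hth]; rfl
  rw [← smul_eq_mul, ← Finsupp.smul_apply, this]
  exact hPI b

end Tri

/-- the ideal of relations -/
noncomputable def aI (hf : Convenient f) : Ideal (MvPolynomial f.support ℂ) :=
  Ideal.span (Set.range (Fsym f)) ⊔ Module.annihilator (MvPolynomial f.support ℂ) (AMod hf)

lemma thN_nil (T : Tri f U) (hf : Convenient f)
    (hrad : ∀ w : f.support, (X w : MvPolynomial f.support ℂ) ∈ (aI hf).radical) (k : ℕ) :
    ∃ e : ℕ, ∃ r : Fin n → MvPolynomial f.support ℂ, ∀ a : JU hf U,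
      T.thN k ^ e • a = ∑ j, r j • Fsym f j • a := by
  have h1 : T.thN k ∈ (aI hf).radical := by
    unfold Tri.thN
    split_ifs
    · unfold Tri.th
      refine Ideal.sum_mem _ fun w _ => ?_
      rw [← C_mul_X_pow_eq_monomial]
      exact Ideal.mul_mem_left _ _ (Ideal.pow_mem_of_mem _ (hrad w) _ (T.hN w))
    · exact Ideal.zero_mem _
  obtain ⟨e, he⟩ := h1
  obtain ⟨y, hy, z, hz, hyz⟩ := Submodule.mem_sup.mp he
  obtain ⟨r, hr⟩ := (Ideal.mem_span_range_iff_exists_fun).mp hy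
  refine ⟨e, r, fun a => ?_⟩
  apply Subtype.ext
  have hz' : z • (a : AMod hf) = 0 := (Module.mem_annihilator.mp hz) _
  rw [← hyz, ← hr]
  simp only [Submodule.coe_smul, Submodule.coe_add, add_smul, hz', add_zero, Finset.sum_smul, mul_smul,
    Submodule.coe_sum]

theorem acyclic (hf : Convenient f)
    (hrad : ∀ w : f.support, (X w : MvPolynomial f.support ℂ) ∈ (aI hf).radical)
    (U : Finset (Fin n)) : KAc (Fsym f) (JU hf) ∅ U := by
  obtain ⟨T⟩ := exists_tri f U
  have hU : ∀ I, U ∪ (∅ \ I) = U := fun I => by simp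
  intro c hc hc0 hkd
  have hc' : ∀ I, c I ∈ JU hf U := fun I => hU I ▸ hc I
  let C : Finset (Fin n) → JU hf U := fun I => ⟨c I, hc' I⟩
  have hco : ∀ (C : Finset (Fin n) → JU hf U) I,
      ((kd (Fsym f) C I : JU hf U) : AMod hf) = kd (Fsym f) (fun I => (C I : AMod hf)) I := by
    intro C I
    rw [kd_apply, kd_apply]
    simp
  obtain ⟨b, -, hb⟩ := exchange (Fsym f) (Fintype.card_fin n) T.thN (T.NN hf)
    (fun k _ x => T.NN_succ hf k x) (fun k hk a h => T.NN_reg hf k hk a h)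
    (fun k _ => thN_nil T hf hrad k) n 0 (by simp) C
    (fun I hI => by
      have : I = ∅ := by simpa using hI
      subst this
      exact Subtype.ext hc0)
    (fun I => by
      have : kd (Fsym f) C I = 0 := Subtype.ext (by rw [hco]; exact congrFun hkd I)
      rw [this]; exact Submodule.zero_mem _)
  refine ⟨fun I => b I, fun I => by rw [hU]; exact (b I).2, ?_⟩
  ext1 I
  have := hb I
  rw [Tri.NN, Submodule.mem_bot] at this
  have h2 := congrArg (Subtype.val) this
  rw [Pi.sub_apply, Submodule.coe_sub, hco] at h2
  exact sub_eq_zero.mp h2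

end Acyc
end ToricNewton
end

section
open MvPolynomial

namespace ToricNewton
set_option linter.unusedSectionVars false

/-! ### Nilpotency of the symbols modulo the relations -/
section Farkas

lemma farkas {E ι : Type*} [AddCommGroup E] [Module ℚ E] (s : Finset ι) (z : ι → E) (b : E) :
    (∃ c : ι → ℚ, (∀ i, 0 ≤ c i) ∧ b = ∑ i ∈ s, c i • z i) ∨
      ∃ L : E →ₗ[ℚ] ℚ, (∀ i ∈ s, 0 ≤ L (z i)) ∧ L b < 0 := by
  classical
  induction s using Finset.induction_on generalizing z b with
  | empty =>
    by_cases hb : b = 0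
    · left; exact ⟨0, fun i => le_rfl, by simp [hb]⟩
    · right
      have := mt (Module.forall_dual_apply_eq_zero_iff ℚ b).mp hb
      push Not at this
      obtain ⟨L, hL⟩ := this
      rcases lt_or_gt_of_ne hL with h | h
      · exact ⟨L, by simp, h⟩
      · exact ⟨-L, by simp, by simpa using h⟩
  | insert j s hj ih =>
    rcases ih z b with ⟨c, hc, hb⟩ | ⟨L, hL, hLb⟩
    · left
      refine ⟨Function.update c j 0, fun i => ?_, ?_⟩
      · by_cases hi : i = j
        · subst hi; simp
        · simp [hi, hc i]
      · rw [Finset.sum_insert hj, hb]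
        simp only [Function.update_self, zero_smul, zero_add]
        refine Finset.sum_congr rfl fun i hi => ?_
        rw [Function.update_of_ne (ne_of_mem_of_not_mem hi hj)]
    · by_cases hLj : 0 ≤ L (z j)
      · right
        refine ⟨L, fun i hi => ?_, hLb⟩
        rcases Finset.mem_insert.mp hi with rfl | hi
        · exact hLj
        · exact hL i hi
      · push Not at hLj
        let π : E →ₗ[ℚ] E := LinearMap.id - (LinearMap.toSpanSingleton ℚ E (z j)) ∘ₗ ((L (z j))⁻¹ • L)
        have hπ : ∀ x, π x = x - ((L (z j))⁻¹ * L x) • z j := fun x => by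
          simp [π]
        rcases ih (fun i => π (z i)) (π b) with ⟨c, hc, hb⟩ | ⟨L', hL', hLb'⟩
        · left
          refine ⟨Function.update c j ((L (z j))⁻¹ * L b - ∑ i ∈ s, c i * ((L (z j))⁻¹ * L (z i))),
            fun i => ?_, ?_⟩
          · by_cases hi : i = j
            · subst hi
              have h1 : 0 ≤ ∑ k ∈ s, c k * L (z k) :=
                Finset.sum_nonneg fun k hk => mul_nonneg (hc k) (hL k hk)
              have h2 : ∑ k ∈ s, c k * ((L (z i))⁻¹ * L (z k)) =
                  (L (z i))⁻¹ * ∑ k ∈ s, c k * L (z k) := by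
                rw [Finset.mul_sum]
                exact Finset.sum_congr rfl fun k _ => by ring
              rw [Function.update_self, h2, ← mul_sub]
              exact mul_nonneg_of_nonpos_of_nonpos (inv_nonpos.mpr hLj.le) (by linarith)
            · simp [hi, hc i]
          · rw [Finset.sum_insert hj, Function.update_self]
            have h3 : ∑ i ∈ s, Function.update c j ((L (z j))⁻¹ * L b -
                ∑ i ∈ s, c i * ((L (z j))⁻¹ * L (z i))) i • z i = ∑ i ∈ s, c i • z i :=
              Finset.sum_congr rfl fun i hi => by
                rw [Function.update_of_ne (ne_of_mem_of_not_mem hi hj)]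
            rw [h3]
            simp only [hπ, smul_sub, Finset.sum_sub_distrib, smul_smul, ← Finset.sum_smul] at hb
            rw [sub_eq_iff_eq_add] at hb
            refine hb.trans ?_
            module
        · right
          refine ⟨L' ∘ₗ π, fun i hi => ?_, hLb'⟩
          rcases Finset.mem_insert.mp hi with rfl | hi
          · have : π (z i) = 0 := by
              rw [hπ, inv_mul_cancel₀ hLj.ne]; simp
            simp [this]
          · exact hL' i hi

lemma clear_denom {ι : Type*} [Fintype ι] (c : ι → ℚ) (hc : ∀ i, 0 ≤ c i) :
    ∃ d : ℕ, 0 < d ∧ ∃ k : ι → ℕ, ∀ i, (d : ℚ) * c i = k i := by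
  classical
  refine ⟨∏ i, (c i).den, Finset.prod_pos fun i _ => (c i).den_pos, fun i =>
    (c i).num.toNat * ∏ j ∈ Finset.univ.erase i, (c j).den, fun i => ?_⟩
  rw [← Finset.mul_prod_erase _ _ (Finset.mem_univ i)]
  have h1 : (c i) * (c i).den = ((c i).num.toNat : ℚ) := by
    have : ((c i).num.toNat : ℤ) = (c i).num := Int.toNat_of_nonneg (Rat.num_nonneg.mpr (hc i))
    have h2 : (((c i).num.toNat : ℤ) : ℚ) = ((c i).num : ℚ) := by rw [this]
    rw [Rat.mul_den_eq_num, ← h2, Int.cast_natCast]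
  push_cast
  rw [← h1]; ring

end Farkas

section Nil
variable {n : ℕ} {f : MvPolynomial (Fin n) ℂ}

lemma euler_eq (f : MvPolynomial (Fin n) ℂ) (i : Fin n) : X i * pderiv i f =
    ∑ w : f.support, monomial (w : Fin n →₀ ℕ) (f.coeff w * ((w : Fin n →₀ ℕ) i : ℂ)) := by
  rw [Finset.sum_coe_sort f.support
    (fun w => (monomial w (f.coeff w * (w i : ℂ)) : MvPolynomial (Fin n) ℂ))]
  nth_rw 1 [f.as_sum]
  rw [map_sum, Finset.mul_sum]
  refine Finset.sum_congr rfl fun w _ => ?_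
  rw [pderiv_monomial]
  by_cases h : w i = 0
  · simp [h]
  · rw [X, monomial_mul, one_mul, add_tsub_cancel_of_le]
    rw [Finsupp.single_le_iff]; omega

/-- value of a monomial -/
noncomputable def yv (y : f.support → ℂ) (k : f.support →₀ ℕ) : ℂ := ∏ w, y w ^ k w

lemma aeval_yv (y : f.support → ℂ) (k : f.support →₀ ℕ) :
    aeval y (monomial k 1 : MvPolynomial f.support ℂ) = yv y k := by
  rw [aeval_monomial, Finsupp.prod_fintype _ _ (by simp)]; simp [yv]

lemma yv_ne_zero {y : f.support → ℂ} {k : f.support →₀ ℕ} (h : ∀ w, k w ≠ 0 → y w ≠ 0) :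
    yv y k ≠ 0 :=
  Finset.prod_ne_zero_iff.mpr fun w _ => by
    by_cases hk : k w = 0
    · simp [hk]
    · exact pow_ne_zero _ (h w hk)

lemma yv_eq_of (hf : Convenient f) {y : f.support → ℂ}
    (hy : ∀ s ∈ aI hf, aeval y s = 0) {k l : f.support →₀ ℕ} (h1 : sh k = sh l)
    (h2 : dg k = dg l) : yv y k = yv y l := by
  classical
  have : (monomial k 1 - monomial l 1 : MvPolynomial f.support ℂ) ∈ aI hf := by
    refine Submodule.mem_sup_right (Module.mem_annihilator.mpr fun a => ?_)
    have hop : opA k = opA l := by unfold opA cnd; rw [h1, h2]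
    apply (toP hf).injective
    rw [toP_smul, map_sub, act_monomial, act_monomial, hop]; simp
  have := hy _ this
  rwa [map_sub, aeval_yv, aeval_yv, sub_eq_zero] at this

lemma yv_zero_of (hf : Convenient f) {y : f.support → ℂ}
    (hy : ∀ s ∈ aI hf, aeval y s = 0) {k l : f.support →₀ ℕ} (h1 : sh k = sh l)
    (h2 : dg l < dg k) : yv y k = 0 := by
  classical
  have : (monomial k 1 : MvPolynomial f.support ℂ) ∈ aI hf := by
    refine Submodule.mem_sup_right (Module.mem_annihilator.mpr fun a => ?_)
    have hop : opA k = 0 := by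
      have : ∀ m, ¬ cnd k m := fun m hm => by
        have h3 := nu_add_sh_le hf m l
        unfold cnd at hm
        rw [h1] at hm
        have : (dg l : ℝ) < dg k := by exact_mod_cast h2
        linarith
      refine (basisMonomials (Fin n) ℂ).ext fun m => ?_
      rw [coe_basisMonomials, opA_monomial, if_neg (this m)]; rfl
    apply (toP hf).injective
    rw [toP_smul, act_monomial, hop]; simp
  have := hy _ this
  rwa [aeval_yv] at this

/-- homogenised exponents -/
def zO (o : Option f.support) : (Fin n → ℚ) × ℚ :=
  (fun i => o.elim 0 fun w => ((w : Fin n →₀ ℕ) i : ℚ), 1)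

lemma exists_functional (hf : Convenient f) {y : f.support → ℂ}
    (hy : ∀ s ∈ aI hf, aeval y s = 0) (o0 : Option f.support) (ho : ∀ w, o0 = some w → y w = 0) :
    ∃ L : (Fin n → ℚ) × ℚ →ₗ[ℚ] ℚ, (∀ o : Option f.support, 0 ≤ L (zO o)) ∧
      (∀ w, y w ≠ 0 → L (zO (some w)) = 0) ∧ 0 < L (zO o0) := by
  classical
  let z : Option f.support ⊕ f.support → (Fin n → ℚ) × ℚ :=
    Sum.elim zO fun w => if y w ≠ 0 then -zO (some w) else 0
  rcases farkas Finset.univ z (-zO o0) with ⟨c, hc, hb⟩ | ⟨L, hL, hLb⟩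
  · exfalso
    obtain ⟨d, hd, k, hk⟩ := clear_denom c hc
    let K : Option f.support → ℕ := fun o => k (Sum.inl o) + if o = o0 then d else 0
    let kk : f.support →₀ ℕ := Finsupp.equivFunOnFinite.symm fun w => K (some w)
    let ll : f.support →₀ ℕ := Finsupp.equivFunOnFinite.symm fun w =>
      if y w ≠ 0 then k (Sum.inr w) else 0
    have hkk : ∀ w, kk w = K (some w) := fun w => rfl
    have hll : ∀ w, ll w = if y w ≠ 0 then k (Sum.inr w) else 0 := fun w => rfl
    -- the relation, multiplied out
    have hrel : ∑ w, (ll w : ℚ) • zO (some w) = ∑ o, (K o : ℚ) • zO (f := f) o := by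
      have h1 : (d : ℚ) • (-zO o0) = ∑ o, (k (Sum.inl o) : ℚ) • zO o
          - ∑ w, (ll w : ℚ) • zO (some w) := by
        rw [hb, Finset.smul_sum, Fintype.sum_sum_type, sub_eq_add_neg, ← Finset.sum_neg_distrib]
        congr 1
        · refine Finset.sum_congr rfl fun o _ => ?_
          rw [smul_smul, hk]; rfl
        · refine Finset.sum_congr rfl fun w _ => ?_
          rw [smul_smul, hk, hll]
          simp only [z, Sum.elim_inr]
          split_ifs <;> simp
      have h2 : ∑ o, (K o : ℚ) • zO (f := f) o = ∑ o, (k (Sum.inl o) : ℚ) • zO o + (d : ℚ) • zO o0 := by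
        simp only [K, Nat.cast_add, add_smul, Finset.sum_add_distrib]
        congr 1
        rw [Finset.sum_eq_single o0]
        · simp
        · intro o _ h; simp [h]
        · simp
      rw [h2]
      rw [smul_neg] at h1
      have := congrArg (fun t => t + (d : ℚ) • zO o0 + ∑ w, (ll w : ℚ) • zO (some w)) h1
      beta_reduce at this
      rw [neg_add_cancel, zero_add] at this
      rw [this]; abel
    rw [Fintype.sum_option] at hrel
    have hsh : sh ll = sh kk := by
      ext i
      have := congrFun (congrArg Prod.fst hrel) i
      simp only [Prod.fst_sum, Prod.smul_fst, zO, Finset.sum_apply, Pi.smul_apply, Option.elim_some,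
        smul_eq_mul, Prod.fst_add, Pi.add_apply, Option.elim_none, mul_zero, zero_add] at this
      have h3 : ∀ j : f.support →₀ ℕ, sh j i = ∑ w, j w * (w : Fin n →₀ ℕ) i := by
        intro j; simp [sh, Finsupp.finsetSum_apply]
      rw [h3, h3]
      simp only [hkk]
      exact_mod_cast this
    have hdg : dg ll = K none + dg kk := by
      have := congrArg Prod.snd hrel
      simp only [Prod.snd_sum, Prod.smul_snd, zO, smul_eq_mul, mul_one, Prod.snd_add] at this
      unfold dg
      simp only [hkk]
      exact_mod_cast this
    have hne : yv y ll ≠ 0 := yv_ne_zero fun w hw => by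
      rw [hll] at hw
      by_contra h
      simp [h] at hw
    rcases Nat.eq_zero_or_pos (K none) with h0 | h0
    · rw [h0, zero_add] at hdg
      rw [yv_eq_of hf hy hsh hdg] at hne
      cases o0 with
      | none => simp [K] at h0; omega
      | some w0 =>
        apply hne
        refine Finset.prod_eq_zero (Finset.mem_univ w0) ?_
        rw [ho w0 rfl, zero_pow]
        rw [hkk]; simp only [K, if_true]; omega
    · exact hne (yv_zero_of hf hy hsh (by omega))
  · refine ⟨L, fun o => hL (Sum.inl o) (Finset.mem_univ _), fun w hw => ?_, by simpa using hLb⟩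
    have h1 := hL (Sum.inl (some w)) (Finset.mem_univ _)
    have h2 := hL (Sum.inr w) (Finset.mem_univ _)
    simp only [z, Sum.elim_inl, Sum.elim_inr, hw, ne_eq, not_false_eq_true, if_true, map_neg] at h1 h2
    linarith

lemma exists_face (hf : Convenient f) {y : f.support → ℂ} (hy : ∀ s ∈ aI hf, aeval y s = 0) :
    ∃ (l : (Fin n → ℝ) →ₗ[ℝ] ℝ) (c : ℝ), 0 < c ∧ (∀ w : f.support, l (toR (w : Fin n →₀ ℕ)) ≤ c) ∧
      ∀ w : f.support, l (toR (w : Fin n →₀ ℕ)) = c ↔ y w ≠ 0 := by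
  classical
  have h : ∀ o0 : Option f.support, ∃ L : (Fin n → ℚ) × ℚ →ₗ[ℚ] ℚ,
      (∀ o : Option f.support, 0 ≤ L (zO o)) ∧
      (∀ w, y w ≠ 0 → L (zO (some w)) = 0) ∧ ((∀ w, o0 = some w → y w = 0) → 0 < L (zO o0)) := by
    intro o0
    by_cases ho : ∀ w, o0 = some w → y w = 0
    · obtain ⟨L, h1, h2, h3⟩ := exists_functional hf hy o0 ho
      exact ⟨L, h1, h2, fun _ => h3⟩
    · exact ⟨0, fun _ => le_rfl, fun _ _ => rfl, fun h => absurd h ho⟩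
  choose L h1 h2 h3 using h
  let M : (Fin n → ℚ) × ℚ →ₗ[ℚ] ℚ := ∑ o, L o
  have hM1 : ∀ o : Option f.support, 0 ≤ M (zO o) := fun o => by
    simp only [M, LinearMap.sum_apply]
    exact Finset.sum_nonneg fun o' _ => h1 o' o
  have hM2 : ∀ w, y w ≠ 0 → M (zO (some w)) = 0 := fun w hw => by
    simp only [M, LinearMap.sum_apply]
    exact Finset.sum_eq_zero fun o' _ => h2 o' w hw
  have hM3 : ∀ o : Option f.support, (∀ w, o = some w → y w = 0) → 0 < M (zO o) := fun o ho => by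
    simp only [M, LinearMap.sum_apply]
    exact Finset.sum_pos' (fun o' _ => h1 o' o) ⟨o, Finset.mem_univ _, h3 o ho⟩
  let l : (Fin n → ℝ) →ₗ[ℝ] ℝ :=
    ∑ i, (-(M (Pi.single i 1, 0) : ℚ) : ℝ) • LinearMap.proj i
  have hdecomp : ∀ o : Option f.support, M (zO o) =
      ∑ i, (zO o).1 i * M (Pi.single i 1, 0) + M (0, 1) := by
    intro o
    have : zO o = ∑ i, (zO o).1 i • ((Pi.single i 1, 0) : (Fin n → ℚ) × ℚ) + (0, 1) := by
      refine Prod.ext ?_ ?_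
      · ext j
        simp [Prod.fst_sum, Finset.sum_apply, Pi.single_apply]
      · simp [Prod.snd_sum, zO]
    conv_lhs => rw [this]
    rw [map_add, map_sum]
    simp only [map_smul, smul_eq_mul]
  have hl : ∀ w : f.support, l (toR (w : Fin n →₀ ℕ)) =
      ((M (0, 1) : ℚ) : ℝ) - ((M (zO (some w)) : ℚ) : ℝ) := by
    intro w
    rw [hdecomp]
    simp [l, toR, zO, mul_comm]
  refine ⟨l, ((M (0, 1) : ℚ) : ℝ), ?_, fun w => ?_, fun w => ?_⟩
  · have := hM3 none (by simp)
    rw [hdecomp] at this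
    simp only [zO, Option.elim_none, zero_mul, Finset.sum_const_zero, zero_add] at this
    exact_mod_cast this
  · rw [hl]
    have : (0 : ℝ) ≤ ((M (zO (some w)) : ℚ) : ℝ) := by exact_mod_cast hM1 (some w)
    linarith
  · rw [hl]
    constructor
    · intro h hw
      have : (0 : ℝ) < ((M (zO (some w)) : ℚ) : ℝ) := by
        exact_mod_cast hM3 (some w) (by rintro w' h; cases h; exact hw)
      linarith
    · intro h
      rw [hM2 w h]; simp

end Nil
end ToricNewton
end

section
open MvPolynomial

namespace ToricNewton
set_option linter.unusedSectionVars false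

section Char

lemma baer_units : Module.Baer ℤ (Additive ℂˣ) := by
  have hs : ∀ m : ℕ, m ≠ 0 → Function.Surjective (fun a : Additive ℂˣ => m • a) := by
    intro m hm a
    obtain ⟨z, hz⟩ := IsAlgClosed.exists_pow_nat_eq (a.toMul : ℂ) (Nat.pos_of_ne_zero hm)
    have hz0 : z ≠ 0 := by
      rintro rfl
      rw [zero_pow hm] at hz
      exact (Units.ne_zero _) hz.symm
    refine ⟨Additive.ofMul (Units.mk0 z hz0), ?_⟩
    apply Additive.toMul.injective
    ext
    simp [hz]
  let : DivisibleBy (Additive ℂˣ) ℕ := divisibleByOfSMulRightSurj _ _ (fun {m} hm => hs m hm)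
  let : DivisibleBy (Additive ℂˣ) ℤ := AddGroup.divisibleByIntOfDivisibleByNat _
  exact Module.Baer.of_divisible _

variable {n : ℕ} {f : MvPolynomial (Fin n) ℂ}

lemma exists_char (hf : Convenient f) {y : f.support → ℂ} (hy : ∀ s ∈ aI hf, aeval y s = 0) :
    ∃ x : Fin n → ℂ, (∀ i, x i ≠ 0) ∧
      ∀ w : f.support, y w ≠ 0 → ∏ i, x i ^ ((w : Fin n →₀ ℕ) i) = y w := by
  classical
  let Q := {w : f.support // y w ≠ 0}
  let A : (Q → ℤ) →ₗ[ℤ] (Fin n → ℤ) :=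
    Fintype.linearCombination ℤ (fun q i => ((q.1 : Fin n →₀ ℕ) i : ℤ))
  let φ : (Q → ℤ) →ₗ[ℤ] Additive ℂˣ :=
    Fintype.linearCombination ℤ (fun q => Additive.ofMul (Units.mk0 (y q.1) q.2))
  have hker : LinearMap.ker A ≤ LinearMap.ker φ := by
    intro a ha
    rw [LinearMap.mem_ker] at ha ⊢
    let mk : (Q → ℕ) → (f.support →₀ ℕ) := fun b => Finsupp.equivFunOnFinite.symm fun w =>
      if h : y w ≠ 0 then b ⟨w, h⟩ else 0
    have hmk : ∀ b w, mk b w = if h : y w ≠ 0 then b ⟨w, h⟩ else 0 := fun b w => rfl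
    have hmk' : ∀ b (q : Q), mk b q.1 = b q := fun b q => by
      rw [hmk, dif_pos q.2]
    have hsum : ∀ (b : Q → ℕ) (g : f.support → ℕ), ∑ w, mk b w * g w = ∑ q, b q * g q.1 := by
      intro b g
      rw [← Fintype.sum_subtype_add_sum_subtype (fun w => y w ≠ 0)]
      rw [Fintype.sum_eq_zero (fun i : {w // ¬ y w ≠ 0} => mk b i * g i)
        (fun i => by rw [hmk, dif_neg i.2, zero_mul]), add_zero]
      exact Fintype.sum_congr _ _ fun q => by rw [hmk']
    have hyv : ∀ b, yv y (mk b) = ∏ q : Q, y q.1 ^ b q := by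
      intro b
      unfold yv
      rw [← Fintype.prod_subtype_mul_prod_subtype (fun w => y w ≠ 0)]
      rw [Fintype.prod_eq_one (fun i : {w // ¬ y w ≠ 0} => y i ^ mk b i)
        (fun i => by rw [hmk, dif_neg i.2, pow_zero]), mul_one]
      exact Fintype.prod_congr _ _ fun q => by rw [hmk']
    let p : Q → ℕ := fun q => (a q).toNat
    let m : Q → ℕ := fun q => (-a q).toNat
    have hpm : ∀ q, a q = (p q : ℤ) - m q := fun q => by simp only [p, m]; omega
    have h3 : ∀ (j : f.support →₀ ℕ) i, sh j i = ∑ w, j w * (w : Fin n →₀ ℕ) i := by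
      intro j i; simp [sh, Finsupp.finsetSum_apply]
    have hsh : sh (mk p) = sh (mk m) := by
      ext i
      rw [h3, h3, hsum p (fun w => (w : Fin n →₀ ℕ) i), hsum m (fun w => (w : Fin n →₀ ℕ) i)]
      have := congrFun ha i
      simp only [A, Fintype.linearCombination_apply, Finset.sum_apply, Pi.smul_apply, smul_eq_mul,
        Pi.zero_apply, hpm, sub_mul, Finset.sum_sub_distrib, sub_eq_zero] at this
      exact_mod_cast this
    have hne : ∀ b, yv y (mk b) ≠ 0 := fun b => yv_ne_zero fun w hw h => by
      rw [hmk, dif_neg (by simpa using h)] at hw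
      exact hw rfl
    have hdg : dg (mk p) = dg (mk m) := by
      rcases lt_trichotomy (dg (mk p)) (dg (mk m)) with h | h | h
      · exact absurd (yv_zero_of hf hy hsh.symm h) (hne m)
      · exact h
      · exact absurd (yv_zero_of hf hy hsh h) (hne p)
    have hfin := yv_eq_of hf hy hsh hdg
    rw [hyv, hyv] at hfin
    apply Additive.toMul.injective
    simp only [φ, Fintype.linearCombination_apply, hpm, sub_smul, Finset.sum_sub_distrib]
    rw [toMul_sub, toMul_sum, toMul_sum, toMul_zero, div_eq_one]
    ext
    simpa using hfin
  obtain ⟨h, hh⟩ := Module.Baer.extension_property baer_units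
    ((LinearMap.ker A).liftQ A le_rfl)
    (LinearMap.ker_eq_bot.mp (Submodule.ker_liftQ_eq_bot _ _ le_rfl le_rfl))
    ((LinearMap.ker A).liftQ φ hker)
  refine ⟨fun i => ((h (Pi.single i 1)).toMul : ℂ), fun i => Units.ne_zero _, fun w hw => ?_⟩
  have h1 : h (A (Pi.single ⟨w, hw⟩ 1)) = φ (Pi.single ⟨w, hw⟩ 1) :=
    LinearMap.congr_fun hh (Submodule.Quotient.mk (Pi.single ⟨w, hw⟩ 1))
  simp only [A, φ, Fintype.linearCombination_apply_single, one_smul] at h1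
  have h2 : (fun i => ((w : Fin n →₀ ℕ) i : ℤ)) = ∑ i, ((w : Fin n →₀ ℕ) i) • (Pi.single i 1 : Fin n → ℤ) := by
    ext j
    simp [Finset.sum_apply, Pi.single_apply]
  rw [h2, map_sum] at h1
  simp only [map_nsmul] at h1
  have h4 := congrArg (fun t => ((Additive.toMul t : ℂˣ) : ℂ)) h1
  simpa [toMul_sum] using h4

lemma y_zero (hf : Convenient f) (hnd : Nondegenerate f) {y : f.support → ℂ}
    (hy : ∀ s ∈ aI hf, aeval y s = 0) (w0 : f.support) : y w0 = 0 := by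
  classical
  by_contra hw0
  obtain ⟨l, c, hc, hle, hiff⟩ := exists_face hf hy
  obtain ⟨x, hx0, hx⟩ := exists_char hf hy
  let Δ : Set (Fin n → ℝ) := {x ∈ newtonPolytope f | l x = c}
  have hmemP : ∀ w : f.support, toR (w : Fin n →₀ ℕ) ∈ newtonPolytope f := fun w =>
    subset_convexHull ℝ _ (Or.inr ⟨w, w.2, rfl⟩)
  have hface : NBFace f Δ := by
    refine ⟨⟨⟨_, hmemP w0, (hiff w0).mpr hw0⟩, l, c, ?_, rfl⟩, ?_⟩
    · have : newtonPolytope f ⊆ {x | l x ≤ c} := by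
        refine convexHull_min ?_ (convex_halfSpace_le l.isLinear c)
        rintro z (rfl | ⟨w, hw, rfl⟩)
        · simpa using hc.le
        · exact hle ⟨w, hw⟩
      exact this
    · rintro ⟨_, h⟩
      rw [map_zero] at h
      exact hc.ne h
  refine hnd Δ hface ⟨x, hx0, fun i => ?_⟩
  have hco : ∀ m, (X i * pderiv i f).coeff m = f.coeff m * (m i : ℂ) := fun m => by
    rw [euler_eq, Finset.sum_coe_sort f.support
      (fun w => (monomial w (f.coeff w * (w i : ℂ)) : MvPolynomial (Fin n) ℂ)), coeff_sum]
    simp only [coeff_monomial]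
    rw [Finset.sum_ite_eq']
    split_ifs with h
    · rfl
    · rw [notMem_support_iff.mp h, zero_mul]
  have hres : faceRestrict Δ (X i * pderiv i f) =
      ∑ m ∈ f.support, if toR m ∈ Δ then monomial m (f.coeff m * (m i : ℂ)) else 0 := by
    unfold faceRestrict
    simp only [hco]
    convert Finset.sum_subset (s₁ := (X i * pderiv i f).support) (s₂ := f.support)
      (f := fun m => if toR m ∈ Δ then (monomial m (f.coeff m * (m i : ℂ)) :
        MvPolynomial (Fin n) ℂ) else 0) ?_ ?_ using 1
    · intro m hm
      rw [mem_support_iff, hco] at hm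
      exact mem_support_iff.mpr (left_ne_zero_of_mul hm)
    · intro m _ hm
      rw [notMem_support_iff, hco] at hm
      simp [hm]
  have hFs : aeval y (Fsym f i) = 0 :=
    hy _ (Submodule.mem_sup_left (Ideal.subset_span ⟨i, rfl⟩))
  rw [← hFs, hres, map_sum, Fsym, map_sum, ← Finset.sum_coe_sort f.support]
  refine Finset.sum_congr rfl fun w _ => ?_
  have hw : toR (w : Fin n →₀ ℕ) ∈ Δ ↔ y w ≠ 0 := by
    rw [← hiff w]
    exact ⟨fun h => h.2, fun h => ⟨hmemP w, h⟩⟩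
  rw [aeval_monomial, Finsupp.prod_single_index (by simp), pow_one]
  by_cases h : y w = 0
  · rw [if_neg (by simp [hw, h]), h]; simp
  · rw [if_pos (hw.mpr h), eval_monomial, Finsupp.prod_fintype _ _ (by simp), hx w h]; rfl

lemma hrad_of (hf : Convenient f) (hnd : Nondegenerate f) (w : f.support) :
    (X w : MvPolynomial f.support ℂ) ∈ (aI hf).radical := by
  rw [← MvPolynomial.vanishingIdeal_zeroLocus_eq_radical (K := ℂ), mem_vanishingIdeal_iff]
  intro y hy
  rw [aeval_X]
  exact y_zero hf hnd (fun s hs => (mem_zeroLocus_iff.mp hy) s hs) w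

end Char
end ToricNewton
end

section
open MvPolynomial

namespace ToricNewton
set_option linter.unusedSectionVars false

/-! ### Strictness: from the graded statement to the filtered one -/
section Strict
variable {n : ℕ} {f : MvPolynomial (Fin n) ℂ}

lemma Nle_eq (f : MvPolynomial (Fin n) ℂ) (γ : ℝ) : Nle f γ = suppIn {m | nu f (toR m) ≤ γ} := rfl

lemma Nlt_eq (f : MvPolynomial (Fin n) ℂ) (γ : ℝ) : Nlt f γ = suppIn {m | nu f (toR m) < γ} := rfl

open Classical in
/-- projection to the part of degree `γ` -/
noncomputable def pr (f : MvPolynomial (Fin n) ℂ) (γ : ℝ) : Module.End ℂ (MvPolynomial (Fin n) ℂ) :=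
  (basisMonomials (Fin n) ℂ).constr ℂ fun m => if nu f (toR m) = γ then monomial m 1 else 0

lemma ext_mon {g h : Module.End ℂ (MvPolynomial (Fin n) ℂ)} {S : Set (Fin n →₀ ℕ)}
    (H : ∀ m ∈ S, g (monomial m 1) = h (monomial m 1)) {x : MvPolynomial (Fin n) ℂ}
    (hx : x ∈ suppIn S) : g x = h x := by
  have : suppIn S ≤ LinearMap.eqLocus g h := suppIn_le fun m hm => H m hm
  exact this hx

lemma mem_suppIn_univ (x : MvPolynomial (Fin n) ℂ) : x ∈ suppIn (Set.univ : Set (Fin n →₀ ℕ)) :=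
  fun _ _ => trivial

lemma mon_smul (m : Fin n →₀ ℕ) (c : ℂ) :
    (monomial m c : MvPolynomial (Fin n) ℂ) = c • monomial m 1 := by
  rw [smul_monomial]; simp

open Classical in
lemma pr_monomial (γ : ℝ) (m : Fin n →₀ ℕ) (c : ℂ) :
    pr f γ (monomial m c) = if nu f (toR m) = γ then monomial m c else 0 := by
  have h2 : pr f γ (monomial m (1 : ℂ)) = if nu f (toR m) = γ then monomial m 1 else 0 := by
    have := (basisMonomials (Fin n) ℂ).constr_basis ℂ
      (fun m => if nu f (toR m) = γ then (monomial m 1 : MvPolynomial (Fin n) ℂ) else 0) m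
    rwa [coe_basisMonomials] at this
  rw [mon_smul, map_smul, h2]
  split_ifs <;> simp

open Classical in
lemma coeff_pr (γ : ℝ) (g : MvPolynomial (Fin n) ℂ) (m : Fin n →₀ ℕ) :
    coeff m (pr f γ g) = if nu f (toR m) = γ then coeff m g else 0 := by
  induction g using MvPolynomial.induction_on' with
  | monomial k c =>
    rw [pr_monomial]
    by_cases h : k = m
    · subst h; split_ifs <;> simp
    · split_ifs <;> simp [coeff_monomial, h]
  | add p q hp hq =>
    rw [map_add, coeff_add, hp, hq, coeff_add]
    split_ifs <;> simp

lemma pr_mem_suppIn {S : Set (Fin n →₀ ℕ)} (γ : ℝ) {g : MvPolynomial (Fin n) ℂ} (hg : g ∈ suppIn S) :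
    pr f γ g ∈ suppIn (S ∩ {m | nu f (toR m) = γ}) := by
  classical
  intro m hm
  rw [mem_support_iff, coeff_pr] at hm
  by_cases h : nu f (toR m) = γ
  · rw [if_pos h] at hm
    exact ⟨hg m (mem_support_iff.mpr hm), h⟩
  · rw [if_neg h] at hm; exact absurd rfl hm

lemma pr_mem_Nle (γ : ℝ) (g : MvPolynomial (Fin n) ℂ) : pr f γ g ∈ Nle f γ :=
  fun m hm => (pr_mem_suppIn γ (mem_suppIn_univ g) m hm).2.le

lemma pr_pr (γ : ℝ) (g : MvPolynomial (Fin n) ℂ) : pr f γ (pr f γ g) = pr f γ g := by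
  classical
  ext m
  rw [coeff_pr, coeff_pr]
  split_ifs <;> rfl

lemma pr_of_Nlt {γ : ℝ} {g : MvPolynomial (Fin n) ℂ} (hg : g ∈ Nlt f γ) : pr f γ g = 0 := by
  classical
  ext m
  rw [coeff_pr, coeff_zero]
  split_ifs with h
  · by_contra h'
    exact (hg m (mem_support_iff.mpr h')).ne h
  · rfl

lemma Nlt_of_pr {γ : ℝ} {g : MvPolynomial (Fin n) ℂ} (hg : g ∈ Nle f γ) (h : pr f γ g = 0) :
    g ∈ Nlt f γ := by
  classical
  intro m hm
  refine lt_of_le_of_ne (hg m hm) fun h' => ?_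
  have := coeff_pr (f := f) γ g m
  rw [h, if_pos h', coeff_zero] at this
  exact mem_support_iff.mp hm this.symm

/-- the Euler derivatives -/
noncomputable def Gi (f : MvPolynomial (Fin n) ℂ) (i : Fin n) : MvPolynomial (Fin n) ℂ :=
  X i * pderiv i f

lemma act_Fsym (hf : Convenient f) (i : Fin n) (g : MvPolynomial (Fin n) ℂ) :
    act hf (Fsym f i) g = ∑ w : f.support,
      (f.coeff w * ((w : Fin n →₀ ℕ) i : ℂ)) • opA (Finsupp.single w 1) g := by
  rw [Fsym, map_sum, LinearMap.sum_apply]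
  refine Finset.sum_congr rfl fun w _ => ?_
  rw [act_monomial]; rfl

lemma Gi_mul (i : Fin n) (g : MvPolynomial (Fin n) ℂ) : Gi f i * g = ∑ w : f.support,
      (f.coeff w * ((w : Fin n →₀ ℕ) i : ℂ)) • (monomial (w : Fin n →₀ ℕ) 1 * g) := by
  rw [Gi, euler_eq, Finset.sum_mul]
  refine Finset.sum_congr rfl fun w _ => ?_
  rw [mon_smul, smul_mul_assoc]

lemma pr_opA (γ : ℝ) (w : f.support) (g : MvPolynomial (Fin n) ℂ) :
    pr f (γ + 1) (opA (Finsupp.single w 1) g) = opA (Finsupp.single w 1) (pr f γ g) := by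
  classical
  refine ext_mon (g := pr f (γ + 1) * opA (Finsupp.single w 1))
    (h := opA (Finsupp.single w 1) * pr f γ) (S := Set.univ) (fun m _ => ?_) (mem_suppIn_univ g)
  rw [Module.End.mul_apply, Module.End.mul_apply, opA_monomial, pr_monomial]
  by_cases hc : cnd (Finsupp.single w 1) m
  · rw [if_pos hc, pr_monomial]
    have hc' := hc
    unfold cnd at hc'
    rw [dg_single, Nat.cast_one] at hc'
    simp only [hc', add_left_inj]
    split_ifs
    · rw [opA_monomial, if_pos hc]
    · simp
  · rw [if_neg hc]
    split_ifs
    · rw [opA_monomial, if_neg hc]; simp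
    · simp

lemma pr_act (hf : Convenient f) (γ : ℝ) (i : Fin n) (g : MvPolynomial (Fin n) ℂ) :
    pr f (γ + 1) (act hf (Fsym f i) g) = act hf (Fsym f i) (pr f γ g) := by
  rw [act_Fsym, act_Fsym, map_sum]
  exact Finset.sum_congr rfl fun w _ => by rw [map_smul, pr_opA]

lemma mon_mul_Nle (hf : Convenient f) (γ : ℝ) (w : f.support) {g : MvPolynomial (Fin n) ℂ}
    (hg : g ∈ Nle f γ) : monomial (w : Fin n →₀ ℕ) 1 * g ∈ Nle f (γ + 1) := by
  have : suppIn {m | nu f (toR m) ≤ γ} ≤ (Nle f (γ + 1)).comap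
      (LinearMap.mulLeft ℂ (monomial (w : Fin n →₀ ℕ) 1)) := suppIn_le fun m hm => by
    rw [Submodule.mem_comap, LinearMap.mulLeft_apply, monomial_mul, one_mul, Nle_eq]
    refine monomial_mem_suppIn ?_ _
    have h := nu_add_sh_le hf m (Finsupp.single w 1)
    rw [dg_single, sh_single, one_smul, Nat.cast_one, add_comm m] at h
    exact h.trans (by have : nu f (toR m) ≤ γ := hm; linarith)
  exact this hg

lemma Gi_mul_Nle (hf : Convenient f) (γ : ℝ) (i : Fin n) {g : MvPolynomial (Fin n) ℂ}
    (hg : g ∈ Nle f γ) : Gi f i * g ∈ Nle f (γ + 1) := by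
  rw [Gi_mul]
  exact Submodule.sum_mem _ fun w _ => Submodule.smul_mem _ _ (mon_mul_Nle hf γ w hg)

lemma pr_mon_mul (hf : Convenient f) (γ : ℝ) (w : f.support) {g : MvPolynomial (Fin n) ℂ}
    (hg : g ∈ Nle f γ) : pr f (γ + 1) (monomial (w : Fin n →₀ ℕ) 1 * g) =
      opA (Finsupp.single w 1) (pr f γ g) := by
  classical
  refine ext_mon (g := pr f (γ + 1) * LinearMap.mulLeft ℂ (monomial (w : Fin n →₀ ℕ) 1))
    (h := opA (Finsupp.single w 1) * pr f γ) (S := {m | nu f (toR m) ≤ γ}) (fun m hm => ?_) hg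
  rw [Module.End.mul_apply, Module.End.mul_apply, LinearMap.mulLeft_apply, monomial_mul, one_mul,
    pr_monomial, pr_monomial]
  have h := nu_add_sh_le hf m (Finsupp.single w 1)
  rw [dg_single, sh_single, one_smul, Nat.cast_one, add_comm m] at h
  have hm' : nu f (toR m) ≤ γ := hm
  by_cases hg' : nu f (toR m) = γ
  · rw [if_pos hg', opA_monomial]
    unfold cnd
    rw [dg_single, sh_single, one_smul, Nat.cast_one, add_comm m, hg']
  · rw [if_neg hg', if_neg, map_zero]
    intro h'
    exact hg' (le_antisymm hm' (by linarith))

lemma pr_Gi_mul (hf : Convenient f) (γ : ℝ) (i : Fin n) {g : MvPolynomial (Fin n) ℂ}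
    (hg : g ∈ Nle f γ) : pr f (γ + 1) (Gi f i * g) = act hf (Fsym f i) (pr f γ g) := by
  rw [act_Fsym, Gi_mul, map_sum]
  exact Finset.sum_congr rfl fun w _ => by rw [map_smul, pr_mon_mul hf γ w hg]

lemma descent (hf : Convenient f) (hac : ∀ U, KAc (Fsym f) (JU hf) ∅ U) (γ : ℝ)
    (a : Fin n → MvPolynomial (Fin n) ℂ) (ha : ∀ i, a i ∈ Nle f γ)
    (hs : ∑ i, Gi f i * a i ∈ Nlt f (γ + 1)) :
    ∃ a' : Fin n → MvPolynomial (Fin n) ℂ, (∀ i, a' i ∈ Nlt f γ) ∧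
      ∑ i, Gi f i * a' i = ∑ i, Gi f i * a i := by
  classical
  have hs0 : ∑ i, act hf (Fsym f i) (pr f γ (a i)) = 0 := by
    rw [← pr_of_Nlt hs, map_sum]
    exact Finset.sum_congr rfl fun i _ => (pr_Gi_mul hf γ i (ha i)).symm
  let c : Finset (Fin n) → AMod hf := fun I =>
    ∑ i, if I = {i} then (toP hf).symm (pr f γ (a i)) else 0
  have hc1 : ∀ i, c {i} = (toP hf).symm (pr f γ (a i)) := fun i => by
    simp [c, Finset.singleton_inj]
  have hc2 : ∀ I, (∀ i, I ≠ {i}) → c I = 0 := fun I hI => by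
    simp [c, hI]
  have hks : ∀ i : Fin n, ksg i ∅ = 1 := fun i => by simp [ksg]
  have hkd : kd (Fsym f) c = 0 := by
    ext1 I
    rw [kd_apply, Pi.zero_apply]
    by_cases hI : I = ∅
    · subst hI
      apply (toP hf).injective
      rw [map_zero, ← hs0, map_sum]
      simp only [Finset.compl_empty]
      refine Finset.sum_congr rfl fun i _ => ?_
      rw [hks, one_smul, insert_empty_eq, hc1, toP_smul, LinearEquiv.apply_symm_apply]
    · refine Finset.sum_eq_zero fun i hi => ?_
      rw [hc2, smul_zero, smul_zero]
      intro j hj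
      have h1 : (insert i I).card = 1 := by rw [hj, Finset.card_singleton]
      rw [Finset.card_insert_of_notMem (Finset.mem_compl.mp hi)] at h1
      exact hI (Finset.card_eq_zero.mp (by omega))
  obtain ⟨b, -, hb⟩ := hac ∅ c (fun I => by simpa using JU_empty hf (c I))
    (hc2 ∅ fun i => (Finset.singleton_ne_empty i).symm) hkd
  let b' : Finset (Fin n) → MvPolynomial (Fin n) ℂ := fun I => pr f (γ - 1) (toP hf (b I))
  have hb' : ∀ I, b' I ∈ Nle f (γ - 1) := fun I => pr_mem_Nle _ _
  let e : Finset (Fin n) → MvPolynomial (Fin n) ℂ := kd (Gi f) b'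
  have hzs : ∀ (z : ℤ) (p : MvPolynomial (Fin n) ℂ) (S : Submodule ℂ (MvPolynomial (Fin n) ℂ)),
      p ∈ S → z • p ∈ S := fun z p S hp => S.toAddSubgroup.zsmul_mem hp z
  have he : ∀ I, e I ∈ Nle f γ := fun I => by
    simp only [e]
    rw [kd_apply]
    refine Submodule.sum_mem _ fun i _ => hzs _ _ _ ?_
    have := Gi_mul_Nle hf (γ - 1) i (hb' (insert i I))
    rwa [sub_add_cancel] at this
  have hpe : ∀ i, pr f γ (e {i}) = pr f γ (a i) := fun i => by
    have h1 := congrArg (fun t => pr f γ (toP hf t)) (congrFun hb {i})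
    simp only [hc1, LinearEquiv.apply_symm_apply, pr_pr] at h1
    rw [h1]
    simp only [e]
    rw [kd_apply, kd_apply, map_sum, map_sum, map_sum]
    refine Finset.sum_congr rfl fun j _ => ?_
    rw [map_zsmul, map_zsmul, map_zsmul, toP_smul, smul_eq_mul]
    have h2 := pr_Gi_mul hf (γ - 1) j (hb' (insert j {i}))
    have h3 := pr_act hf (γ - 1) j (toP hf (b (insert j {i})))
    rw [sub_add_cancel] at h2 h3
    rw [h2, h3]
    simp only [b', pr_pr]
  refine ⟨fun i => a i - e {i}, fun i => Nlt_of_pr (Submodule.sub_mem _ (ha i) (he _)) ?_, ?_⟩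
  · rw [map_sub, hpe, sub_self]
  · have h4 := congrFun (kd_kd (Gi f) b') ∅
    rw [kd_apply] at h4
    simp only [Finset.compl_empty, hks, one_smul, insert_empty_eq, Pi.zero_apply, smul_eq_mul] at h4
    simp only [mul_sub, Finset.sum_sub_distrib]
    rw [h4, sub_zero]

lemma descent_all (hf : Convenient f) (hac : ∀ U, KAc (Fsym f) (JU hf) ∅ U) (α : ℝ) (k : ℕ) :
    ∀ (γ : ℝ) (a : Fin n → MvPolynomial (Fin n) ℂ), {m | nu f (toR m) < γ}.ncard < k →
      (∀ i, a i ∈ Nle f γ) → ∑ i, Gi f i * a i ∈ Nle f α →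
      ∃ a' : Fin n → MvPolynomial (Fin n) ℂ, (∀ i, a' i ∈ Nle f (α - 1)) ∧
        ∑ i, Gi f i * a' i = ∑ i, Gi f i * a i := by
  induction k with
  | zero => intro γ a h; omega
  | succ k ih =>
    intro γ a hk ha hs
    by_cases hγ : γ ≤ α - 1
    · exact ⟨a, fun i m hm => (ha i m hm).trans hγ, rfl⟩
    push Not at hγ
    obtain ⟨a', ha', hsum⟩ := descent hf hac γ a ha
      (fun m hm => (hs m hm).trans_lt (by linarith))
    have hfin : {m | nu f (toR m) < γ}.Finite :=
      (finite_nu_le hf γ).subset fun m hm => by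
        rw [Set.mem_ofPred_eq] at hm ⊢
        exact hm.le
    by_cases hne : {m : Fin n →₀ ℕ | nu f (toR m) < γ}.Nonempty
    · obtain ⟨m0, hm0, hmax⟩ := hfin.exists_maximalFor (fun m => nu f (toR m)) _ hne
      have hmax' : ∀ m, nu f (toR m) < γ → nu f (toR m) ≤ nu f (toR m0) := fun m hm => by
        by_contra h
        push Not at h
        exact absurd (hmax hm h.le) (not_le.mpr h)
      have hcard : {m : Fin n →₀ ℕ | nu f (toR m) < nu f (toR m0)}.ncard < k := by
        refine lt_of_lt_of_le (Set.ncard_lt_ncard ?_ hfin) (Nat.lt_succ_iff.mp hk)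
        rw [Set.mem_ofPred_eq] at hm0
        refine ⟨fun m hm => ?_, fun h => ?_⟩
        · rw [Set.mem_ofPred_eq] at hm ⊢
          exact hm.trans hm0
        · have : m0 ∈ {m : Fin n →₀ ℕ | nu f (toR m) < nu f (toR m0)} := h hm0
          rw [Set.mem_ofPred_eq] at this
          exact lt_irrefl _ this
      obtain ⟨a'', h1, h2⟩ := ih (nu f (toR m0)) a' hcard (fun i m hm => hmax' m (ha' i m hm))
        (hsum ▸ hs)
      exact ⟨a'', h1, h2.trans hsum⟩
    · rw [Set.not_nonempty_iff_eq_empty] at hne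
      refine ⟨a', fun i m hm => ?_, hsum⟩
      have : m ∈ {m : Fin n →₀ ℕ | nu f (toR m) < γ} := ha' i m hm
      rw [hne] at this
      exact this.elim

lemma exists_bound (a : Fin n → MvPolynomial (Fin n) ℂ) : ∃ γ, ∀ i, a i ∈ Nle f γ := by
  refine ⟨∑ i, ∑ m ∈ (a i).support, nu f (toR m), fun i m hm => ?_⟩
  refine (Finset.single_le_sum (f := fun m => nu f (toR m)) (fun m _ => nu_nonneg' f _) hm).trans ?_
  exact Finset.single_le_sum (f := fun i => ∑ m ∈ (a i).support, nu f (toR m))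
    (fun j _ => Finset.sum_nonneg fun m _ => nu_nonneg' f _) (Finset.mem_univ i)

lemma prodX_eq (V : Finset (Fin n)) : (∏ j ∈ V, X j : MvPolynomial (Fin n) ℂ) =
    monomial (∑ j ∈ V, Finsupp.single j 1) 1 := by
  rw [monomial_sum_one]; rfl

lemma sum_single_le {V : Finset (Fin n)} {m : Fin n →₀ ℕ} (hm : m ∈ Gam V) :
    ∑ j ∈ V, Finsupp.single j 1 ≤ m := by
  classical
  intro i
  rw [Finsupp.finsetSum_apply]
  simp only [Finsupp.single_apply, Finset.sum_ite_eq']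
  split_ifs with h
  · exact hm i h
  · exact Nat.zero_le _

lemma dvd_of_Gam {V : Finset (Fin n)} {g : MvPolynomial (Fin n) ℂ} (hg : g ∈ suppIn (Gam V)) :
    ∃ q, g = (∏ j ∈ V, X j) * q := by
  have : suppIn (Gam V) ≤ LinearMap.range (LinearMap.mulLeft ℂ
      (∏ j ∈ V, X j : MvPolynomial (Fin n) ℂ)) := suppIn_le fun m hm => by
    refine ⟨monomial (m - ∑ j ∈ V, Finsupp.single j 1) 1, ?_⟩
    rw [LinearMap.mulLeft_apply, prodX_eq, monomial_mul, one_mul,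
      add_tsub_cancel_of_le (sum_single_le hm)]
  obtain ⟨q, hq⟩ := this hg
  exact ⟨q, hq.symm⟩

lemma uB_le_Gam : uB n ≤ suppIn (Gam Finset.univ) := by
  classical
  rintro _ ⟨q, rfl⟩
  rw [LinearMap.mulLeft_apply, uProd, prodX_eq]
  have : suppIn Set.univ ≤ (suppIn (Gam (Finset.univ : Finset (Fin n)))).comap
      (LinearMap.mulLeft ℂ (monomial (∑ j, Finsupp.single j 1) 1)) := suppIn_le fun m _ => by
    rw [Submodule.mem_comap, LinearMap.mulLeft_apply, monomial_mul, one_mul]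
    refine monomial_mem_suppIn (fun j _ => ?_) _
    rw [Finsupp.add_apply, Finsupp.finsetSum_apply]
    simp [Finsupp.single_apply]
  exact this (mem_suppIn_univ q)

theorem key (hf : Convenient f) (hnd : Nondegenerate f) (α : ℝ) {x : MvPolynomial (Fin n) ℂ}
    (hx : x ∈ NcapU f α) (hx' : x ∈ Nlt f α ⊔ (LIdeal f).restrictScalars ℂ) :
    ∃ q ∈ IIdeal f, uProd n * q ∈ Nle f α ∧ x - uProd n * q ∈ Nlt f α := by
  classical
  have hac := acyclic hf (hrad_of hf hnd)
  obtain ⟨y, hy, l, hl, rfl⟩ := Submodule.mem_sup.mp hx'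
  have hNlt : Nlt f α ≤ Nle f α := fun g hg m hm => (hg m hm).le
  have hlN : l ∈ Nle f α := by
    have := Submodule.sub_mem _ hx.1 (hNlt hy)
    simpa using this
  obtain ⟨a, ha⟩ : ∃ a : Fin n → MvPolynomial (Fin n) ℂ, ∑ i, Gi f i * a i = l := by
    obtain ⟨a, ha⟩ := (Ideal.mem_span_range_iff_exists_fun).mp (show l ∈ LIdeal f from hl)
    exact ⟨a, by rw [← ha]; exact Finset.sum_congr rfl fun i _ => mul_comm _ _⟩
  obtain ⟨γ, hγ⟩ := exists_bound (f := f) a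
  obtain ⟨a', ha', hsum⟩ := descent_all hf hac α _ γ a (Nat.lt_succ_self _) hγ (ha ▸ hlN)
  rw [ha] at hsum
  have hprG : ∀ b : Fin n → MvPolynomial (Fin n) ℂ, (∀ i, b i ∈ Nle f (α - 1)) →
      pr f α (∑ i, Gi f i * b i) = ∑ i, act hf (Fsym f i) (pr f (α - 1) (b i)) := fun b hb => by
    rw [map_sum]
    refine Finset.sum_congr rfl fun i _ => ?_
    have := pr_Gi_mul hf (α - 1) i (hb i)
    rwa [sub_add_cancel] at this
  have hprx : pr f α (y + l) = ∑ i, act hf (Fsym f i) (pr f (α - 1) (a' i)) := by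
    rw [map_add, pr_of_Nlt hy, zero_add, ← hsum, hprG a' ha']
  have hxJ : (toP hf).symm (pr f α (y + l)) ∈ JU hf Finset.univ := by
    rw [mem_JU, LinearEquiv.apply_symm_apply]
    exact fun m hm => (pr_mem_suppIn α (uB_le_Gam hx.2) m hm).1
  obtain ⟨b, hbJ, hb⟩ := twist_final (Fsym f) (JU hf) (JU_anti hf) (Fsym_smul_mem hf) hac
    ((toP hf).symm (pr f α (y + l))) hxJ (fun i => (toP hf).symm (pr f (α - 1) (a' i)))
    (fun i => JU_empty hf _) (by
      apply (toP hf).injective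
      rw [LinearEquiv.apply_symm_apply, hprx, map_sum]
      refine Finset.sum_congr rfl fun i _ => ?_
      rw [toP_smul, LinearEquiv.apply_symm_apply])
  have hb1 : pr f α (y + l) = ∑ i, act hf (Fsym f i) (toP hf (b i)) := by
    have := congrArg (toP hf) hb
    rw [LinearEquiv.apply_symm_apply, map_sum] at this
    exact this
  let b' : Fin n → MvPolynomial (Fin n) ℂ := fun i => pr f (α - 1) (toP hf (b i))
  have hb' : ∀ i, b' i ∈ Nle f (α - 1) := fun i => pr_mem_Nle _ _
  have hb'J : ∀ i, b' i ∈ suppIn (Gam (Finset.univ.erase i)) := fun i m hm =>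
    (pr_mem_suppIn (α - 1) (hbJ i) m hm).1
  choose q hq using fun i => dvd_of_Gam (hb'J i)
  have hu : uProd n * ∑ i, pderiv i f * q i = ∑ i, Gi f i * b' i := by
    rw [Finset.mul_sum]
    refine Finset.sum_congr rfl fun i _ => ?_
    rw [hq i, uProd, ← Finset.mul_prod_erase _ _ (Finset.mem_univ i), Gi]
    ring
  have huN : uProd n * ∑ i, pderiv i f * q i ∈ Nle f α := by
    rw [hu]
    refine Submodule.sum_mem _ fun i _ => ?_
    have := Gi_mul_Nle hf (α - 1) i (hb' i)
    rwa [sub_add_cancel] at this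
  refine ⟨∑ i, pderiv i f * q i, Ideal.sum_mem _ fun i _ =>
    Ideal.mul_mem_right _ _ (Ideal.subset_span ⟨i, rfl⟩), huN, ?_⟩
  refine Nlt_of_pr (Submodule.sub_mem _ hx.1 huN) ?_
  rw [map_sub, hu, hprG b' hb', sub_eq_zero]
  have := congrArg (pr f α) hb1
  rw [pr_pr, map_sum] at this
  rw [this]
  refine Finset.sum_congr rfl fun i _ => ?_
  have h3 := pr_act hf (α - 1) i (toP hf (b i))
  rw [sub_add_cancel] at h3
  rw [h3]
  simp only [b', pr_pr]

end Strict
end ToricNewton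
end

section
open MvPolynomial

namespace ToricNewton
set_option linter.unusedSectionVars false

/-! ### Multiplication by `u₁⋯uₙ` -/
section Final
variable {n : ℕ} {f : MvPolynomial (Fin n) ℂ}

lemma u_support (g : MvPolynomial (Fin n) ℂ) (P : (Fin n → ℝ) → Prop) :
    (∀ m ∈ (uProd n * g).support, P (toR m)) ↔ ∀ m ∈ g.support, P (toR m + 1) := by
  classical
  let s : Fin n →₀ ℕ := ∑ j, Finsupp.single j 1
  have hs : ∀ i, s i = 1 := fun i => by
    simp [s, Finsupp.finsetSum_apply, Finsupp.single_apply]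
  have hu : uProd n = monomial s 1 := by rw [uProd, prodX_eq]
  have hR : ∀ m : Fin n →₀ ℕ, toR (s + m) = toR m + 1 := fun m => by
    ext i; simp [toR, hs, add_comm]
  rw [hu]
  constructor
  · intro h m hm
    rw [← hR]
    refine h _ ?_
    rw [mem_support_iff, coeff_monomial_mul, one_mul]
    exact mem_support_iff.mp hm
  · intro h m hm
    rw [mem_support_iff, coeff_monomial_mul'] at hm
    split_ifs at hm with hle
    · rw [one_mul] at hm
      have := h _ (mem_support_iff.mpr hm)
      rwa [← hR, add_tsub_cancel_of_le hle] at this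
    · exact absurd rfl hm

lemma u_mem_Nle (α : ℝ) (g : MvPolynomial (Fin n) ℂ) : uProd n * g ∈ Nle f α ↔ g ∈ Wle f α :=
  u_support g (fun x => nu f x ≤ α)

lemma u_mem_Nlt (α : ℝ) (g : MvPolynomial (Fin n) ℂ) : uProd n * g ∈ Nlt f α ↔ g ∈ Wlt f α :=
  u_support g (fun x => nu f x < α)

lemma u_mem_uB (g : MvPolynomial (Fin n) ℂ) : uProd n * g ∈ uB n := ⟨g, rfl⟩

lemma u_ne_zero : uProd n ≠ 0 := Finset.prod_ne_zero_iff.mpr fun i _ => X_ne_zero i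

lemma u_mem_L {q : MvPolynomial (Fin n) ℂ} (hq : q ∈ IIdeal f) : uProd n * q ∈ LIdeal f := by
  obtain ⟨a, rfl⟩ := (Ideal.mem_span_range_iff_exists_fun).mp hq
  rw [Finset.mul_sum]
  refine Ideal.sum_mem _ fun i _ => ?_
  have : uProd n * (a i * pderiv i f) =
      ((∏ j ∈ Finset.univ.erase i, X j) * a i) * (X i * pderiv i f) := by
    rw [uProd, ← Finset.mul_prod_erase _ _ (Finset.mem_univ i)]; ring
  rw [this]
  exact Ideal.mul_mem_left _ _ (Ideal.subset_span ⟨i, rfl⟩)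

lemma Nlt_le (f : MvPolynomial (Fin n) ℂ) (α : ℝ) : Nlt f α ≤ Nle f α :=
  fun _ hg m hm => (hg m hm).le

lemma Wlt_le (f : MvPolynomial (Fin n) ℂ) (α : ℝ) : Wlt f α ≤ Wle f α :=
  fun _ hg m hm => (hg m hm).le

/-- multiplication by `u₁⋯uₙ` -/
noncomputable def uEquiv (f : MvPolynomial (Fin n) ℂ) (α : ℝ) : Wle f α ≃ₗ[ℂ] NcapU f α :=
  LinearEquiv.ofBijective
    ((LinearMap.mulLeft ℂ (uProd n)).restrict (p := Wle f α) (q := NcapU f α)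
      fun g hg => ⟨(u_mem_Nle α g).mpr hg, u_mem_uB g⟩) (by
    constructor
    · rintro ⟨g, hg⟩ ⟨h, hh⟩ he
      have := congrArg Subtype.val he
      exact Subtype.ext (mul_left_cancel₀ u_ne_zero this)
    · rintro ⟨x, hx, g, rfl⟩
      exact ⟨⟨g, (u_mem_Nle α g).mp hx⟩, rfl⟩)

lemma uEquiv_coe (α : ℝ) (g : Wle f α) : (uEquiv f α g : MvPolynomial (Fin n) ℂ) = uProd n * g := rfl

lemma D2_eq (hf : Convenient f) (hnd : Nondegenerate f) (α : ℝ) :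
    D2 f α = (Nlt f α ⊔ (LIdeal f).restrictScalars ℂ).comap (NcapU f α).subtype := by
  apply le_antisymm
  · refine Submodule.comap_mono (sup_le ?_ ?_)
    · exact (inf_le_left.trans inf_le_left).trans le_sup_right
    · exact inf_le_left.trans le_sup_left
  · rintro ⟨x, hx⟩ hx'
    obtain ⟨q, hq, h1, h2⟩ := key hf hnd α hx hx'
    change x ∈ ((LIdeal f).restrictScalars ℂ ⊓ Nle f α ⊓ uB n) ⊔ (Nlt f α ⊓ uB n)
    rw [← add_sub_cancel (uProd n * q) x]
    exact Submodule.add_mem_sup ⟨⟨u_mem_L hq, h1⟩, u_mem_uB q⟩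
      ⟨h2, Submodule.sub_mem _ hx.2 (u_mem_uB q)⟩

lemma D1_eq (f : MvPolynomial (Fin n) ℂ) (α : ℝ) :
    D1 f α = (Wlt f α ⊔ (IIdeal f).restrictScalars ℂ).comap (Wle f α).subtype := by
  apply le_antisymm
  · refine Submodule.comap_mono (sup_le (inf_le_left.trans le_sup_right) le_sup_left)
  · rintro ⟨x, hx⟩ hx'
    obtain ⟨y, hy, z, hz, hyz⟩ := Submodule.mem_sup.mp hx'
    change y + z = x at hyz
    change x ∈ ((IIdeal f).restrictScalars ℂ ⊓ Wle f α) ⊔ Wlt f α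
    rw [← hyz, add_comm]
    refine Submodule.add_mem_sup ⟨hz, ?_⟩ hy
    have : z = x - y := by rw [← hyz]; ring
    rw [this]
    exact Submodule.sub_mem _ hx (Wlt_le f α hy)

lemma D1_map (hf : Convenient f) (hnd : Nondegenerate f) (α : ℝ) :
    (D1 f α).map (uEquiv f α : Wle f α →ₗ[ℂ] NcapU f α) = D2 f α := by
  apply le_antisymm
  · rintro _ ⟨⟨g, hg⟩, hg', rfl⟩
    obtain ⟨y, hy, z, hz, hyz⟩ := Submodule.mem_sup.mp hg'
    change y + z = g at hyz
    change uProd n * g ∈ ((LIdeal f).restrictScalars ℂ ⊓ Nle f α ⊓ uB n) ⊔ (Nlt f α ⊓ uB n)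
    rw [← hyz, mul_add]
    exact Submodule.add_mem_sup ⟨⟨u_mem_L hy.1, (u_mem_Nle α y).mpr hy.2⟩, u_mem_uB y⟩
      ⟨(u_mem_Nlt α z).mpr hz, u_mem_uB z⟩
  · rw [D2_eq hf hnd]
    rintro ⟨x, hx⟩ hx'
    obtain ⟨q, hq, h1, h2⟩ := key hf hnd α hx hx'
    obtain ⟨g, rfl⟩ := hx.2
    refine ⟨⟨g, (u_mem_Nle α g).mp hx.1⟩, ?_, rfl⟩
    change g ∈ ((IIdeal f).restrictScalars ℂ ⊓ Wle f α) ⊔ Wlt f α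
    rw [← add_sub_cancel q g]
    refine Submodule.add_mem_sup ⟨hq, (u_mem_Nle α q).mp h1⟩ ((u_mem_Nlt α _).mp ?_)
    rw [mul_sub]
    exact h2

/-- graded pieces as quotients -/
noncomputable def grEquiv {B : Type*} [AddCommGroup B] [Module ℂ B] (S T K : Submodule ℂ B)
    (D : Submodule ℂ S) (hD : D = (T ⊔ K).comap S.subtype) :
    (S ⧸ D) ≃ₗ[ℂ] Submodule.map (T ⊔ K).mkQ (S ⊔ K) :=
  ((Submodule.quotEquivOfEq D (LinearMap.ker ((T ⊔ K).mkQ ∘ₗ S.subtype))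
    (by rw [hD, LinearMap.ker_comp, Submodule.ker_mkQ])).trans
    (((T ⊔ K).mkQ ∘ₗ S.subtype).quotKerEquivRange)).trans
    (LinearEquiv.ofEq _ _ (by
      rw [LinearMap.range_comp, Submodule.range_subtype, Submodule.map_sup]
      symm
      rw [sup_eq_left]
      have : Submodule.map (T ⊔ K).mkQ K = ⊥ := by
        rw [eq_bot_iff, Submodule.map_le_iff_le_comap, ← LinearMap.ker, Submodule.ker_mkQ]
        exact le_sup_right
      rw [this]
      exact bot_le))

end Final
end ToricNewton
end

open ToricNewton in
/-- multiplication by `u₁⋯uₙ` maps `W_α ℬ` into `𝒩_α ℬ ∩ u₁⋯uₙ·ℬ` and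
induces an isomorphism
`λ_α : W_α ℬ/(ℐ ∩ W_α ℬ + W_{<α} ℬ) ≅ (𝒩_α ℬ ∩ u₁⋯uₙ·ℬ)/(ℒ ∩ 𝒩_α ℬ ∩ u₁⋯uₙ·ℬ + 𝒩_{<α} ℬ ∩ u₁⋯uₙ·ℬ)`.
In particular `gr^W_α(ℬ/ℐ) ≅ gr^𝒩_α((ℬ·u₁⋯uₙ + ℒ)/ℒ)`. -/
theorem mult_by_u_induces_iso {n : ℕ} (hn : 1 ≤ n) (f : MvPolynomial (Fin n) ℂ)
    (hconv : Convenient f) (hnd : Nondegenerate f) :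
    ∀ α : ℚ,
      (∀ g ∈ Wle f (α : ℝ), uProd n * g ∈ NcapU f (α : ℝ)) ∧
      (∃ e : (↥(Wle f (α : ℝ)) ⧸ D1 f (α : ℝ)) ≃ₗ[ℂ] (↥(NcapU f (α : ℝ)) ⧸ D2 f (α : ℝ)),
        ∀ (g : MvPolynomial (Fin n) ℂ) (hg : g ∈ Wle f (α : ℝ))
          (hg' : uProd n * g ∈ NcapU f (α : ℝ)),
          e (Submodule.Quotient.mk ⟨g, hg⟩) = Submodule.Quotient.mk ⟨uProd n * g, hg'⟩) ∧
      Nonempty ((grW f (α : ℝ)) ≃ₗ[ℂ]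
        (Submodule.map (Nlt f (α : ℝ) ⊔ (LIdeal f).restrictScalars ℂ).mkQ
          (NcapU f (α : ℝ) ⊔ (LIdeal f).restrictScalars ℂ))) := by
  intro α
  refine ⟨fun g hg => ⟨(u_mem_Nle _ g).mpr hg, u_mem_uB g⟩,
    ⟨Submodule.Quotient.equiv _ _ (uEquiv f α) (D1_map hconv hnd α), fun g hg hg' => rfl⟩,
    ⟨((grEquiv _ _ _ _ (D1_eq f α)).symm.trans
      (Submodule.Quotient.equiv _ _ (uEquiv f α) (D1_map hconv hnd α))).trans
      (grEquiv _ _ _ _ (D2_eq hconv hnd α))⟩⟩
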